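/- Let R be a quantum nilpotent algebra of dimension N over a field K with torus H, and for 1 ≤ k ≤ N let R_k denote the subalgebra generated by x_1, …, x_k. Then there exist a function η : [1,N] → ℤ and elements c_k ∈ R_{k−1} for all 2 ≤ k ≤ N with δ_k ≠ 0 such that the elements y_1, …, y_N of R, recursively defined by y_k := y_{p(k)} x_k − c_k if δ_k ≠ 0 and y_k := x_k if δ_k = 0 (where p is the predecessor function of the level sets of η, with y_{−∞} interpreted as 1), are H-eigenvectors and have the property that for every k ∈ [1,N] the homogeneous prime elements of R_k are precisely the nonzero scalar multiples of the elements y_l for l ∈ [1,k] with s(l) > k. In particular, y_k is a homogeneous prime element of R_k for all k ∈ [1,N]. Furthermore, the sequence y_1, …, y_N and the level sets of a function η with these properties are both unique. -/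

import Mathlib

open scoped BigOperators

noncomputable section

universe u v

/-- The group of `K`-points of a split torus of rank `r`. -/
abbrev Torus (K : Type u) [Field K] (r : ℕ) : Type u := Fin r → Kˣ

section Core

variable (K : Type u) [Field K] {R : Type v} [Ring R] [Algebra K R] {r N : ℕ}

/-- `a` is an eigenvector of the torus action `act` with (integral) character `f`. -/
def IsEigenWith (act : Torus K r →* (R ≃ₐ[K] R)) (f : Fin r → ℤ) (a : R) : Prop :=
  ∀ ξ : Torus K r, act ξ a = ((∏ i, ξ i ^ f i : Kˣ) : K) • a

/-- The torus action `act` is rational: every element is a finite sum of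
eigenvectors whose eigenvalues are given by integral characters of the torus. -/
def IsRationalAction (act : Torus K r →* (R ≃ₐ[K] R)) : Prop :=
  ∀ a : R, ∃ (s : Finset (Fin r → ℤ)) (c : (Fin r → ℤ) → R),
    a = ∑ f ∈ s, c f ∧ ∀ f ∈ s, IsEigenWith K act f (c f)

/-- The ordered monomial `x 0 ^ m 0 * x 1 ^ m 1 * ⋯ * x (N-1) ^ m (N-1)`. -/
def ordMonomial (x : Fin N → R) (m : Fin N → ℕ) : R :=
  ((List.finRange N).map fun k => x k ^ m k).prod

/-- The ordered monomial in the reversed order of the generators. -/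
def revOrdMonomial (x : Fin N → R) (m : Fin N → ℕ) : R :=
  ((List.finRange N).reverse.map fun k => x k ^ m k).prod

/-- The subalgebra generated by the first `m` of the elements `x 0, …, x (N-1)`. -/
def Rsub (x : Fin N → R) (m : ℕ) : Subalgebra K R :=
  Algebra.adjoin K (x '' {l : Fin N | (l : ℕ) < m})

/-- The subalgebra generated by the elements `x l` with `m < l` (for the reversed order). -/
def RsubRev (x : Fin N → R) (m : ℕ) : Subalgebra K R :=
  Algebra.adjoin K (x '' {l : Fin N | m < (l : ℕ)})

/-- The skew derivation `δ_k : a ↦ x_k a − (h_k · a) x_k` attached to the `k`-th generator. -/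
def skewDelta (act : Torus K r →* (R ≃ₐ[K] R)) (x : Fin N → R) (h : Fin N → Torus K r)
    (k : Fin N) : R → R :=
  fun a => x k * a - act (h k) a * x k

end Core

/-- A quantum nilpotent algebra (CGL extension) of dimension `N`:  an iterated skew
polynomial extension `R = K[x_1][x_2; σ_2, δ_2]⋯[x_N; σ_N, δ_N]` equipped with a rational
action of a torus `H = (Kˣ)^r` by `K`-algebra automorphisms such that the `x_k` are
`H`-eigenvectors, each `δ_k` is a locally nilpotent `σ_k`-derivation of the subalgebra
generated by `x_1, …, x_{k-1}`, and each `σ_k` is given by the action of a torus element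
`h_k` whose eigenvalue `λ_k` on `x_k` is not a root of unity.  The iterated skew polynomial
presentation is encoded by the generation, linear independence of ordered monomials
(PBW basis) and the skew commutation conditions. -/
structure QNA (K : Type u) [Field K] (R : Type v) [Ring R] [Algebra K R] (N r : ℕ) where
  x : Fin N → R
  act : Torus K r →* (R ≃ₐ[K] R)
  h : Fin N → Torus K r
  lam : Fin N → K
  rational : IsRationalAction K act
  gen : Algebra.adjoin K (Set.range x) = ⊤
  pbw : LinearIndependent K (ordMonomial (R := R) x)
  eigenvec : ∀ k : Fin N, ∃ f : Fin r → ℤ, IsEigenWith K act f (x k)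
  stable : ∀ k : Fin N, ∀ a ∈ Rsub K x (k : ℕ), skewDelta K act x h k a ∈ Rsub K x (k : ℕ)
  locnil : ∀ k : Fin N, ∀ a ∈ Rsub K x (k : ℕ), ∃ n : ℕ, (skewDelta K act x h k)^[n] a = 0
  hx : ∀ k, act (h k) (x k) = lam k • x k
  lam_not_root : ∀ k, ∀ n : ℕ, n ≠ 0 → lam k ^ n ≠ 1

/-- A symmetric quantum nilpotent algebra: a quantum nilpotent algebra which admits an
iterated skew polynomial presentation, satisfying the same axioms, also for the reversed
order `x_N, x_{N-1}, …, x_1` of the generators, with respect to torus elements `h*_k`. -/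
structure SymQNA (K : Type u) [Field K] (R : Type v) [Ring R] [Algebra K R] (N r : ℕ)
    extends QNA K R N r where
  hstar : Fin N → Torus K r
  lamstar : Fin N → K
  pbwRev : LinearIndependent K (revOrdMonomial (R := R) x)
  stableRev : ∀ k : Fin N, ∀ a ∈ RsubRev K x (k : ℕ),
    skewDelta K act x hstar k a ∈ RsubRev K x (k : ℕ)
  locnilRev : ∀ k : Fin N, ∀ a ∈ RsubRev K x (k : ℕ),
    ∃ n : ℕ, (skewDelta K act x hstar k)^[n] a = 0
  hxstar : ∀ k, act (hstar k) (x k) = lamstar k • x k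
  lamstar_not_root : ∀ k, ∀ n : ℕ, n ≠ 0 → lamstar k ^ n ≠ 1

section Prime

variable (K : Type u) [Field K] {R : Type v} [Ring R] [Algebra K R] {r N : ℕ}

/-- The skew derivation `δ_k` of the `k`-th step of the presentation vanishes. -/
def deltaZero (Q : QNA K R N r) (k : Fin N) : Prop :=
  ∀ a ∈ Rsub K Q.x (k : ℕ), skewDelta K Q.act Q.x Q.h k a = 0

/-- `p` is a prime element of the subalgebra `A`:  `p` is a nonzero noninvertible normal
element of `A` (`pA = Ap`) such that `A/Ap` is a domain. -/
def IsPrimeIn (A : Subalgebra K R) (p : R) : Prop :=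
  p ∈ A ∧ p ≠ 0 ∧ (¬ ∃ u ∈ A, p * u = 1 ∧ u * p = 1) ∧
  (∀ a ∈ A, ∃ b ∈ A, a * p = p * b) ∧
  (∀ a ∈ A, ∃ b ∈ A, p * a = b * p) ∧
  (∀ a ∈ A, ∀ b ∈ A, (∃ d ∈ A, a * b = p * d) → (∃ d ∈ A, a = p * d) ∨ (∃ d ∈ A, b = p * d))

/-- The predecessor function of the level sets of `η`:  `p(k)` is the largest `l < k`
with `η l = η k`, and `⊥` (i.e. `−∞`) if there is no such `l`. -/
def predIdx {α : Type*} [DecidableEq α] (η : Fin N → α) (k : Fin N) : WithBot (Fin N) :=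
  (Finset.univ.filter fun l => l < k ∧ η l = η k).max

/-- The successor function of the level sets of `η`:  `s(k)` is the smallest `l > k`
with `η l = η k`, and `⊤` (i.e. `+∞`) if there is no such `l`. -/
def succIdx {α : Type*} [DecidableEq α] (η : Fin N → α) (k : Fin N) : WithTop (Fin N) :=
  (Finset.univ.filter fun l => k < l ∧ η l = η k).min

/-- `(η, c, y)` is a sequence of homogeneous prime elements for the quantum nilpotent
algebra `Q` in the sense of the prime element theorem:  `y` is defined by the recursion
`y_k = y_{p(k)} x_k − c_k` (if `δ_k ≠ 0`; `y_k = x_k` if `δ_k = 0`), the `y_k` are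
`H`-eigenvectors, and for every `k` the homogeneous prime elements of the subalgebra
`R_k` generated by `x_1, …, x_k` are precisely the nonzero scalar multiples of the
`y_l` with `l ≤ k` and `s(l) > k`. -/
structure IsPrimeSeq (Q : QNA K R N r) (η : Fin N → ℤ) (c : Fin N → R) (y : Fin N → R) :
    Prop where
  c_mem : ∀ k : Fin N, ¬ deltaZero K Q k → c k ∈ Rsub K Q.x (k : ℕ)
  rec_delta_zero : ∀ k : Fin N, deltaZero K Q k → y k = Q.x k
  rec_delta_ne : ∀ k : Fin N, ¬ deltaZero K Q k →
    y k = (WithBot.recBotCoe (1 : R) (fun l => y l) (predIdx η k)) * Q.x k - c k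
  homog : ∀ k : Fin N, ∃ f : Fin r → ℤ, IsEigenWith K Q.act f (y k)
  prime_iff : ∀ k : Fin N, ∀ u : R,
    (IsPrimeIn K (Rsub K Q.x ((k : ℕ) + 1)) u ∧ ∃ f : Fin r → ℤ, IsEigenWith K Q.act f u) ↔
    (∃ l : Fin N, l ≤ k ∧ (∀ l' : Fin N, l < l' → l' ≤ k → η l' ≠ η l) ∧
      ∃ t : Kˣ, u = (t : K) • y l)

/-- The vector `ē_k = e_k + e_{p(k)} + e_{p²(k)} + ⋯ ∈ ℤ^N`. -/
def ebar (η : Fin N → ℤ) (k : Fin N) : Fin N → ℤ :=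
  fun l => if l ≤ k ∧ η l = η k then 1 else 0

/-- The multiplicatively skewsymmetric matrix of eigenvalues:  `1` on the diagonal,
`λ_{kl}` below it and `λ_{lk}⁻¹` above it. -/
def omegaEntry (lam2 : Fin N → Fin N → Kˣ) (k l : Fin N) : Kˣ :=
  if k = l then 1 else if l < k then lam2 k l else (lam2 l k)⁻¹

/-- The unique group bicharacter `Ω : ℤ^N × ℤ^N → Kˣ` with `Ω(e_k, e_l)` equal to `1`,
`λ_{kl}`, `λ_{lk}⁻¹` according as `k = l`, `k > l`, `k < l`. -/
def Omega (lam2 : Fin N → Fin N → Kˣ) (f g : Fin N → ℤ) : Kˣ :=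
  ∏ k, ∏ l, (omegaEntry K lam2 k l) ^ (f k * g l)

/-- The set of exchangeable indices: those `k` with `s(k) ≠ +∞`. -/
def exSet (η : Fin N → ℤ) : Finset (Fin N) :=
  Finset.univ.filter fun k => ∃ l, k < l ∧ η l = η k

/-- Condition (A): `K` contains square roots of the scalars `λ_{kl}` such that the
subgroup of `Kˣ` generated by all of them contains no elements of order 2. -/
def CondA (lam2 : Fin N → Fin N → Kˣ) : Prop :=
  ∃ sq : Fin N → Fin N → Kˣ, (∀ k l : Fin N, l < k → sq k l ^ 2 = lam2 k l) ∧
    ∀ g ∈ Subgroup.closure {u : Kˣ | ∃ k l : Fin N, l < k ∧ u = sq k l}, g ^ 2 = 1 → g = 1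

/-- Condition (B): there exist positive integers `d_n`, `n ∈ range η`, such that
`(λ*_k)^{d_{η(l)}} = (λ*_l)^{d_{η(k)}}` for all exchangeable `k, l`. -/
def CondB (η : Fin N → ℤ) (lamstar : Fin N → K) : Prop :=
  ∃ d : ℤ → ℕ, (∀ n ∈ Set.range η, 0 < d n) ∧
    ∀ k ∈ exSet η, ∀ l ∈ exSet η, lamstar k ^ d (η l) = lamstar l ^ d (η k)

/-- The defining conditions for the exchange matrix `B̃ ∈ M_{N×ex}(ℤ)`:  columns indexed
outside `ex` vanish; `Ω(Σ_l b_{lk} ē_l, ē_n)` equals `λ*_n` for `k = n` and `1` otherwise;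
and the products `y_1^{b_{1k}} ⋯ y_N^{b_{Nk}}` are fixed under `H`, i.e. the characters
`χ_{y_l}` of the `y_l` satisfy `Σ_l b_{lk} χ_{y_l} = 0`. -/
def IsExchangeMatrix (lam2 : Fin N → Fin N → Kˣ) (η : Fin N → ℤ) (lamstar : Fin N → K)
    (chiy : Fin N → Fin r → ℤ) (B : Fin N → Fin N → ℤ) : Prop :=
  (∀ k : Fin N, k ∉ exSet η → ∀ l, B l k = 0) ∧
  (∀ k ∈ exSet η, ∀ n : Fin N,
    ((Omega K lam2 (fun j => ∑ l, B l k * ebar η l j) (ebar η n) : Kˣ) : K) =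
      (if k = n then lamstar n else 1)) ∧
  (∀ k ∈ exSet η, ∀ i : Fin r, (∑ l, B l k * chiy l i) = 0)

/-- `ι : R →ₐ[K] D` realizes the division ring `D` as the division ring of fractions
`Fract R`:  `ι` is injective and every element of `D` is a right fraction `ι(a) ι(b)⁻¹`. -/
def IsFractionEmb {D : Type v} [DivisionRing D] [Algebra K D] (ι : R →ₐ[K] D) : Prop :=
  Function.Injective ι ∧ ∀ d : D, ∃ a b : R, b ≠ 0 ∧ d * ι b = ι a

end Prime
set_option linter.unusedSimpArgs false
set_option linter.unusedVariables false
set_option linter.unusedSectionVars false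

section FilAPI

variable {K : Type u} [Field K] {R : Type v} [Ring R] [Algebra K R]

/-- Filtration by degree in `X` with left coefficients in `A`. -/
def Fil (A : Subalgebra K R) (X : R) : ℕ → Submodule K R
  | 0 => ⊥
  | n + 1 => Fil A X n ⊔ (Subalgebra.toSubmodule A).map (LinearMap.mulRight K (X ^ n))

theorem mem_Fil_succ {A : Subalgebra K R} {X : R} {n : ℕ} {b : R} :
    b ∈ Fil A X (n + 1) ↔ ∃ f ∈ Fil A X n, ∃ a ∈ A, b = f + a * X ^ n := by
  simp only [Fil, Submodule.mem_sup, Submodule.mem_map, Subalgebra.mem_toSubmodule,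
    LinearMap.mulRight_apply]
  constructor
  · rintro ⟨f, hf, _, ⟨a, ha, rfl⟩, rfl⟩
    exact ⟨f, hf, a, ha, rfl⟩
  · rintro ⟨f, hf, a, ha, rfl⟩
    exact ⟨f, hf, _, ⟨a, ha, rfl⟩, rfl⟩

theorem mem_Fil_zero {A : Subalgebra K R} {X : R} {b : R} : b ∈ Fil A X 0 ↔ b = 0 := by
  simp [Fil]

theorem mem_Fil_one {A : Subalgebra K R} {X : R} {b : R} : b ∈ Fil A X 1 ↔ b ∈ A := by
  rw [mem_Fil_succ]
  constructor
  · rintro ⟨f, hf, a, ha, rfl⟩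
    rw [mem_Fil_zero] at hf
    simpa [hf] using ha
  · intro hb
    exact ⟨0, Submodule.zero_mem _, b, hb, by simp⟩

theorem Fil_succ_le (A : Subalgebra K R) (X : R) (n : ℕ) : Fil A X n ≤ Fil A X (n + 1) :=
  le_sup_left

theorem Fil_mono (A : Subalgebra K R) (X : R) : Monotone (Fil A X) :=
  monotone_nat_of_le_succ (Fil_succ_le A X)

theorem mul_pow_mem_Fil {A : Subalgebra K R} (X : R) {a : R} (ha : a ∈ A) (n : ℕ) :
    a * X ^ n ∈ Fil A X (n + 1) :=
  mem_Fil_succ.2 ⟨0, Submodule.zero_mem _, a, ha, by simp⟩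

theorem pow_mem_Fil (A : Subalgebra K R) (X : R) (n : ℕ) : X ^ n ∈ Fil A X (n + 1) := by
  simpa using mul_pow_mem_Fil X A.one_mem n

theorem Fil_left {A : Subalgebra K R} {X : R} {a : R} (ha : a ∈ A) :
    ∀ {n : ℕ} {b : R}, b ∈ Fil A X n → a * b ∈ Fil A X n
  | 0, b, hb => by
    rw [mem_Fil_zero] at hb
    simp [hb, Submodule.zero_mem]
  | n + 1, b, hb => by
    obtain ⟨f, hf, c, hc, rfl⟩ := mem_Fil_succ.1 hb
    exact mem_Fil_succ.2 ⟨a * f, Fil_left ha hf, a * c, A.mul_mem ha hc, by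
      rw [mul_add, mul_assoc]⟩

theorem Fil_mul_X {A : Subalgebra K R} {X : R} :
    ∀ {n : ℕ} {b : R}, b ∈ Fil A X n → b * X ∈ Fil A X (n + 1)
  | 0, b, hb => by
    rw [mem_Fil_zero] at hb
    simp [hb, Submodule.zero_mem]
  | n + 1, b, hb => by
    obtain ⟨f, hf, c, hc, rfl⟩ := mem_Fil_succ.1 hb
    exact mem_Fil_succ.2 ⟨f * X, Fil_mul_X hf, c, hc, by
      rw [add_mul, mul_assoc, pow_succ]⟩

theorem Fil_mul_pow {A : Subalgebra K R} {X : R} {n : ℕ} {b : R} (hb : b ∈ Fil A X n) (m : ℕ) :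
    b * X ^ m ∈ Fil A X (n + m) := by
  induction m with
  | zero => simpa using hb
  | succ m ih =>
    rw [pow_succ, ← mul_assoc]
    exact Fil_mul_X ih

theorem Fil_X_mul {A : Subalgebra K R} {X : R} {s : R → R} (hs : ∀ a ∈ A, s a ∈ A)
    (hd : ∀ a ∈ A, X * a - s a * X ∈ A) :
    ∀ {n : ℕ} {b : R}, b ∈ Fil A X n → X * b ∈ Fil A X (n + 1)
  | 0, b, hb => by
    rw [mem_Fil_zero] at hb
    simp [hb, Submodule.zero_mem]
  | n + 1, b, hb => by
    obtain ⟨f, hf, c, hc, rfl⟩ := mem_Fil_succ.1 hb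
    refine mem_Fil_succ.2 ⟨X * f + (X * c - s c * X) * X ^ n, ?_, s c, hs c hc, ?_⟩
    · exact Submodule.add_mem _ (Fil_X_mul hs hd hf) (mul_pow_mem_Fil X (hd c hc) n)
    · rw [pow_succ']
      noncomm_ring

theorem Fil_pow_mul {A : Subalgebra K R} {X : R} {s : R → R} (hs : ∀ a ∈ A, s a ∈ A)
    (hd : ∀ a ∈ A, X * a - s a * X ∈ A) {n : ℕ} {b : R} (hb : b ∈ Fil A X n) (m : ℕ) :
    X ^ m * b ∈ Fil A X (n + m) := by
  induction m with
  | zero => simpa using hb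
  | succ m ih =>
    rw [pow_succ', mul_assoc]
    exact Fil_X_mul hs hd ih

theorem iter_mem {A : Subalgebra K R} {s : R → R} (hs : ∀ a ∈ A, s a ∈ A) (n : ℕ) {a : R}
    (ha : a ∈ A) : s^[n] a ∈ A := by
  induction n with
  | zero => simpa using ha
  | succ n ih => rw [Function.iterate_succ_apply']; exact hs _ ih

theorem pow_mul_sub_mem {A : Subalgebra K R} {X : R} {s : R → R} (hs : ∀ a ∈ A, s a ∈ A)
    (hd : ∀ a ∈ A, X * a - s a * X ∈ A) {a : R} (ha : a ∈ A) (n : ℕ) :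
    X ^ n * a - s^[n] a * X ^ n ∈ Fil A X n := by
  induction n with
  | zero => simp [mem_Fil_zero]
  | succ n ih =>
    have h1 := Fil_X_mul hs hd ih
    have h2 := mul_pow_mem_Fil X (hd _ (iter_mem hs n ha)) n
    have := Submodule.add_mem _ h1 h2
    rw [Function.iterate_succ_apply']
    convert this using 1
    rw [pow_succ']
    noncomm_ring

theorem Fil_mul_Fil {A : Subalgebra K R} {X : R} {s : R → R} (hs : ∀ a ∈ A, s a ∈ A)
    (hd : ∀ a ∈ A, X * a - s a * X ∈ A) {m : ℕ} {g : R} (hg : g ∈ Fil A X (m + 1)) :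
    ∀ {n : ℕ} {f : R}, f ∈ Fil A X n → f * g ∈ Fil A X (n + m)
  | 0, f, hf => by
    rw [mem_Fil_zero] at hf
    simp [hf, Submodule.zero_mem]
  | n + 1, f, hf => by
    obtain ⟨f', hf', c, hc, rfl⟩ := mem_Fil_succ.1 hf
    rw [add_mul]
    refine Submodule.add_mem _ (Fil_mono A X (by omega) (Fil_mul_Fil hs hd hg hf')) ?_
    rw [mul_assoc]
    refine Fil_left hc ?_
    have := Fil_pow_mul hs hd hg n
    exact Fil_mono A X (by omega) this

theorem Fil_right {A : Subalgebra K R} {X : R} {s : R → R} (hs : ∀ a ∈ A, s a ∈ A)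
    (hd : ∀ a ∈ A, X * a - s a * X ∈ A) {n : ℕ} {f a : R} (hf : f ∈ Fil A X n) (ha : a ∈ A) :
    f * a ∈ Fil A X n :=
  Fil_mul_Fil hs hd (m := 0) (mem_Fil_one.2 ha) hf

/-- `b` has degree at most `n` in `X` with coefficient `a` at `X ^ n`. -/
def HasLead (A : Subalgebra K R) (X : R) (n : ℕ) (a b : R) : Prop :=
  a ∈ A ∧ b - a * X ^ n ∈ Fil A X n

theorem HasLead.mem {A : Subalgebra K R} {X : R} {n : ℕ} {a b : R} (h : HasLead A X n a b) :
    b ∈ Fil A X (n + 1) :=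
  mem_Fil_succ.2 ⟨_, h.2, a, h.1, by abel⟩

theorem HasLead.mul {A : Subalgebra K R} {X : R} {s : R → R} (hs : ∀ a ∈ A, s a ∈ A)
    (hd : ∀ a ∈ A, X * a - s a * X ∈ A) {n m : ℕ} {a b f g : R}
    (hf : HasLead A X n a f) (hg : HasLead A X m b g) :
    HasLead A X (n + m) (a * s^[n] b) (f * g) := by
  refine ⟨A.mul_mem hf.1 (iter_mem hs n hg.1), ?_⟩
  have e : f * g - a * s^[n] b * X ^ (n + m) =
      a * ((X ^ n * b - s^[n] b * X ^ n) * X ^ m) + a * (X ^ n * (g - b * X ^ m)) +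
        (f - a * X ^ n) * g := by
    rw [pow_add]; noncomm_ring
  rw [e]
  refine Submodule.add_mem _ (Submodule.add_mem _ ?_ ?_) ?_
  · exact Fil_left hf.1 (Fil_mul_pow (pow_mul_sub_mem hs hd hg.1 n) m)
  · exact Fil_left hf.1 (Fil_mono A X (by omega) (Fil_pow_mul hs hd hg.2 n))
  · exact Fil_mul_Fil hs hd hg.mem hf.2

/-- Uniqueness of leading coefficients. -/
def FilU (A : Subalgebra K R) (X : R) : Prop :=
  ∀ n a, a ∈ A → a * X ^ n ∈ Fil A X n → a = 0

theorem HasLead.eq_zero {A : Subalgebra K R} {X : R} (hU : FilU A X) {n : ℕ} {a b : R}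
    (h : HasLead A X n a b) (hb : b ∈ Fil A X n) : a = 0 := by
  refine hU n a h.1 ?_
  have := Submodule.sub_mem _ hb h.2
  simpa using this

theorem HasLead.unique {A : Subalgebra K R} {X : R} (hU : FilU A X) {n : ℕ} {a a' b : R}
    (h : HasLead A X n a b) (h' : HasLead A X n a' b) : a = a' := by
  have : a - a' = 0 := by
    refine hU n _ (A.sub_mem h.1 h'.1) ?_
    have := Submodule.sub_mem _ h'.2 h.2
    convert this using 1
    noncomm_ring
  exact sub_eq_zero.1 this

theorem exists_lead_of_mem {A : Subalgebra K R} {X : R} {n : ℕ} {b : R}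
    (hb : b ∈ Fil A X n) (h0 : b ≠ 0) : ∃ m a, m < n ∧ HasLead A X m a b ∧ a ≠ 0 := by
  induction n with
  | zero => exact absurd (mem_Fil_zero.1 hb) h0
  | succ n ih =>
    obtain ⟨f, hf, a, ha, rfl⟩ := mem_Fil_succ.1 hb
    by_cases h : a = 0
    · subst h
      rw [zero_mul, add_zero] at *
      obtain ⟨m, a, hm, h⟩ := ih hf
      exact ⟨m, a, by omega, h⟩
    · exact ⟨n, a, by omega, ⟨ha, by simpa using hf⟩, h⟩

theorem hasLead_of_mem_succ {A : Subalgebra K R} {X : R} {n : ℕ} {b : R}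
    (hb : b ∈ Fil A X (n + 1)) : ∃ a, HasLead A X n a b := by
  obtain ⟨f, hf, a, ha, rfl⟩ := mem_Fil_succ.1 hb
  exact ⟨a, ha, by simpa using hf⟩

theorem HasLead.ne_zero {A : Subalgebra K R} {X : R} (hU : FilU A X) {n : ℕ} {a b : R}
    (h : HasLead A X n a b) (ha : a ≠ 0) : b ≠ 0 := by
  rintro rfl
  exact ha (h.eq_zero hU (Submodule.zero_mem _))

theorem HasLead.degree_le {A : Subalgebra K R} {X : R} (hU : FilU A X) {n m : ℕ} {a b : R}
    (h : HasLead A X n a b) (ha : a ≠ 0) (hb : b ∈ Fil A X m) : n < m := by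
  by_contra hc
  exact ha (h.eq_zero hU (Fil_mono A X (by omega) hb))

theorem Fil_le {A B : Subalgebra K R} {X : R} (hAB : A ≤ B) (hX : X ∈ B) :
    ∀ {n : ℕ} {b : R}, b ∈ Fil A X n → b ∈ B
  | 0, b, hb => by
    rw [mem_Fil_zero] at hb
    rw [hb]; exact B.zero_mem
  | n + 1, b, hb => by
    obtain ⟨f, hf, c, hc, rfl⟩ := mem_Fil_succ.1 hb
    exact B.add_mem (Fil_le hAB hX hf) (B.mul_mem (hAB hc) (B.pow_mem hX n))

end FilAPI

section Weights

variable {K : Type u} [Field K] {R : Type v} [Ring R] [Algebra K R] {r : ℕ}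

/-- The value at `ξ` of the character `f`. -/
def ch (f : Fin r → ℤ) (ξ : Torus K r) : K := ((∏ i, ξ i ^ f i : Kˣ) : K)

theorem ch_ne (f : Fin r → ℤ) (ξ : Torus K r) : ch f ξ ≠ 0 := Units.ne_zero _

theorem ch_add (f g : Fin r → ℤ) (ξ : Torus K r) : ch (f + g) ξ = ch f ξ * ch g ξ := by
  simp only [ch, Pi.add_apply, zpow_add, Finset.prod_mul_distrib, Units.val_mul]

theorem ch_zero (ξ : Torus K r) : ch (0 : Fin r → ℤ) ξ = 1 := by
  simp [ch]

theorem ch_neg (f : Fin r → ℤ) (ξ : Torus K r) : ch (-f) ξ = (ch f ξ)⁻¹ := by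
  simp [ch]

theorem ch_sub (f g : Fin r → ℤ) (ξ : Torus K r) : ch (f - g) ξ = ch f ξ * (ch g ξ)⁻¹ := by
  rw [sub_eq_add_neg, ch_add, ch_neg]

theorem ch_nsmul (n : ℕ) (f : Fin r → ℤ) (ξ : Torus K r) : ch (n • f) ξ = ch f ξ ^ n := by
  induction n with
  | zero => simp [ch_zero]
  | succ n ih => rw [succ_nsmul, ch_add, ih, pow_succ]

variable {act : Torus K r →* (R ≃ₐ[K] R)}

theorem IsEigenWith.eq {f : Fin r → ℤ} {a : R} (h : IsEigenWith K act f a) (ξ : Torus K r) :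
    act ξ a = ch f ξ • a := h ξ

theorem IsEigenWith.mk' {f : Fin r → ℤ} {a : R} (h : ∀ ξ, act ξ a = ch f ξ • a) :
    IsEigenWith K act f a := h

theorem eig_mul {f g : Fin r → ℤ} {a b : R} (ha : IsEigenWith K act f a)
    (hb : IsEigenWith K act g b) : IsEigenWith K act (f + g) (a * b) :=
  IsEigenWith.mk' fun ξ => by
    rw [map_mul, ha.eq, hb.eq, ch_add, smul_mul_smul_comm]

theorem eig_add {f : Fin r → ℤ} {a b : R} (ha : IsEigenWith K act f a)
    (hb : IsEigenWith K act f b) : IsEigenWith K act f (a + b) :=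
  IsEigenWith.mk' fun ξ => by
    rw [map_add, ha.eq, hb.eq, smul_add]

theorem eig_smul {f : Fin r → ℤ} {a : R} (ha : IsEigenWith K act f a) (t : K) :
    IsEigenWith K act f (t • a) :=
  IsEigenWith.mk' fun ξ => by
    rw [map_smul, ha.eq, smul_comm]

theorem eig_neg {f : Fin r → ℤ} {a : R} (ha : IsEigenWith K act f a) :
    IsEigenWith K act f (-a) := by
  simpa using eig_smul ha (-1)

theorem eig_sub {f : Fin r → ℤ} {a b : R} (ha : IsEigenWith K act f a)
    (hb : IsEigenWith K act f b) : IsEigenWith K act f (a - b) := by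
  rw [sub_eq_add_neg]; exact eig_add ha (eig_neg hb)

theorem eig_zero (f : Fin r → ℤ) : IsEigenWith K act f (0 : R) :=
  IsEigenWith.mk' fun ξ => by simp

theorem eig_one : IsEigenWith K act 0 (1 : R) :=
  IsEigenWith.mk' fun ξ => by simp [ch_zero]

theorem eig_algebraMap (t : K) : IsEigenWith K act 0 (algebraMap K R t) :=
  IsEigenWith.mk' fun ξ => by simp [ch_zero]

theorem eig_pow {f : Fin r → ℤ} {a : R} (ha : IsEigenWith K act f a) (n : ℕ) :
    IsEigenWith K act (n • f) (a ^ n) := by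
  induction n with
  | zero => simpa using eig_one
  | succ n ih => rw [succ_nsmul, pow_succ]; exact eig_mul ih ha

theorem eig_act {f : Fin r → ℤ} {a : R} (ha : IsEigenWith K act f a) (ξ : Torus K r) :
    IsEigenWith K act f (act ξ a) := by
  rw [ha.eq]; exact eig_smul ha _

theorem eig_cast {f g : Fin r → ℤ} {a : R} (ha : IsEigenWith K act f a) (h : f = g) :
    IsEigenWith K act g a := h ▸ ha

theorem eig_cancel_right [NoZeroDivisors R] {f g : Fin r → ℤ} {a b : R}
    (hab : IsEigenWith K act f (a * b))
    (hb : IsEigenWith K act g b) (h0 : b ≠ 0) : IsEigenWith K act (f - g) a :=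
  IsEigenWith.mk' fun ξ => by
    have h := hab.eq ξ
    rw [map_mul, hb.eq, mul_smul_comm] at h
    have h2 : (act ξ a - ch (f - g) ξ • a) * b = 0 := by
      have := congrArg (fun z => (ch g ξ)⁻¹ • z) h
      simp only [smul_smul, inv_mul_cancel₀ (ch_ne g ξ), one_smul] at this
      rw [sub_mul, this, ch_sub, smul_mul_assoc, mul_comm, sub_self]
    rcases mul_eq_zero.1 h2 with h3 | h3
    · exact sub_eq_zero.1 h3
    · exact absurd h3 h0

theorem eig_cancel_left [NoZeroDivisors R] {f g : Fin r → ℤ} {a b : R}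
    (hab : IsEigenWith K act f (b * a))
    (hb : IsEigenWith K act g b) (h0 : b ≠ 0) : IsEigenWith K act (f - g) a :=
  IsEigenWith.mk' fun ξ => by
    have h := hab.eq ξ
    rw [map_mul, hb.eq, smul_mul_assoc] at h
    have h2 : b * (act ξ a - ch (f - g) ξ • a) = 0 := by
      have := congrArg (fun z => (ch g ξ)⁻¹ • z) h
      simp only [smul_smul, inv_mul_cancel₀ (ch_ne g ξ), one_smul] at this
      rw [mul_sub, this, ch_sub, mul_smul_comm, mul_comm, sub_self]
    rcases mul_eq_zero.1 h2 with h3 | h3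
    · exact absurd h3 h0
    · exact sub_eq_zero.1 h3

/-- graded two-sided ideals, described by their homogeneous elements -/
structure GIdeal (act : Torus K r →* (R ≃ₐ[K] R)) (A : Subalgebra K R)
    (J : (Fin r → ℤ) → R → Prop) : Prop where
  mem : ∀ {χ a}, J χ a → a ∈ A
  eig : ∀ {χ a}, J χ a → IsEigenWith K act χ a
  add : ∀ {χ a b}, J χ a → J χ b → J χ (a + b)
  left : ∀ {χ ψ a b}, J χ a → b ∈ A → IsEigenWith K act ψ b → J (ψ + χ) (b * a)
  right : ∀ {χ ψ a b}, J χ a → b ∈ A → IsEigenWith K act ψ b → J (χ + ψ) (a * b)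

theorem GIdeal.smul {A : Subalgebra K R} {J : (Fin r → ℤ) → R → Prop} (hJ : GIdeal act A J)
    {χ : Fin r → ℤ} {a : R} (h : J χ a) (t : K) : J χ (t • a) := by
  have := hJ.left h (A.algebraMap_mem t) (eig_algebraMap t)
  rwa [zero_add, ← Algebra.smul_def] at this

theorem GIdeal.sub {A : Subalgebra K R} {J : (Fin r → ℤ) → R → Prop} (hJ : GIdeal act A J)
    {χ : Fin r → ℤ} {a b : R} (h : J χ a) (h' : J χ b) : J χ (a - b) := by
  have := hJ.add h (hJ.smul h' (-1))
  simpa [sub_eq_add_neg] using this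

/-- The skew derivation. -/
def dl (act : Torus K r →* (R ≃ₐ[K] R)) (X : R) (h : Torus K r) : R → R :=
  fun a => X * a - act h a * X

/-- Data of one step of the iterated Ore extension. -/
structure OreD (act : Torus K r →* (R ≃ₐ[K] R)) (A B : Subalgebra K R) (X : R)
    (h : Torus K r) (χX : Fin r → ℤ) : Prop where
  actA : ∀ ξ, ∀ a ∈ A, act ξ a ∈ A
  le : A ≤ B
  XB : X ∈ B
  del : ∀ a ∈ A, dl act X h a ∈ A
  nil : ∀ a ∈ A, ∃ n : ℕ, (dl act X h)^[n] a = 0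
  eX : IsEigenWith K act χX X
  lam : ∀ n : ℕ, n ≠ 0 → ch χX h ^ n ≠ 1
  fil : ∀ b ∈ B, ∃ n, b ∈ Fil A X n
  uniq : FilU A X

theorem dl_add (X : R) (h : Torus K r) (a b : R) :
    dl act X h (a + b) = dl act X h a + dl act X h b := by
  simp only [dl, map_add]; noncomm_ring

theorem dl_smul (X : R) (h : Torus K r) (t : K) (a : R) :
    dl act X h (t • a) = t • dl act X h a := by
  simp only [dl, map_smul, mul_smul_comm, smul_mul_assoc, smul_sub]

theorem dl_zero (X : R) (h : Torus K r) : dl act X h (0 : R) = 0 := by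
  simp [dl]

theorem dl_one (X : R) (h : Torus K r) : dl act X h (1 : R) = 0 := by
  simp [dl]

theorem dl_mul (X : R) (h : Torus K r) (a b : R) :
    dl act X h (a * b) = act h a * dl act X h b + dl act X h a * b := by
  simp only [dl, map_mul]; noncomm_ring

theorem X_mul_eq (X : R) (h : Torus K r) (a : R) :
    X * a = act h a * X + dl act X h a := by
  simp only [dl]; abel

theorem dl_act {X : R} {h : Torus K r} {χX : Fin r → ℤ} (eX : IsEigenWith K act χX X) (a : R) :
    dl act X h (act h a) = (ch χX h)⁻¹ • act h (dl act X h a) := by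
  simp only [dl, map_sub, map_mul, eX.eq, mul_smul_comm, smul_mul_assoc, ← smul_sub]
  rw [smul_smul, inv_mul_cancel₀ (ch_ne _ _), one_smul]

theorem dl_iter_act {X : R} {h : Torus K r} {χX : Fin r → ℤ} (eX : IsEigenWith K act χX X) (m : ℕ)
    (a : R) : (dl act X h)^[m] (act h a) = ((ch χX h)⁻¹ ^ m) • act h ((dl act X h)^[m] a) := by
  induction m with
  | zero => simp
  | succ m ih =>
    rw [Function.iterate_succ_apply', Function.iterate_succ_apply', ih, dl_smul, dl_act eX,
      smul_smul, pow_succ]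

theorem dl_eig {X : R} {h : Torus K r} {χX : Fin r → ℤ} (eX : IsEigenWith K act χX X)
    {f : Fin r → ℤ} {a : R} (ha : IsEigenWith K act f a) :
    IsEigenWith K act (f + χX) (dl act X h a) := by
  refine eig_sub ?_ (eig_mul (eig_act ha h) eX)
  rw [add_comm]; exact eig_mul eX ha

theorem dl_iter_add (X : R) (h : Torus K r) (m : ℕ) (a b : R) :
    (dl act X h)^[m] (a + b) = (dl act X h)^[m] a + (dl act X h)^[m] b := by
  induction m with
  | zero => simp
  | succ m ih => simp only [Function.iterate_succ_apply', ih, dl_add]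

theorem dl_iter_zero (X : R) (h : Torus K r) (m : ℕ) :
    (dl act X h)^[m] (0 : R) = 0 := by
  induction m with
  | zero => simp
  | succ m ih => rw [Function.iterate_succ_apply', ih, dl_zero]

theorem dl_iter_zero_of_le {X : R} {h : Torus K r} {m n : ℕ} (hmn : m ≤ n) {a : R}
    (ha : (dl act X h)^[m] a = 0) : (dl act X h)^[n] a = 0 := by
  obtain ⟨k, rfl⟩ := Nat.exists_eq_add_of_le hmn
  rw [add_comm, Function.iterate_add_apply, ha, dl_iter_zero]

/-- quantum integers -/
def qn (q : K) : ℕ → K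
  | 0 => 0
  | n + 1 => qn q n + q ^ n

theorem qn_add (q : K) (m n : ℕ) : qn q (m + n) = qn q m + q ^ m * qn q n := by
  induction n with
  | zero => simp [qn]
  | succ n ih => rw [← add_assoc, qn, qn, ih, pow_add]; ring

theorem qn_mul (q : K) (n : ℕ) : qn q n * (q - 1) = q ^ n - 1 := by
  induction n with
  | zero => simp [qn]
  | succ n ih => rw [qn, add_mul, ih]; ring

theorem qn_ne {q : K} (hq : ∀ n : ℕ, n ≠ 0 → q ^ n ≠ 1) {n : ℕ} (hn : n ≠ 0) : qn q n ≠ 0 := by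
  intro h
  have := qn_mul q n
  rw [h, zero_mul] at this
  exact hq n hn (sub_eq_zero.1 this.symm)

/-- quantum factorials -/
def qf (q : K) : ℕ → K
  | 0 => 1
  | n + 1 => qf q n * qn q (n + 1)

theorem qf_ne {q : K} (hq : ∀ n : ℕ, n ≠ 0 → q ^ n ≠ 1) (n : ℕ) : qf q n ≠ 0 := by
  induction n with
  | zero => simp [qf]
  | succ n ih => exact mul_ne_zero ih (qn_ne hq (by omega))

theorem act_iter_smul (h : Torus K r) (n : ℕ) (t : K) (a : R) :
    (act h)^[n] (t • a) = t • (act h)^[n] a := by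
  induction n with
  | zero => simp
  | succ n ih => simp only [Function.iterate_succ_apply', ih, map_smul]

theorem act_iter_zero (h : Torus K r) (n : ℕ) :
    (act h)^[n] (0 : R) = 0 := by
  simpa using act_iter_smul (act := act) h n 0 (0 : R)

theorem act_iter_ne (h : Torus K r) (n : ℕ) {a : R} (ha : a ≠ 0) :
    (act h)^[n] a ≠ 0 := by
  induction n with
  | zero => simpa
  | succ n ih =>
    rw [Function.iterate_succ_apply']
    simpa using ih

/-- Multiplicativity of the `δ`-degree. -/
theorem dl_deg {X : R} {h : Torus K r} {χX : Fin r → ℤ} (eX : IsEigenWith K act χX X) :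
    ∀ (N m n : ℕ) (_ : m + n = N) (a b : R), (dl act X h)^[m + 1] a = 0 →
      (dl act X h)^[n + 1] b = 0 →
      (dl act X h)^[m + n + 1] (a * b) = 0 ∧
      (qf (ch χX h)⁻¹ m * qf (ch χX h)⁻¹ n) • (dl act X h)^[m + n] (a * b) =
        qf (ch χX h)⁻¹ (m + n) • ((act h)^[n] ((dl act X h)^[m] a) * (dl act X h)^[n] b) := by
  set q := (ch χX h)⁻¹ with hq
  intro N
  induction N with
  | zero =>
    intro m n hmn a b ha hb
    obtain ⟨rfl, rfl⟩ : m = 0 ∧ n = 0 := by omega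
    simp only [Function.iterate_succ_apply', Function.iterate_zero, id, zero_add, add_zero, qf,
      mul_one, one_smul] at *
    rw [dl_mul, ha, hb]
    simp
  | succ N ih =>
    -- first: each of the two terms
    intro m n hmn a b ha hb
    have key : ∀ j, (dl act X h)^[j + 1] (a * b) =
        (dl act X h)^[j] (act h a * dl act X h b) + (dl act X h)^[j] (dl act X h a * b) := by
      intro j
      rw [Function.iterate_succ_apply, dl_mul, dl_iter_add]
    have ha' : (dl act X h)^[m + 1] (act h a) = 0 := by
      rw [dl_iter_act eX, ha, map_zero, smul_zero]
    -- term 1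
    have T1 : (dl act X h)^[N + 1] (act h a * dl act X h b) = 0 ∧
        (qf q m * qf q n) • (dl act X h)^[N] (act h a * dl act X h b) =
        (qf q N * (q ^ m * qn q n)) • ((act h)^[n] ((dl act X h)^[m] a) * (dl act X h)^[n] b) := by
      rcases n with _ | n
      · have : dl act X h b = 0 := by simpa using hb
        rw [this, mul_zero, dl_iter_zero, dl_iter_zero]
        simp [qn]
      · have hb' : (dl act X h)^[n + 1] (dl act X h b) = 0 := by
          rw [← Function.iterate_succ_apply]; exact hb
        obtain ⟨h1, h2⟩ := ih m n (by omega) (act h a) (dl act X h b) ha' hb'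
        have e : m + n = N := by omega
        rw [e] at h1 h2
        refine ⟨h1, ?_⟩
        have : qf q m * qf q (n + 1) = qn q (n + 1) * (qf q m * qf q n) := by
          rw [qf]; ring
        rw [this, mul_smul, h2, dl_iter_act eX, act_iter_smul, smul_mul_assoc, smul_smul, smul_smul,
          ← Function.iterate_succ_apply, ← Function.iterate_succ_apply]
        congr 1
        ring
    have T2 : (dl act X h)^[N + 1] (dl act X h a * b) = 0 ∧
        (qf q m * qf q n) • (dl act X h)^[N] (dl act X h a * b) =
        (qf q N * qn q m) • ((act h)^[n] ((dl act X h)^[m] a) * (dl act X h)^[n] b) := by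
      rcases m with _ | m
      · have : dl act X h a = 0 := by simpa using ha
        rw [this, zero_mul, dl_iter_zero, dl_iter_zero]
        simp [qn]
      · have hb' : (dl act X h)^[m + 1] (dl act X h a) = 0 := by
          rw [← Function.iterate_succ_apply]; exact ha
        obtain ⟨h1, h2⟩ := ih m n (by omega) (dl act X h a) b hb' hb
        have e : m + n = N := by omega
        rw [e] at h1 h2
        refine ⟨h1, ?_⟩
        have : qf q (m + 1) * qf q n = qn q (m + 1) * (qf q m * qf q n) := by
          rw [qf]; ring
        rw [this, mul_smul, h2, smul_smul, ← Function.iterate_succ_apply]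
        congr 1
        ring
    rw [hmn]
    refine ⟨?_, ?_⟩
    · rw [key, T1.1, T2.1, add_zero]
    · rw [key, smul_add, T1.2, T2.2, ← add_smul]
      congr 1
      rw [qf, ← hmn, qn_add]
      ring

end Weights

section OreLemmas

variable {K : Type u} [Field K] {R : Type v} [Ring R] [Algebra K R] {r : ℕ}
  {act : Torus K r →* (R ≃ₐ[K] R)} {A B : Subalgebra K R} {X : R} {h : Torus K r}
  {χX : Fin r → ℤ}

theorem OreD.exact (D : OreD act A B X h χX) {a : R} (ha : a ∈ A) (h0 : a ≠ 0) :
    ∃ n, (dl act X h)^[n] a ≠ 0 ∧ (dl act X h)^[n + 1] a = 0 := by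
  classical
  have hex := D.nil a ha
  have hs := Nat.find_spec hex
  have hpos : Nat.find hex ≠ 0 := by
    intro h1
    rw [h1] at hs
    exact h0 (by simpa using hs)
  obtain ⟨n, hn⟩ := Nat.exists_eq_succ_of_ne_zero hpos
  refine ⟨n, Nat.find_min hex (by omega), ?_⟩
  rw [hn] at hs
  exact hs

theorem OreD.lam_inv (D : OreD act A B X h χX) (n : ℕ) (hn : n ≠ 0) : ((ch χX h)⁻¹) ^ n ≠ 1 := by
  rw [inv_pow]
  intro h1
  exact D.lam n hn (inv_eq_one.1 h1)

theorem OreD.deg_ne [NoZeroDivisors R] (D : OreD act A B X h χX) {a b : R} {m n : ℕ}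
    (ha : (dl act X h)^[m] a ≠ 0) (ha' : (dl act X h)^[m + 1] a = 0)
    (hb : (dl act X h)^[n] b ≠ 0) (hb' : (dl act X h)^[n + 1] b = 0) :
    (dl act X h)^[m + n] (a * b) ≠ 0 := by
  intro h0
  have := (dl_deg D.eX (m + n) m n rfl a b ha' hb').2
  rw [h0, smul_zero] at this
  have h1 := this.symm
  rw [smul_eq_zero] at h1
  rcases h1 with h1 | h1
  · exact qf_ne D.lam_inv _ h1
  · rcases mul_eq_zero.1 h1 with h1 | h1
    · exact act_iter_ne h n ha h1
    · exact hb h1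

theorem OreD.N1 [NoZeroDivisors R] (D : OreD act A B X h χX) {b c : R} (hb : b ∈ A) (hc : c ∈ A)
    (hbc : dl act X h c = b * c) : dl act X h c = 0 := by
  by_contra hne
  have hb0 : b ≠ 0 := by rintro rfl; exact hne (by simpa using hbc)
  have hc0 : c ≠ 0 := by rintro rfl; exact hne (by simpa using hbc)
  obtain ⟨n, h1, h2⟩ := D.exact hc hc0
  obtain ⟨m, h3, h4⟩ := D.exact hb hb0
  have := D.deg_ne h3 h4 h1 h2
  rw [← hbc, ← Function.iterate_succ_apply] at this
  exact this (dl_iter_zero_of_le (by omega) h2)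

theorem OreD.N2 [NoZeroDivisors R] (D : OreD act A B X h χX) {a b : R} (ha : a ∈ A) (hb : b ∈ A)
    (h1 : dl act X h a ≠ 0) (h2 : dl act X h b ≠ 0) : dl act X h (dl act X h (a * b)) ≠ 0 := by
  intro h0
  have ha0 : a ≠ 0 := by rintro rfl; exact h1 (dl_zero _ _)
  have hb0 : b ≠ 0 := by rintro rfl; exact h2 (dl_zero _ _)
  obtain ⟨m, h3, h4⟩ := D.exact ha ha0
  obtain ⟨n, h5, h6⟩ := D.exact hb hb0
  have hm : m ≠ 0 := by rintro rfl; exact h1 (by simpa using h4)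
  have hn : n ≠ 0 := by rintro rfl; exact h2 (by simpa using h6)
  refine D.deg_ne h3 h4 h5 h6 (dl_iter_zero_of_le (m := 2) (by omega) ?_)
  simpa using h0

end OreLemmas

section QCsec

variable {K : Type u} [Field K] {R : Type v} [Ring R] [Algebra K R] {r : ℕ}

/-- `a` and `b` commute up to a nonzero scalar. -/
def QCom (K : Type u) [Field K] {R : Type v} [Ring R] [Algebra K R] (a b : R) : Prop :=
  ∃ q : K, q ≠ 0 ∧ a * b = q • (b * a)

theorem QCom.symm {a b : R} (h : QCom K a b) : QCom K b a := by
  obtain ⟨q, hq, e⟩ := h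
  refine ⟨q⁻¹, inv_ne_zero hq, ?_⟩
  rw [e, smul_smul, inv_mul_cancel₀ hq, one_smul]

theorem QCom.refl (a : R) : QCom K a a := ⟨1, one_ne_zero, by simp⟩

theorem QCom.one (a : R) : QCom K a 1 := ⟨1, one_ne_zero, by simp⟩

theorem QCom.mul {a b c : R} (h : QCom K a b) (h' : QCom K a c) : QCom K a (b * c) := by
  obtain ⟨q, hq, e⟩ := h
  obtain ⟨q', hq', e'⟩ := h'
  refine ⟨q * q', mul_ne_zero hq hq', ?_⟩
  rw [← mul_assoc, e, smul_mul_assoc, mul_assoc, e', mul_smul_comm, smul_smul, mul_assoc]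

theorem QCom.smul {a b : R} (h : QCom K a b) (t : K) : QCom K a (t • b) := by
  obtain ⟨q, hq, e⟩ := h
  refine ⟨q, hq, ?_⟩
  rw [mul_smul_comm, e, smul_mul_assoc, smul_comm]

/-- pairwise q-commuting sets -/
def QC (K : Type u) [Field K] {R : Type v} [Ring R] [Algebra K R] (Z : Set R) : Prop :=
  ∀ a ∈ Z, ∀ b ∈ Z, QCom K a b

theorem QCom.closure {Z : Set R} {a : R} (h : ∀ b ∈ Z, QCom K a b) {b : R}
    (hb : b ∈ Submonoid.closure Z) : QCom K a b := by
  induction hb using Submonoid.closure_induction with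
  | mem x hx => exact h x hx
  | one => exact QCom.one a
  | mul x y _ _ hx hy => exact hx.mul hy

theorem QC.closure {Z : Set R} (hZ : QC K Z) {a b : R}
    (ha : a ∈ Submonoid.closure Z) (hb : b ∈ Submonoid.closure Z) : QCom K a b :=
  QCom.closure (fun c hc => (QCom.closure (fun d hd => hZ c hc d hd) ha).symm) hb

theorem QC.insert {Z : Set R} (hZ : QC K Z) {a : R} (ha : ∀ b ∈ Z, QCom K a b) :
    QC K (insert a Z) := by
  rintro b (rfl | hb) c (rfl | hc)
  · exact QCom.refl _
  · exact ha c hc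
  · exact (ha b hb).symm
  · exact hZ b hb c hc

theorem closure_le_adjoin {Z : Set R} {v : R} (hv : v ∈ Submonoid.closure Z) :
    v ∈ Algebra.adjoin K Z := by
  have : Submonoid.closure Z ≤ (Algebra.adjoin K Z).toSubmonoid :=
    Submonoid.closure_le.2 Algebra.subset_adjoin
  exact this hv

theorem move_left {Z : Set R} {v : R} (hv : ∀ b ∈ Z, QCom K v b) {g : R}
    (hg : g ∈ Algebra.adjoin K Z) : ∃ g' ∈ Algebra.adjoin K Z, v * g = g' * v := by
  induction hg using Algebra.adjoin_induction with
  | mem x hx =>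
    obtain ⟨q, -, e⟩ := hv x hx
    exact ⟨q • x, Subalgebra.smul_mem _ (Algebra.subset_adjoin hx) _, by rw [e, smul_mul_assoc]⟩
  | algebraMap t => exact ⟨_, Subalgebra.algebraMap_mem _ t, (Algebra.commutes t v).symm⟩
  | add x y _ _ hx hy =>
    obtain ⟨x', h1, e1⟩ := hx
    obtain ⟨y', h2, e2⟩ := hy
    exact ⟨x' + y', add_mem h1 h2, by rw [mul_add, e1, e2, add_mul]⟩
  | mul x y _ _ hx hy =>
    obtain ⟨x', h1, e1⟩ := hx
    obtain ⟨y', h2, e2⟩ := hy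
    exact ⟨x' * y', mul_mem h1 h2, by rw [← mul_assoc, e1, mul_assoc, e2, mul_assoc]⟩

/-- elements that become polynomial in `Z` after multiplication by an element of `W`. -/
theorem ore_adjoin {Z : Set R} (hZ : QC K Z) {W : Submonoid R} (hW : W ≤ Submonoid.closure Z)
    {S : Set R} (hS : ∀ a ∈ S, ∃ w ∈ W, w * a ∈ Algebra.adjoin K Z) {a : R}
    (ha : a ∈ Algebra.adjoin K S) : ∃ w ∈ W, w * a ∈ Algebra.adjoin K Z := by
  induction ha using Algebra.adjoin_induction with
  | mem x hx => exact hS x hx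
  | algebraMap t => exact ⟨1, one_mem _, by rw [one_mul]; exact Subalgebra.algebraMap_mem _ t⟩
  | add x y _ _ hx hy =>
    obtain ⟨w, h1, e1⟩ := hx
    obtain ⟨w', h2, e2⟩ := hy
    obtain ⟨q, -, e⟩ := hZ.closure (hW h1) (hW h2)
    refine ⟨w * w', mul_mem h1 h2, ?_⟩
    rw [mul_add]
    refine add_mem ?_ ?_
    · rw [e, smul_mul_assoc, mul_assoc]
      exact Subalgebra.smul_mem _ (mul_mem (closure_le_adjoin (hW h2)) e1) _
    · rw [mul_assoc]
      exact mul_mem (closure_le_adjoin (hW h1)) e2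
  | mul x y _ _ hx hy =>
    obtain ⟨w, h1, e1⟩ := hx
    obtain ⟨w', h2, e2⟩ := hy
    refine ⟨w' * w, mul_mem h2 h1, ?_⟩
    obtain ⟨g, hg, e⟩ := move_left (v := w') (Z := Z)
      (fun b hb => hZ.closure (hW h2) (Submonoid.subset_closure hb)) e1
    have : w' * w * (x * y) = g * (w' * y) := by
      rw [← mul_assoc g, ← e]; noncomm_ring
    rw [this]
    exact mul_mem hg e2

end QCsec

section Labels

variable {K : Type u} [Field K] {V : Type v} [AddCommGroup V] [Module K V] {ι : Type*}

theorem label_indep (L M : ι → V →ₗ[K] V) (hM : ∀ i, Function.Injective (M i))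
    (s : Finset (ι → K)) : ∀ (g : (ι → K) → V),
    (∀ ω ∈ s, ∀ i, L i (g ω) = ω i • M i (g ω)) → ∑ ω ∈ s, g ω = 0 → ∀ ω ∈ s, g ω = 0 := by
  classical
  induction s using Finset.induction_on with
  | empty => simp
  | insert ω1 s h1 ih =>
    intro g hg h0
    have hs : ∀ ω ∈ s, g ω = 0 := by
      intro ω2 h2
      have hne : ω2 ≠ ω1 := by rintro rfl; exact h1 h2
      obtain ⟨i, hi⟩ := Function.ne_iff.1 hne
      have e1 : ∑ ω ∈ insert ω1 s, (ω i • M i (g ω)) = 0 := by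
        rw [← Finset.sum_congr rfl (fun ω hω => hg ω hω i), ← map_sum, h0, map_zero]
      have e2 : ∑ ω ∈ insert ω1 s, (ω1 i • M i (g ω)) = 0 := by
        rw [← Finset.smul_sum, ← map_sum, h0, map_zero, smul_zero]
      have e3 : M i (∑ ω ∈ s, (ω i - ω1 i) • g ω) = 0 := by
        rw [map_sum]
        have := congrArg₂ (· - ·) e1 e2
        simp only [← Finset.sum_sub_distrib, sub_zero, ← sub_smul] at this
        rw [Finset.sum_insert h1, sub_self, zero_smul, zero_add] at this
        simpa using this
      have e4 := hM i (e3.trans (map_zero _).symm)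
      have e5 := ih (fun ω => (ω i - ω1 i) • g ω) (by
        intro ω hω j
        simp only [map_smul]
        rw [hg ω (Finset.mem_insert_of_mem hω) j, smul_comm]) e4 ω2 h2
      rcases smul_eq_zero.1 e5 with h | h
      · exact absurd (sub_eq_zero.1 h) hi
      · exact h
    intro ω hω
    rcases Finset.mem_insert.1 hω with rfl | hω
    · rw [Finset.sum_insert h1, Finset.sum_eq_zero hs, add_zero] at h0
      exact h0
    · exact hs ω hω

end Labels

section TLemma

variable {K : Type u} [Field K] {R : Type v} [Ring R] [Algebra K R] {r : ℕ}
  {act : Torus K r →* (R ≃ₐ[K] R)} {A B : Subalgebra K R} {X : R} {h : Torus K r}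
  {χX : Fin r → ℤ}

theorem eig_closure {Z : Set R} (hZ : ∀ y ∈ Z, ∃ f, IsEigenWith K act f y) {v : R}
    (hv : v ∈ Submonoid.closure Z) : ∃ f, IsEigenWith K act f v := by
  induction hv using Submonoid.closure_induction with
  | mem x hx => exact hZ x hx
  | one => exact ⟨0, eig_one⟩
  | mul x y _ _ hx hy =>
    obtain ⟨f, hf⟩ := hx
    obtain ⟨g, hg⟩ := hy
    exact ⟨f + g, eig_mul hf hg⟩

theorem ne_zero_closure [NoZeroDivisors R] [Nontrivial R] {Z : Set R} (hZ : ∀ y ∈ Z, y ≠ 0) {v : R}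
    (hv : v ∈ Submonoid.closure Z) : v ≠ 0 := by
  induction hv using Submonoid.closure_induction with
  | mem x hx => exact hZ x hx
  | one => exact one_ne_zero
  | mul x y _ _ hx hy => exact mul_ne_zero hx hy

theorem T_step1 {Ys : Set R} (fin : Ys.Finite) (qc : QC K Ys) (d : R → R)
    (ore : ∀ y ∈ Ys, ∃ w ∈ Submonoid.closure Ys, w * d y ∈ Algebra.adjoin K Ys) :
    ∃ w ∈ Submonoid.closure Ys, ∀ y ∈ Ys, ∃ e ∈ Algebra.adjoin K Ys, w * d y = e * y := by
  have key : ∀ T : Finset R, (T : Set R) ⊆ Ys →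
      ∃ w ∈ Submonoid.closure Ys, ∀ y ∈ T, ∃ e ∈ Algebra.adjoin K Ys, w * d y = e * y := by
    classical
    intro T
    induction T using Finset.induction_on with
    | empty => exact fun _ => ⟨1, one_mem _, by simp⟩
    | insert y T hy ih =>
      intro hT
      rw [Finset.coe_insert, Set.insert_subset_iff] at hT
      obtain ⟨w, hw, h1⟩ := ih hT.2
      obtain ⟨w0, hw0, h0⟩ := ore y hT.1
      obtain ⟨g, hg, eg⟩ := move_left (v := y) (Z := Ys) (fun b hb => qc y hT.1 b hb) h0
      have hyw : y * w0 ∈ Submonoid.closure Ys := mul_mem (Submonoid.subset_closure hT.1) hw0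
      obtain ⟨q, hq, e⟩ := qc.closure hyw hw
      refine ⟨y * w0 * w, mul_mem hyw hw, ?_⟩
      intro z hz
      rcases Finset.mem_insert.1 hz with rfl | hz
      · refine ⟨q • (w * g), Subalgebra.smul_mem _ (mul_mem (closure_le_adjoin hw) hg) _, ?_⟩
        rw [e, smul_mul_assoc, smul_mul_assoc, mul_assoc w g, ← eg]
        noncomm_ring
      · obtain ⟨e', he', e''⟩ := h1 z hz
        refine ⟨y * w0 * e', mul_mem (closure_le_adjoin hyw) he', ?_⟩
        simp only [mul_assoc, e'']
  obtain ⟨w, hw, h1⟩ := key fin.toFinset (by simp)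
  exact ⟨w, hw, fun y hy => h1 y (by simpa using hy)⟩

/-- label spaces -/
def LS (act : Torus K r →* (R ≃ₐ[K] R)) (Ys : Set R) (ω : (↥Ys ⊕ Torus K r) → K) :
    Submodule K R where
  carrier := {g | g ∈ Algebra.adjoin K Ys ∧ (∀ y : ↥Ys, (y : R) * g = ω (Sum.inl y) • (g * y)) ∧
    ∀ ξ, act ξ g = ω (Sum.inr ξ) • g}
  add_mem' := by
    rintro a b ⟨h1, h2, h3⟩ ⟨h4, h5, h6⟩
    refine ⟨add_mem h1 h4, fun y => ?_, fun ξ => ?_⟩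
    · rw [mul_add, h2, h5, add_mul, smul_add]
    · rw [map_add, h3, h6, smul_add]
  zero_mem' := ⟨zero_mem _, by simp, by simp⟩
  smul_mem' := by
    rintro t a ⟨h1, h2, h3⟩
    refine ⟨Subalgebra.smul_mem _ h1 _, fun y => ?_, fun ξ => ?_⟩
    · rw [mul_smul_comm, h2, smul_mul_assoc, smul_comm]
    · rw [map_smul, h3, smul_comm]

theorem LS_decomp {Ys : Set R} (qc : QC K Ys) (hom : ∀ y ∈ Ys, ∃ f, IsEigenWith K act f y) {g : R}
    (hg : g ∈ Algebra.adjoin K Ys) :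
    ∃ f : ((↥Ys ⊕ Torus K r) → K) →₀ R, (∀ ω, f ω ∈ LS act Ys ω) ∧
      f.sum (fun _ x => x) = g := by
  rw [← Submodule.mem_iSup_iff_exists_finsupp]
  have : (Submodule.span K (Submonoid.closure Ys : Set R)) ≤ ⨆ ω, LS act Ys ω := by
    rw [Submodule.span_le]
    intro v hv
    obtain ⟨f, hf⟩ := eig_closure hom hv
    have h1 : ∀ y : ↥Ys, ∃ q : K, (y : R) * v = q • (v * y) := by
      intro y
      obtain ⟨q, -, e⟩ := qc.closure (Submonoid.subset_closure y.2) hv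
      exact ⟨q, e⟩
    choose q hq using h1
    refine Submodule.mem_iSup_of_mem (Sum.elim q (fun ξ => ch f ξ)) ?_
    exact ⟨closure_le_adjoin hv, hq, fun ξ => hf.eq ξ⟩
  apply this
  rw [← Algebra.adjoin_eq_span]
  exact hg

theorem LS_indep [NoZeroDivisors R] {Ys : Set R} (ne : ∀ y ∈ Ys, y ≠ 0)
    (s : Finset ((↥Ys ⊕ Torus K r) → K)) (g : ((↥Ys ⊕ Torus K r) → K) → R)
    (hg : ∀ ω ∈ s, g ω ∈ LS act Ys ω) (h0 : ∑ ω ∈ s, g ω = 0) : ∀ ω ∈ s, g ω = 0 := by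
  refine label_indep (K := K)
    (fun i => Sum.elim (fun y : ↥Ys => LinearMap.mulLeft K (y : R))
      (fun ξ => (act ξ).toLinearMap) i)
    (fun i => Sum.elim (fun y : ↥Ys => LinearMap.mulRight K (y : R))
      (fun ξ => LinearMap.id) i) ?_ s g ?_ h0
  · rintro (y | ξ)
    · intro a b hab
      exact mul_right_cancel₀ (ne y y.2) hab
    · exact fun a b hab => hab
  · rintro ω hω (y | ξ)
    · exact (hg ω hω).2.1 y
    · exact (hg ω hω).2.2 ξ

theorem T_lemma [NoZeroDivisors R] [Nontrivial R] (D : OreD act A B X h χX) {Ys : Set R}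
    (fin : Ys.Finite) (qc : QC K Ys) (hom : ∀ y ∈ Ys, ∃ f, IsEigenWith K act f y)
    (ne : ∀ y ∈ Ys, y ≠ 0) (sub : Ys ⊆ A)
    (ore : ∀ a ∈ A, ∃ w ∈ Submonoid.closure Ys, w * a ∈ Algebra.adjoin K Ys) :
    ∃ w ∈ Submonoid.closure Ys, ∃ χ, IsEigenWith K act χ w ∧ ∃ e ∈ Algebra.adjoin K Ys,
      IsEigenWith K act (χ + χX) e ∧ ∀ y ∈ Ys, QCom K (w * X - e) y := by
  classical
  obtain ⟨w, hw, hE⟩ := T_step1 fin qc (dl act X h) (fun y hy => ore _ (D.del y (sub hy)))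
  obtain ⟨χ, hχ⟩ := eig_closure hom hw
  have hw0 := ne_zero_closure ne hw
  refine ⟨w, hw, χ, hχ, ?_⟩
  have hE' : ∀ y : ↥Ys, ∃ e ∈ Algebra.adjoin K Ys, w * dl act X h y = e * y := fun y => hE y y.2
  choose E hEm hEe using hE'
  have hp : ∀ y : ↥Ys, ∃ p : K, p ≠ 0 ∧ w * act h (y : R) = p • ((y : R) * w) := by
    intro y
    obtain ⟨q, hq, e⟩ := qc.closure hw (Submonoid.subset_closure y.2)
    obtain ⟨f, hf⟩ := hom y y.2
    refine ⟨ch f h * q, mul_ne_zero (ch_ne _ _) hq, ?_⟩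
    rw [hf.eq, mul_smul_comm, e, smul_smul]
  choose p hp0 hpe using hp
  choose F hF hFs using fun y : ↥Ys => LS_decomp (act := act) qc hom (hEm y)
  have : Fintype ↥Ys := fin.fintype
  let s : Finset ((↥Ys ⊕ Torus K r) → K) := Finset.univ.biUnion (fun y : ↥Ys => (F y).support)
  have hs : ∀ y : ↥Ys, E y = ∑ ω ∈ s, F y ω := by
    intro y
    rw [← hFs y, Finsupp.sum]
    refine Finset.sum_subset (fun ω hω => Finset.mem_biUnion.2 ⟨y, Finset.mem_univ _, hω⟩) ?_
    intro ω _ hω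
    simpa using hω
  -- homogeneity
  have hEh : ∀ y : ↥Ys, IsEigenWith K act (χ + χX) (E y) := by
    intro y
    obtain ⟨f, hf⟩ := hom y y.2
    have h1 : IsEigenWith K act (χ + (f + χX)) (E y * y) := by
      rw [← hEe]; exact eig_mul hχ (dl_eig D.eX hf)
    exact eig_cast (eig_cancel_right h1 hf (ne y y.2)) (by abel)
  have hFh : ∀ ω ∈ s, ∀ y : ↥Ys, IsEigenWith K act (χ + χX) (F y ω) := by
    intro ω hω y
    refine IsEigenWith.mk' fun ξ => ?_
    have h1 := (hEh y).eq ξ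
    rw [hs y, map_sum, Finset.smul_sum, ← sub_eq_zero, ← Finset.sum_sub_distrib] at h1
    have h2 := LS_indep (act := act) ne s (fun ω => act ξ (F y ω) - ch (χ + χX) ξ • F y ω) (by
      intro ω hω
      refine sub_mem ?_ (Submodule.smul_mem _ _ (hF y ω))
      rw [(hF y ω).2.2 ξ]
      exact Submodule.smul_mem _ _ (hF y ω)) h1 ω hω
    exact sub_eq_zero.1 h2
  -- the relations
  have rel : ∀ i j : ↥Ys, ∀ ω ∈ s,
      (p i * ω (Sum.inl i) - 1) • F j ω = (p j * ω (Sum.inl j) - 1) • F i ω := by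
    intro i j
    obtain ⟨q, hq, e⟩ := qc i i.2 j j.2
    have h1 : ∀ i j : ↥Ys, w * dl act X h ((i : R) * j) =
        (p i • ∑ ω ∈ s, ω (Sum.inl i) • F j ω) * (i * j) + E i * (i * j) := by
      intro i j
      rw [dl_mul, mul_add, ← mul_assoc, hpe, smul_mul_assoc, mul_assoc, hEe, ← mul_assoc w, hEe,
        ← mul_assoc (i : R), mul_assoc (E i)]
      have : (i : R) * E j = (∑ ω ∈ s, ω (Sum.inl i) • F j ω) * i := by
        rw [hs, Finset.mul_sum, Finset.sum_mul]
        refine Finset.sum_congr rfl fun ω _ => ?_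
        rw [(hF j ω).2.1 i, smul_mul_assoc]
      rw [this, mul_assoc, smul_mul_assoc]
    have h2 := h1 i j
    rw [e, dl_smul, mul_smul_comm, h1 j i] at h2
    have h3 : (∑ ω ∈ s, ((p i * ω (Sum.inl i) - 1) • F j ω - (p j * ω (Sum.inl j) - 1) • F i ω)) *
        (q • ((j : R) * i)) = 0 := by
      have e1 : ∑ ω ∈ s, ((p i * ω (Sum.inl i) - 1) • F j ω - (p j * ω (Sum.inl j) - 1) • F i ω) =
        (p i • ∑ ω ∈ s, ω (Sum.inl i) • F j ω) + E i - (p j • ∑ ω ∈ s, ω (Sum.inl j) • F i ω)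
          - E j := by
        rw [hs i, hs j, Finset.smul_sum, Finset.smul_sum, ← Finset.sum_add_distrib,
          ← Finset.sum_sub_distrib, ← Finset.sum_sub_distrib]
        refine Finset.sum_congr rfl fun ω _ => ?_
        rw [sub_smul, sub_smul, mul_smul, mul_smul, one_smul, one_smul]
        abel
      rw [e1, sub_mul, sub_mul, add_mul, ← h2]
      simp only [smul_add, mul_smul_comm]
      abel
    have h4 := (mul_eq_zero.1 h3).resolve_right (by
      rw [← e]; exact mul_ne_zero (ne i i.2) (ne j j.2))
    intro ω hω
    have h5 := LS_indep (act := act) ne s _ (by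
      intro ω hω
      exact sub_mem (Submodule.smul_mem _ _ (hF j ω)) (Submodule.smul_mem _ _ (hF i ω))) h4 ω hω
    exact sub_eq_zero.1 h5
  -- solve
  have sol : ∀ ω, ∃ d, ω ∈ s → (d ∈ LS act Ys ω ∧ IsEigenWith K act (χ + χX) d ∧
      ∀ i : ↥Ys, F i ω = (1 - p i * ω (Sum.inl i)) • d) := by
    intro ω
    by_cases hω : ω ∈ s
    swap
    · exact ⟨0, fun hh => absurd hh hω⟩
    by_cases hex : ∃ i : ↥Ys, p i * ω (Sum.inl i) ≠ 1
    · obtain ⟨i, hi⟩ := hex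
      have hi' : 1 - p i * ω (Sum.inl i) ≠ 0 := sub_ne_zero.2 (Ne.symm hi)
      refine ⟨(1 - p i * ω (Sum.inl i))⁻¹ • F i ω, fun _ =>
        ⟨Submodule.smul_mem _ _ (hF i ω), eig_smul (hFh ω hω i) _, ?_⟩⟩
      intro j
      have h1 := rel i j ω hω
      rw [smul_smul, mul_comm, ← smul_smul, ← neg_sub (p j * _), neg_smul, ← h1, ← neg_smul,
        neg_sub, smul_smul, inv_mul_cancel₀ hi', one_smul]
    · push Not at hex
      refine ⟨0, fun _ => ⟨zero_mem _, eig_zero _, fun j => ?_⟩⟩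
      rw [smul_zero]
      by_contra hg
      set g := F j ω with hgdef
      have hS : ∀ a ∈ Algebra.adjoin K Ys, ∃ a', w * act h a = a' * w ∧ a' * g = g * a := by
        intro a ha
        induction ha using Algebra.adjoin_induction with
        | mem x hx =>
          refine ⟨p ⟨x, hx⟩ • x, ?_, ?_⟩
          · rw [hpe ⟨x, hx⟩, smul_mul_assoc]
          · have h2 := (hF j ω).2.1 ⟨x, hx⟩
            rw [smul_mul_assoc, h2, smul_smul, hex, one_smul]
        | algebraMap t =>
          refine ⟨algebraMap K R t, ?_, Algebra.commutes t g⟩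
          rw [AlgEquiv.commutes]
          exact (Algebra.commutes t w).symm
        | add x y _ _ hx hy =>
          obtain ⟨x', h1, e1⟩ := hx
          obtain ⟨y', h2, e2⟩ := hy
          exact ⟨x' + y', by rw [map_add, mul_add, h1, h2, add_mul],
            by rw [add_mul, e1, e2, mul_add]⟩
        | mul x y _ _ hx hy =>
          obtain ⟨x', h1, e1⟩ := hx
          obtain ⟨y', h2, e2⟩ := hy
          exact ⟨x' * y', by rw [map_mul, ← mul_assoc, h1, mul_assoc, h2, mul_assoc],
            by rw [mul_assoc, e2, ← mul_assoc, e1, mul_assoc]⟩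
      obtain ⟨a', h1, h2⟩ := hS g (hF j ω).1
      have h3 := mul_right_cancel₀ hg h2
      subst h3
      obtain ⟨b', h4, h5⟩ := hS w (closure_le_adjoin hw)
      rw [hχ.eq, mul_smul_comm, ← smul_mul_assoc] at h4
      have h6 := mul_right_cancel₀ hw0 h4
      subst h6
      rw [(hFh ω hω j).eq, ← h5, mul_smul_comm, smul_mul_assoc, ← sub_eq_zero, ← sub_smul,
        smul_eq_zero] at h1
      rcases h1 with h1 | h1
      · have h7 : ch χ h * ch χX h = ch χ h := by rw [← ch_add]; exact sub_eq_zero.1 h1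
        have h8 : ch χX h = 1 := by
          have := ch_ne χ h
          field_simp at h7
          exact h7
        exact D.lam 1 one_ne_zero (by rw [pow_one, h8])
      · exact mul_ne_zero hw0 hg h1
  choose d hd using sol
  refine ⟨∑ ω ∈ s, d ω, sum_mem fun ω hω => (hd ω hω).1.1, ?_, ?_⟩
  · refine IsEigenWith.mk' fun ξ => ?_
    rw [map_sum, Finset.smul_sum]
    exact Finset.sum_congr rfl fun ω hω => (hd ω hω).2.1.eq ξ
  · intro y hy
    refine ⟨p ⟨y, hy⟩, hp0 _, ?_⟩
    have h1 : (∑ ω ∈ s, d ω) * y - p ⟨y, hy⟩ • (y * ∑ ω ∈ s, d ω) = w * dl act X h y := by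
      rw [hEe ⟨y, hy⟩, hs ⟨y, hy⟩, Finset.sum_mul, Finset.mul_sum, Finset.smul_sum, Finset.sum_mul,
        ← Finset.sum_sub_distrib]
      refine Finset.sum_congr rfl fun ω hω => ?_
      have h2 := (hd ω hω).1.2.1 ⟨y, hy⟩
      simp only at h2
      rw [h2, (hd ω hω).2.2 ⟨y, hy⟩, smul_mul_assoc, sub_smul, one_smul, smul_smul]
    have h3 := X_mul_eq (act := act) X h y
    have h4 := hpe ⟨y, hy⟩
    simp only at h4
    have h5 : w * X * y = p ⟨y, hy⟩ • (y * (w * X)) + w * dl act X h y := by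
      rw [mul_assoc, h3, mul_add, ← mul_assoc, h4, smul_mul_assoc, mul_assoc]
    rw [sub_mul, mul_sub, h5, ← h1, smul_sub]
    abel

end TLemma

section PIdeal

variable {K : Type u} [Field K] {R : Type v} [Ring R] [Algebra K R] {r : ℕ}
  {act : Torus K r →* (R ≃ₐ[K] R)} {A B : Subalgebra K R} {X : R} {h : Torus K r}
  {χX : Fin r → ℤ}

/-- The inductive invariant. -/
structure Invt (act : Torus K r →* (R ≃ₐ[K] R)) (A : Subalgebra K R) (Ys L : Set R) : Prop where
  fin : Ys.Finite
  LY : L ⊆ Ys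
  YA : Ys ⊆ A
  ne : ∀ y ∈ Ys, y ≠ 0
  hom : ∀ y ∈ Ys, ∃ f, IsEigenWith K act f y
  qc : QC K Ys
  ore : ∀ a ∈ A, ∃ w ∈ Submonoid.closure Ys, w * a ∈ Algebra.adjoin K Ys
  prime : ∀ p ∈ L, IsPrimeIn K A p
  nonassoc : ∀ p ∈ L, ∀ p' ∈ L, (∃ d ∈ A, p = p' * d) → p = p'
  ideal : ∀ J, GIdeal act A J → ∀ χ a, J χ a → a ≠ 0 → ∃ v ∈ Submonoid.closure L, ∃ θ, J θ v
  unit : ∀ a ∈ A, ∀ b ∈ A, a * b = 1 → ∃ t : K, a = algebraMap K R t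

theorem OreD.hs (D : OreD act A B X h χX) : ∀ a ∈ A, act h a ∈ A := D.actA h

theorem OreD.hd (D : OreD act A B X h χX) : ∀ a ∈ A, X * a - act h a * X ∈ A := D.del

theorem OreD.FilB (D : OreD act A B X h χX) {n : ℕ} {b : R} (hb : b ∈ Fil A X n) : b ∈ B :=
  Fil_le D.le D.XB hb

theorem OreD.adj (D : OreD act A B X h χX) {b : R} (hb : b ∈ B) :
    b ∈ Algebra.adjoin K ((A : Set R) ∪ {X}) := by
  obtain ⟨n, hn⟩ := D.fil b hb
  have h1 : A ≤ Algebra.adjoin K ((A : Set R) ∪ {X}) := fun a ha =>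
    Algebra.subset_adjoin (Set.mem_union_left _ ha)
  have h2 : X ∈ Algebra.adjoin K ((A : Set R) ∪ {X}) :=
    Algebra.subset_adjoin (Set.mem_union_right _ (Set.mem_singleton X))
  exact Fil_le h1 h2 hn

/-- The properties of the ideal `P`. -/
structure PI (A B : Subalgebra K R) (Y : Set R) (P : R → Prop) : Prop where
  mem : ∀ {f}, P f → f ∈ B
  add : ∀ {f g}, P f → P g → P (f + g)
  left : ∀ {f b}, P f → b ∈ B → P (b * f)
  right : ∀ {f b}, P f → b ∈ B → P (f * b)
  zero : ∀ {a}, a ∈ A → P a → a = 0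
  cancel : ∀ {v f}, v ∈ Y → f ∈ B → P (v * f) → P f

theorem PI.smul {Y : Set R} {P : R → Prop} (hP : PI A B Y P) {f : R} (t : K) (hf : P f) :
    P (t • f) := by
  rw [Algebra.smul_def]; exact hP.left hf (B.algebraMap_mem t)

theorem PI.neg {Y : Set R} {P : R → Prop} (hP : PI A B Y P) {f : R} (hf : P f) :
    P (-f) := by
  simpa using hP.smul (-1 : K) hf

theorem PI.sub {Y : Set R} {P : R → Prop} (hP : PI A B Y P) {f g : R} (hf : P f) (hg : P g) :
    P (f - g) := by
  rw [sub_eq_add_neg]; exact hP.add hf (hP.neg hg)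

theorem Invt.closA {Ys L : Set R} (I : Invt act A Ys L) {v : R} (hv : v ∈ Submonoid.closure Ys) :
    v ∈ A :=
  (Submonoid.closure_le (S := A.toSubmonoid)).2 I.YA hv

theorem Invt.adjA {Ys L : Set R} (I : Invt act A Ys L) {v : R} (hv : v ∈ Algebra.adjoin K Ys) :
    v ∈ A :=
  (Algebra.adjoin_le I.YA) hv

theorem P_exists [NoZeroDivisors R] [Nontrivial R] (D : OreD act A B X h χX) {Ys L : Set R}
    (I : Invt act A Ys L) : ∃ P, PI A B (Submonoid.closure Ys : Set R) P ∧
      ∃ w ∈ A, w ≠ 0 ∧ ∃ χ, IsEigenWith K act χ w ∧ ∃ e ∈ A, IsEigenWith K act (χ + χX) e ∧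
        P (w * X - e) := by
  obtain ⟨w, hw, χ, hχ, e, he, heχ, hq⟩ := T_lemma D I.fin I.qc I.hom I.ne I.YA I.ore
  have hw0 := ne_zero_closure I.ne hw
  set z := w * X - e with hz
  have hwA := I.closA hw
  have heA := I.adjA he
  have hzB : z ∈ B := sub_mem (mul_mem (D.le hwA) D.XB) (D.le heA)
  have qcZ : QC K (insert z Ys) := I.qc.insert hq
  have hYZ : Submonoid.closure Ys ≤ Submonoid.closure (insert z Ys) :=
    Submonoid.closure_mono (Set.subset_insert _ _)
  have hYZ' : Algebra.adjoin K Ys ≤ Algebra.adjoin K (insert z Ys) :=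
    Algebra.adjoin_mono (Set.subset_insert _ _)
  have hZB : Algebra.adjoin K (insert z Ys) ≤ B := by
    refine Algebra.adjoin_le ?_
    rw [Set.insert_subset_iff]
    exact ⟨hzB, fun y hy => D.le (I.YA hy)⟩
  have oreB : ∀ b ∈ B, ∃ w ∈ Submonoid.closure Ys, w * b ∈ Algebra.adjoin K (insert z Ys) := by
    intro b hb
    refine ore_adjoin qcZ hYZ (S := (A : Set R) ∪ {X}) ?_ (D.adj hb)
    rintro a (ha | rfl)
    · obtain ⟨w, h1, h2⟩ := I.ore a ha
      exact ⟨w, h1, hYZ' h2⟩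
    · refine ⟨w, hw, ?_⟩
      have : w * a = z + e := by rw [hz]; abel
      rw [this]
      exact add_mem (Algebra.subset_adjoin (Or.inl rfl)) (hYZ' he)
  have mv : ∀ v ∈ Submonoid.closure (insert z Ys), ∀ g ∈ Algebra.adjoin K (insert z Ys),
      ∃ g' ∈ Algebra.adjoin K (insert z Ys), v * g = g' * v := fun v hv g hg =>
    move_left (fun b hb => qcZ.closure hv (Submonoid.subset_closure hb)) hg
  have left : ∀ {f b}, (f ∈ B ∧ ∃ v ∈ Submonoid.closure Ys, ∃ b ∈ B, v * f = b * z) → b ∈ B →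
      (b * f ∈ B ∧ ∃ v ∈ Submonoid.closure Ys, ∃ b' ∈ B, v * (b * f) = b' * z) := by
    rintro f b ⟨hf, v, hv, b1, hb1, e1⟩ hb
    refine ⟨mul_mem hb hf, ?_⟩
    obtain ⟨u, hu, hg⟩ := oreB b hb
    obtain ⟨g', hg', e2⟩ := mv v (hYZ hv) _ hg
    refine ⟨v * u, mul_mem hv hu, g' * b1, mul_mem (hZB hg') hb1, ?_⟩
    rw [mul_assoc g', ← e1, ← mul_assoc g', ← e2]
    noncomm_ring
  refine ⟨fun f => f ∈ B ∧ ∃ v ∈ Submonoid.closure Ys, ∃ b ∈ B, v * f = b * z,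
    ⟨fun hf => hf.1, ?_, left, ?_, ?_, ?_⟩, w, hwA, hw0, χ, hχ, e, heA, heχ, ?_⟩
  · rintro f g ⟨hf, v, hv, b, hb, e1⟩ ⟨hg, v', hv', b', hb', e2⟩
    refine ⟨add_mem hf hg, v * v', mul_mem hv hv', ?_⟩
    obtain ⟨q, hq, e3⟩ := I.qc.closure hv hv'
    refine ⟨q • (v' * b) + v * b', add_mem (Subalgebra.smul_mem _
      (mul_mem (D.le (I.closA hv')) hb) _) (mul_mem (D.le (I.closA hv)) hb'), ?_⟩
    rw [mul_add, add_mul, mul_assoc v b', ← e2, smul_mul_assoc, mul_assoc v' b, ← e1, e3,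
      smul_mul_assoc, mul_assoc, ← mul_assoc v v' g, e3, smul_mul_assoc]
  · rintro f b ⟨hf, v, hv, b1, hb1, e1⟩ hb
    have h1 : z * b ∈ B ∧ ∃ v ∈ Submonoid.closure Ys, ∃ b' ∈ B, v * (z * b) = b' * z := by
      refine ⟨mul_mem hzB hb, ?_⟩
      obtain ⟨u, hu, hg⟩ := oreB b hb
      obtain ⟨g', hg', e2⟩ := mv z (Submonoid.subset_closure (Or.inl rfl)) _ hg
      obtain ⟨q, hq, e3⟩ := qcZ.closure (hYZ hu) (Submonoid.subset_closure (Or.inl rfl))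
      refine ⟨u, hu, q • g', Subalgebra.smul_mem _ (hZB hg') _, ?_⟩
      rw [smul_mul_assoc, ← e2, ← mul_assoc, e3, smul_mul_assoc, mul_assoc]
    obtain ⟨-, u, hu, b2, hb2, e2⟩ := left h1 hb1
    refine ⟨mul_mem hf hb, u * v, mul_mem hu hv, b2, hb2, ?_⟩
    rw [← e2, ← mul_assoc b1, ← e1]
    noncomm_ring
  · rintro a ha ⟨-, v, hv, b, hb, e1⟩
    have hz1 : HasLead A X 1 w z := by
      refine ⟨hwA, ?_⟩
      rw [hz, pow_one, mem_Fil_one]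
      simpa using heA
    have hb0 : b = 0 := by
      by_contra hb0
      obtain ⟨n, hn⟩ := D.fil b hb
      obtain ⟨m, c, -, hc, hc0⟩ := exists_lead_of_mem hn hb0
      have h2 := hc.mul D.hs D.hd hz1
      have h3 := h2.degree_le D.uniq (mul_ne_zero hc0 (act_iter_ne h _ hw0))
        (m := 1) (by rw [← e1, mem_Fil_one]; exact mul_mem (I.closA hv) ha)
      omega
    rw [hb0, zero_mul] at e1
    exact (mul_eq_zero.1 e1).resolve_left (ne_zero_closure I.ne hv)
  · rintro v f hv hf ⟨-, u, hu, b, hb, e1⟩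
    exact ⟨hf, u * v, mul_mem hu hv, b, hb, by rw [mul_assoc, e1]⟩
  · exact ⟨hzB, 1, one_mem _, 1, one_mem _, rfl⟩

end PIdeal

section PrimeStep

variable {K : Type u} [Field K] {R : Type v} [Ring R] [Algebra K R] {r : ℕ}
  {act : Torus K r →* (R ≃ₐ[K] R)} {A B : Subalgebra K R} {X : R} {h : Torus K r}
  {χX : Fin r → ℤ} {Ys L : Set R}

theorem act_iter_eig {θ : Fin r → ℤ} {a : R} (ha : IsEigenWith K act θ a) (n : ℕ) :
    (act h)^[n] a = (ch θ h) ^ n • a := by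
  induction n with
  | zero => simp
  | succ n ih => rw [Function.iterate_succ_apply', ih, map_smul, ha.eq, smul_smul, pow_succ]

/-- divisibility in `A` -/
def Dv (A : Subalgebra K R) (u a : R) : Prop := ∃ d ∈ A, a = u * d

/-- normal elements of `A` -/
def Nrm (A : Subalgebra K R) (u : R) : Prop :=
  u ∈ A ∧ (∀ a ∈ A, ∃ b ∈ A, a * u = u * b) ∧ (∀ a ∈ A, ∃ b ∈ A, u * a = b * u)

theorem Nrm.one (A : Subalgebra K R) : Nrm A 1 :=
  ⟨one_mem _, fun a ha => ⟨a, ha, by simp⟩, fun a ha => ⟨a, ha, by simp⟩⟩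

theorem Nrm.mul {u v : R} (hu : Nrm A u) (hv : Nrm A v) : Nrm A (u * v) := by
  refine ⟨mul_mem hu.1 hv.1, fun a ha => ?_, fun a ha => ?_⟩
  · obtain ⟨b, hb, e⟩ := hu.2.1 a ha
    obtain ⟨b', hb', e'⟩ := hv.2.1 b hb
    exact ⟨b', hb', by rw [← mul_assoc, e, mul_assoc, e', mul_assoc]⟩
  · obtain ⟨b, hb, e⟩ := hv.2.2 a ha
    obtain ⟨b', hb', e'⟩ := hu.2.2 b hb
    exact ⟨b', hb', by rw [mul_assoc, e, ← mul_assoc, e', mul_assoc]⟩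

theorem Nrm.pow {u : R} (hu : Nrm A u) (n : ℕ) : Nrm A (u ^ n) := by
  induction n with
  | zero => simpa using Nrm.one A
  | succ n ih => rw [pow_succ]; exact ih.mul hu

theorem IsPrimeIn.nrm {p : R} (hp : IsPrimeIn K A p) : Nrm A p := ⟨hp.1, hp.2.2.2.1, hp.2.2.2.2.1⟩

theorem Invt.nrm (I : Invt act A Ys L) {v : R} (hv : v ∈ Submonoid.closure L) : Nrm A v := by
  induction hv using Submonoid.closure_induction with
  | mem x hx => exact (I.prime x hx).nrm
  | one => exact Nrm.one A
  | mul x y _ _ hx hy => exact hx.mul hy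

theorem Invt.LYc (I : Invt act A Ys L) {v : R} (hv : v ∈ Submonoid.closure L) :
    v ∈ Submonoid.closure Ys := Submonoid.closure_mono I.LY hv

theorem Invt.clne [NoZeroDivisors R] [Nontrivial R] (I : Invt act A Ys L) {v : R}
    (hv : v ∈ Submonoid.closure L) : v ≠ 0 := ne_zero_closure I.ne (I.LYc hv)

theorem Invt.cleig (I : Invt act A Ys L) {v : R}
    (hv : v ∈ Submonoid.closure L) : ∃ f, IsEigenWith K act f v := eig_closure I.hom (I.LYc hv)

theorem Invt.list (I : Invt act A Ys L) {l : List R} (hl : ∀ p ∈ l, p ∈ L) :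
    l.prod ∈ Submonoid.closure L :=
  Submonoid.list_prod_mem _ fun p hp => Submonoid.subset_closure (hl p hp)

/-- divisibility by `p` is reflected by conjugation with a q-commuting normal element -/
theorem Dv_reflect [NoZeroDivisors R] {p u a a' : R} (hu : Nrm A u) (hu0 : u ≠ 0)
    (hq : QCom K u p) (e : u * a = a' * u) (hd : Dv A p a') : Dv A p a := by
  obtain ⟨d, hd, rfl⟩ := hd
  obtain ⟨d', hd', e'⟩ := hu.2.1 d hd
  obtain ⟨q, hq0, e2⟩ := hq.symm
  refine ⟨q • d', Subalgebra.smul_mem _ hd' _, ?_⟩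
  apply mul_left_cancel₀ hu0
  rw [e, mul_assoc, e', ← mul_assoc, e2, smul_mul_assoc, mul_smul_comm, mul_smul_comm, mul_assoc]

theorem Dv_list [NoZeroDivisors R] (I : Invt act A Ys L) {c : R} (hc : c ∈ A) :
    ∀ (l : List R), (∀ p ∈ l, p ∈ L) → (∀ p ∈ l, ¬ Dv A p c) → ∀ a ∈ A,
      Dv A l.prod (a * c) → Dv A l.prod a
  | [], _, _, a, ha, _ => ⟨a, ha, by simp⟩
  | p :: l, hl, hc', a, ha, hd => by
    obtain ⟨d, hd, e⟩ := hd
    rw [List.prod_cons, mul_assoc] at e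
    have hlA : l.prod ∈ A :=
      (I.nrm (I.list (l := l) (fun q hq => hl q (List.mem_cons_of_mem _ hq)))).1
    have hp := I.prime p (hl p List.mem_cons_self)
    rcases hp.2.2.2.2.2 a ha c hc ⟨_, mul_mem hlA hd, e⟩ with ⟨a', ha', rfl⟩ | h1
    · rw [mul_assoc] at e
      have e' := mul_left_cancel₀ hp.2.1 e
      obtain ⟨d', hd', rfl⟩ := Dv_list I hc l (fun q hq => hl q (List.mem_cons_of_mem _ hq))
        (fun q hq => hc' q (List.mem_cons_of_mem _ hq)) a' ha' ⟨d, hd, e'⟩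
      exact ⟨d', hd', by rw [List.prod_cons, mul_assoc]⟩
    · exact absurd h1 (hc' p List.mem_cons_self)

theorem list_extract (I : Invt act A Ys L) {l : List R} (hl : ∀ p ∈ l, p ∈ L) {p : R} (hp : p ∈ l) :
    ∃ l' : List R, (∀ p ∈ l', p ∈ L) ∧ l'.length < l.length ∧ ∃ t : K, t ≠ 0 ∧
      l.prod = t • (p * l'.prod) := by
  obtain ⟨l1, l2, rfl⟩ := List.append_of_mem hp
  have h1 : ∀ p ∈ l1, p ∈ L := fun q hq => hl q (by simp [hq])
  have h2 : ∀ p ∈ l2, p ∈ L := fun q hq => hl q (by simp [hq])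
  obtain ⟨t, ht, e⟩ := I.qc.closure (I.LYc (I.list h1)) (Submonoid.subset_closure (I.LY (hl p hp)))
  refine ⟨l1 ++ l2, ?_, by simp, t, ht, ?_⟩
  · intro q hq
    rcases List.mem_append.1 hq with hq | hq
    · exact h1 q hq
    · exact h2 q hq
  · rw [List.prod_append, List.prod_cons, List.prod_append, ← mul_assoc, e, smul_mul_assoc,
      mul_assoc]

/-- first choice of `u` and `c`. -/
theorem exists_uc [NoZeroDivisors R] [Nontrivial R] (D : OreD act A B X h χX)
    (I : Invt act A Ys L) {P : R → Prop} (hP : PI A B (Submonoid.closure Ys : Set R) P)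
    {w : R} (hw : w ∈ A) (hw0 : w ≠ 0) {χ : Fin r → ℤ} (hχ : IsEigenWith K act χ w) {e : R}
    (he : e ∈ A) (heχ : IsEigenWith K act (χ + χX) e) (hPw : P (w * X - e)) :
    ∃ l : List R, (∀ p ∈ l, p ∈ L) ∧ ∃ θ, IsEigenWith K act θ l.prod ∧ ∃ c ∈ A,
      IsEigenWith K act (θ + χX) c ∧ P (l.prod * X - c) ∧ ∀ p ∈ l, ¬ Dv A p c := by
  classical
  let J : (Fin r → ℤ) → R → Prop := fun θ a => a ∈ A ∧ IsEigenWith K act θ a ∧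
    ∃ b ∈ A, IsEigenWith K act (θ + χX) b ∧ P (a * X - b)
  have hJ : GIdeal act A J := by
    refine ⟨fun h => h.1, fun h => h.2.1, ?_, ?_, ?_⟩
    · rintro χ a a' ⟨h1, h2, b, h3, h4, h5⟩ ⟨h1', h2', b', h3', h4', h5'⟩
      refine ⟨add_mem h1 h1', eig_add h2 h2', b + b', add_mem h3 h3', eig_add h4 h4', ?_⟩
      have := hP.add h5 h5'
      convert this using 1
      noncomm_ring
    · rintro χ ψ a d ⟨h1, h2, b, h3, h4, h5⟩ hd hψ
      refine ⟨mul_mem hd h1, eig_mul hψ h2, d * b, mul_mem hd h3,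
        eig_cast (eig_mul hψ h4) (by abel), ?_⟩
      have := hP.left h5 (D.le hd)
      convert this using 1
      noncomm_ring
    · rintro χ ψ a d ⟨h1, h2, b, h3, h4, h5⟩ hd hψ
      refine ⟨mul_mem h1 hd, eig_mul h2 hψ, (ch ψ h)⁻¹ • (b * d - a * dl act X h d),
        Subalgebra.smul_mem _ (sub_mem (mul_mem h3 hd) (mul_mem h1 (D.del d hd))) _, ?_, ?_⟩
      · refine eig_smul (eig_sub (eig_cast (eig_mul h4 hψ) (by abel))
          (eig_cast (eig_mul h2 (dl_eig D.eX hψ)) (by abel))) _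
      · have := hP.smul (ch ψ h)⁻¹ (hP.right h5 (D.le hd))
        convert this using 1
        rw [sub_mul, mul_assoc a X d, X_mul_eq (act := act) X h d, hψ.eq, mul_add, smul_mul_assoc,
          mul_smul_comm, smul_sub, smul_sub, smul_add, smul_smul, inv_mul_cancel₀ (ch_ne _ _),
          one_smul]
        noncomm_ring
  obtain ⟨v, hv, θ, hJv⟩ := I.ideal J hJ χ w ⟨hw, hχ, e, he, heχ, hPw⟩ hw0
  obtain ⟨l0, hl0, rfl⟩ := Submonoid.exists_list_of_mem_closure hv
  have hex : ∃ n : ℕ, ∃ l : List R, l.length = n ∧ (∀ p ∈ l, p ∈ L) ∧ ∃ θ, J θ l.prod :=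
    ⟨_, l0, rfl, hl0, θ, hJv⟩
  obtain ⟨l, hln, hl, θ, h1, h2, c, h3, h4, h5⟩ := Nat.find_spec hex
  refine ⟨l, hl, θ, h2, c, h3, h4, h5, ?_⟩
  rintro p hp ⟨d, hd, rfl⟩
  obtain ⟨l', hl', hlen, t, ht, e1⟩ := list_extract I hl hp
  refine Nat.find_min hex (m := l'.length) (by omega) ⟨l', rfl, hl', ?_⟩
  have hpL := hl p hp
  obtain ⟨f, hf⟩ := I.hom p (I.LY hpL)
  have hp0 := I.ne p (I.LY hpL)
  have hl'A := (I.nrm (I.list hl')).1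
  refine ⟨θ - f, hl'A, ?_, t⁻¹ • d, Subalgebra.smul_mem _ hd _, ?_, ?_⟩
  · refine eig_cancel_left (b := p) ?_ hf hp0
    have : p * l'.prod = t⁻¹ • l.prod := by rw [e1, smul_smul, inv_mul_cancel₀ ht, one_smul]
    rw [this]; exact eig_smul h2 _
  · exact eig_smul (eig_cast (eig_cancel_left h4 hf hp0) (by abel)) _
  · have : P (t • (l'.prod * X) - d) := by
      refine hP.cancel (v := p) (Submonoid.subset_closure (I.LY hpL)) ?_ ?_
      · exact sub_mem (Subalgebra.smul_mem _ (mul_mem (D.le hl'A) D.XB) _) (D.le hd)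
      · convert h5 using 1
        rw [e1, mul_sub, mul_smul_comm, smul_mul_assoc, mul_assoc]
    have := hP.smul t⁻¹ this
    rwa [smul_sub, smul_smul, inv_mul_cancel₀ ht, one_smul] at this

/-- reduction modulo `P` after multiplication by powers of `u` -/
theorem red_mod [NoZeroDivisors R] (D : OreD act A B X h χX)
    {P : R → Prop} {Y : Set R} (hP : PI A B Y P) {u c : R} (hu : Nrm A u) (hc : c ∈ A)
    (hy : P (u * X - c)) :
    ∀ (n : ℕ) (f : R), f ∈ Fil A X (n + 1) → ∃ a ∈ A, P (u ^ n * f - a) := by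
  have P0 : P 0 := by simpa using hP.smul (0 : K) hy
  have key : ∀ n : ℕ, ∃ a ∈ A, P (u ^ n * X ^ n - a) := by
    intro n
    induction n with
    | zero => exact ⟨1, one_mem _, by simpa using P0⟩
    | succ n ih =>
      obtain ⟨a, ha, h1⟩ := ih
      obtain ⟨c', hc', e⟩ := (hu.pow n).2.2 c hc
      refine ⟨c' * a, mul_mem hc' ha, ?_⟩
      have h2 := hP.left (hP.right hy (pow_mem D.XB n)) (D.le (hu.pow n).1)
      have h3 := hP.add h2 (hP.left h1 (D.le hc'))
      convert h3 using 1
      have : c' * (u ^ n * X ^ n - a) = u ^ n * c * X ^ n - c' * a := by rw [e]; noncomm_ring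
      rw [this, pow_succ, pow_succ']
      noncomm_ring
  intro n
  induction n with
  | zero =>
    intro f hf
    refine ⟨f, mem_Fil_one.1 hf, by simpa using P0⟩
  | succ n ih =>
    intro f hf
    obtain ⟨g, hg, a, ha, rfl⟩ := mem_Fil_succ.1 hf
    obtain ⟨b, hb, h1⟩ := ih g hg
    obtain ⟨d, hd, h2⟩ := key (n + 1)
    obtain ⟨a', ha', e⟩ := (hu.pow (n + 1)).2.2 a ha
    refine ⟨u * b + a' * d, add_mem (mul_mem hu.1 hb) (mul_mem ha' hd), ?_⟩
    convert hP.add (hP.left h1 (D.le hu.1)) (hP.left h2 (D.le ha')) using 1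
    have : a' * (u ^ (n + 1) * X ^ (n + 1) - d) = u ^ (n + 1) * a * X ^ (n + 1) - a' * d := by
      rw [e]; noncomm_ring
    rw [this, pow_succ' u]
    noncomm_ring

theorem P_lead [NoZeroDivisors R] [Nontrivial R] (D : OreD act A B X h χX)
    (I : Invt act A Ys L) {P : R → Prop} {Y : Set R} (hP : PI A B Y P)
    {l : List R} (hl : ∀ p ∈ l, p ∈ L) {c : R} (hc : c ∈ A) (hy : P (l.prod * X - c))
    (hnd : ∀ p ∈ l, ¬ Dv A p c) {n : ℕ} {a f : R} (hf : P f) (hlead : HasLead A X (n + 1) a f) :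
    Dv A l.prod a := by
  set u := l.prod with hu_def
  have hucl := I.list hl
  have hu := I.nrm hucl
  have hu0 := I.clne hucl
  have hun0 : ∀ n : ℕ, u ^ n ≠ 0 := fun n => pow_ne_zero n hu0
  have hqp : ∀ (n : ℕ), ∀ p ∈ l, QCom K (u ^ n) p := fun n p hp =>
    I.qc.closure (I.LYc (pow_mem hucl n)) (Submonoid.subset_closure (I.LY (hl p hp)))
  have P0 : P 0 := by simpa using hP.smul (0 : K) hy
  have key : ∀ n : ℕ, ∃ a ∈ A, P (u ^ n * X ^ n - a) ∧ ∀ p ∈ l, ¬ Dv A p a := by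
    intro n
    induction n with
    | zero =>
      refine ⟨1, one_mem _, by simpa using P0, ?_⟩
      rintro p hp ⟨d, hd, e⟩
      exact hnd p hp ⟨d * c, mul_mem hd hc, by rw [← mul_assoc, ← e, one_mul]⟩
    | succ n ih =>
      obtain ⟨a, ha, h1, ha'⟩ := ih
      obtain ⟨c', hc', e⟩ := (hu.pow n).2.2 c hc
      refine ⟨c' * a, mul_mem hc' ha, ?_, ?_⟩
      · have h2 := hP.left (hP.right hy (pow_mem D.XB n)) (D.le (hu.pow n).1)
        have h3 := hP.add h2 (hP.left h1 (D.le hc'))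
        convert h3 using 1
        have : c' * (u ^ n * X ^ n - a) = u ^ n * c * X ^ n - c' * a := by rw [e]; noncomm_ring
        rw [this, pow_succ, pow_succ']
        noncomm_ring
      · intro p hp hdv
        rcases (I.prime p (hl p hp)).2.2.2.2.2 c' hc' a ha hdv with h3 | h3
        · exact hnd p hp (Dv_reflect (hu.pow n) (hun0 n) (hqp n p hp) e h3)
        · exact ha' p hp h3
  obtain ⟨cn, hcn, hPcn, hncn⟩ := key (n + 1)
  obtain ⟨b, hb, hPb⟩ := red_mod D hP hu hc hy n _ hlead.2
  obtain ⟨a', ha', e⟩ := (hu.pow (n + 1)).2.2 a hlead.1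
  have h0 : a' * cn + u * b = 0 := by
    refine hP.zero (add_mem (mul_mem ha' hcn) (mul_mem hu.1 hb)) ?_
    have h1 := hP.sub (hP.left hf (D.le (hu.pow (n + 1)).1))
      (hP.add (hP.left hPb (D.le hu.1)) (hP.left hPcn (D.le ha')))
    convert h1 using 1
    have : a' * (u ^ (n + 1) * X ^ (n + 1) - cn) = u ^ (n + 1) * a * X ^ (n + 1) - a' * cn := by
      rw [e]; noncomm_ring
    rw [this, pow_succ' u]
    noncomm_ring
  obtain ⟨d, hd, e1⟩ := Dv_list I hcn l hl hncn a' ha' ⟨-b, neg_mem hb, by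
    rw [mul_neg]; exact eq_neg_of_add_eq_zero_left h0⟩
  exact Dv_reflect (hu.pow (n + 1)) (hun0 _) (QCom.symm (by
    exact I.qc.closure (I.LYc hucl) (I.LYc (pow_mem hucl _)))) e ⟨d, hd, e1⟩

theorem P_eq [NoZeroDivisors R] [Nontrivial R] (D : OreD act A B X h χX)
    (I : Invt act A Ys L) {P : R → Prop} {Y : Set R} (hP : PI A B Y P)
    {l : List R} (hl : ∀ p ∈ l, p ∈ L) {θ : Fin r → ℤ} (hθ : IsEigenWith K act θ l.prod)
    {c : R} (hc : c ∈ A) (hy : P (l.prod * X - c))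
    (hnd : ∀ p ∈ l, ¬ Dv A p c) : ∀ (n : ℕ) (f : R), f ∈ Fil A X n → P f →
      ∃ b ∈ B, f = b * (l.prod * X - c) := by
  have hu := I.nrm (I.list hl)
  intro n
  induction n with
  | zero => intro f hf _; exact ⟨0, zero_mem _, by rw [mem_Fil_zero.1 hf, zero_mul]⟩
  | succ n ih =>
    intro f hf hPf
    rcases n with _ | n
    · exact ⟨0, zero_mem _, by rw [hP.zero (mem_Fil_one.1 hf) hPf, zero_mul]⟩
    obtain ⟨a, ha⟩ := hasLead_of_mem_succ hf
    obtain ⟨d, hd, e⟩ := P_lead D I hP hl hc hy hnd hPf ha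
    obtain ⟨d2, hd2, e2⟩ := hu.2.2 d hd
    have hy1 : HasLead A X 1 l.prod (l.prod * X - c) := by
      refine ⟨hu.1, ?_⟩
      rw [pow_one, mem_Fil_one]
      simpa using hc
    have hβ : (ch θ h) ^ n ≠ 0 := pow_ne_zero _ (ch_ne _ _)
    have hm : HasLead A X n (((ch θ h) ^ n)⁻¹ • d2) ((((ch θ h) ^ n)⁻¹ • d2) * X ^ n) :=
      ⟨Subalgebra.smul_mem _ hd2 _, by simp⟩
    have hprod := hm.mul D.hs D.hd hy1
    rw [act_iter_eig hθ, smul_mul_smul_comm, inv_mul_cancel₀ hβ, one_smul, ← e2, ← e] at hprod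
    have hmB := D.FilB hm.mem
    obtain ⟨b, hb, e3⟩ := ih _ (by
      have := sub_mem ha.2 hprod.2
      rwa [sub_sub_sub_cancel_right] at this) (hP.sub hPf (hP.left hy hmB))
    refine ⟨b + (((ch θ h) ^ n)⁻¹ • d2) * X ^ n, add_mem hb hmB, ?_⟩
    rw [add_mul, ← e3, sub_add_cancel]

end PrimeStep

section SD

variable {K : Type u} [Field K] {R : Type v} [Ring R] [Algebra K R] {r : ℕ}
  {act : Torus K r →* (R ≃ₐ[K] R)} {A B : Subalgebra K R} {X : R} {h : Torus K r}
  {χX : Fin r → ℤ} {Ys L : Set R}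

/-- Data obtained in a step with nonzero `δ`. -/
structure SD (act : Torus K r →* (R ≃ₐ[K] R)) (A B : Subalgebra K R) (X : R) (h : Torus K r)
    (χX : Fin r → ℤ) (Ys L : Set R) (p c : R) (χp : Fin r → ℤ) : Prop where
  pL : p ∈ L
  cA : c ∈ A
  ep : IsEigenWith K act χp p
  ec : IsEigenWith K act (χp + χX) c
  c0 : c ≠ 0
  nd : ¬ Dv A p c
  dc : dl act X h c = 0
  dp : dl act X h p = (ch χp h * (ch χX h - 1)) • c
  yX : (p * X - c) * X = (ch χp h)⁻¹ • (X * (p * X - c))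
  comm : ∀ a ∈ A, ∀ a' ∈ A, p * act h a = a' * p → (p * X - c) * a = a' * (p * X - c)
  exP : ∃ P, PI A B (Submonoid.closure Ys : Set R) P ∧ P (p * X - c) ∧
    ∀ f, P f → ∃ b ∈ B, f = b * (p * X - c)

theorem OreD.coeff (D : OreD act A B X h χX) {e0 e1 e2 : R} (h0 : e0 ∈ A) (h1 : e1 ∈ A)
    (h2 : e2 ∈ A) (e : e2 * X ^ 2 + e1 * X + e0 = 0) : e2 = 0 ∧ e1 = 0 ∧ e0 = 0 := by
  have f0 : e0 ∈ Fil A X 1 := mem_Fil_one.2 h0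
  have f1 : e1 * X + e0 ∈ Fil A X 2 := by
    have := mul_pow_mem_Fil X h1 1
    rw [pow_one] at this
    exact add_mem this (Fil_succ_le _ _ _ f0)
  have g2 : e2 = 0 := by
    refine D.uniq 2 e2 h2 ?_
    have : e2 * X ^ 2 = -(e1 * X + e0) := by
      rw [eq_neg_iff_add_eq_zero, ← add_assoc, e]
    rw [this]; exact neg_mem f1
  subst g2
  rw [zero_mul, zero_add] at e
  have g1 : e1 = 0 := by
    refine D.uniq 1 e1 h1 ?_
    rw [pow_one, eq_neg_of_add_eq_zero_left e]
    exact neg_mem f0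
  subst g1
  exact ⟨rfl, rfl, by simpa using e⟩

theorem SD_exists [NoZeroDivisors R] [Nontrivial R] (D : OreD act A B X h χX)
    (I : Invt act A Ys L) (hne : ∃ a ∈ A, dl act X h a ≠ 0) :
    ∃ p c χp, SD act A B X h χX Ys L p c χp := by
  obtain ⟨P, hP, w, hw, hw0, χ, hχ, e, he, heχ, hPw⟩ := P_exists D I
  obtain ⟨l, hl, θ, hθ, c, hc, hcθ, hy, hnd⟩ := exists_uc D I hP hw hw0 hχ he heχ hPw
  have hPeq := P_eq D I hP hl hθ hc hy hnd
  have hPB : ∀ f, P f → ∃ b ∈ B, f = b * (l.prod * X - c) := by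
    intro f hf
    obtain ⟨n, hn⟩ := D.fil f (hP.mem hf)
    exact hPeq n f hn hf
  have hucl := I.list hl
  have hu := I.nrm hucl
  have hu0 := I.clne hucl
  set u := l.prod with hu_def
  have comm : ∀ a ∈ A, ∀ a' ∈ A, u * act h a = a' * u → (u * X - c) * a = a' * (u * X - c) := by
    intro a ha a' ha' e1
    have e2 : (u * X - c) * a - a' * (u * X - c) = u * dl act X h a - c * a + a' * c := by
      rw [sub_mul, mul_assoc, X_mul_eq (act := act) X h a, mul_add, ← mul_assoc, e1]
      noncomm_ring
    have h1 : P ((u * X - c) * a - a' * (u * X - c)) :=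
      hP.sub (hP.right hy (D.le ha)) (hP.left hy (D.le ha'))
    rw [e2] at h1
    have := hP.zero (add_mem (sub_mem (mul_mem hu.1 (D.del a ha)) (mul_mem hc ha))
      (mul_mem ha' hc)) h1
    rw [this] at e2
    exact sub_eq_zero.1 e2
  have hc0 : c ≠ 0 := by
    rintro rfl
    rw [sub_zero] at hy
    have hX := hP.cancel (I.LYc hucl) D.XB hy
    obtain ⟨a, ha, hda⟩ := hne
    exact hda (hP.zero (D.del a ha) (hP.sub (hP.right hX (D.le ha))
      (hP.left hX (D.le (D.actA h a ha)))))
  have hy1 : HasLead A X 1 u (u * X - c) := by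
    refine ⟨hu.1, ?_⟩
    rw [pow_one, mem_Fil_one]
    simpa using hc
  -- the commutation with X
  obtain ⟨f, hf, ef⟩ := hPB _ (hP.right hy D.XB)
  have hf2 : f ∈ Fil A X 2 := by
    by_cases hf0 : f = 0
    · rw [hf0]; exact zero_mem _
    obtain ⟨n, hn⟩ := D.fil f hf
    obtain ⟨m, a, -, ha, ha0⟩ := exists_lead_of_mem hn hf0
    have h2 := (ha.mul D.hs D.hd hy1).degree_le D.uniq (mul_ne_zero ha0 (act_iter_ne h _ hu0))
      (m := 3) (by rw [← ef]; exact Fil_mul_X hy1.mem)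
    exact Fil_mono A X (by omega) ha.mem
  obtain ⟨b, hb, a, ha, rfl⟩ := mem_Fil_succ.1 hf2
  rw [mem_Fil_one] at hb
  rw [pow_one] at ef
  set β := ch θ h with hβ
  set lam := ch χX h with hlam
  have hβ0 : β ≠ 0 := ch_ne _ _
  have eXu := X_mul_eq (act := act) X h u
  rw [hθ.eq] at eXu
  have eXc := X_mul_eq (act := act) X h c
  rw [hcθ.eq, ch_add] at eXc
  have expand : (β • (a * u) - u) * X ^ 2 +
      (a * dl act X h u + b * u - (β * lam) • (a * c) + c) * X
        + (-(a * dl act X h c) - b * c) = 0 := by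
    have e1 : (b + a * X) * (u * X - c) = β • (a * u) * X ^ 2 +
        (a * dl act X h u + b * u - (β * lam) • (a * c)) * X + (-(a * dl act X h c) - b * c) := by
      have e2 : (b + a * X) * (u * X - c) =
        b * u * X - b * c + a * (X * u) * X - a * (X * c) := by noncomm_ring
      rw [e2, eXu, eXc]
      simp only [mul_add, add_mul, sub_mul, smul_mul_assoc, mul_smul_comm, pow_two, ← mul_assoc]
      abel
    have e3 : (u * X - c) * X = u * X ^ 2 - c * X := by rw [pow_two]; noncomm_ring
    rw [e3, e1] at ef
    rw [sub_mul, add_mul _ c X]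
    have := sub_eq_zero.2 ef.symm
    rw [← this]
    abel
  obtain ⟨g2, g1, g0⟩ := D.coeff
    (sub_mem (neg_mem (mul_mem ha (D.del c hc))) (mul_mem hb hc))
    (add_mem (sub_mem (add_mem (mul_mem ha (D.del u hu.1)) (mul_mem hb hu.1))
      (Subalgebra.smul_mem _ (mul_mem ha hc) _)) hc)
    (sub_mem (Subalgebra.smul_mem _ (mul_mem ha hu.1) _) hu.1) expand
  have ea : a = β⁻¹ • (1 : R) := by
    apply mul_right_cancel₀ hu0
    rw [smul_mul_assoc, one_mul]
    have := sub_eq_zero.1 g2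
    conv_rhs => rw [← this]
    rw [smul_smul, inv_mul_cancel₀ hβ0, one_smul]
  subst ea
  simp only [smul_mul_assoc, one_mul, smul_smul] at g1 g0
  have dcb : dl act X h c = (-(β • b)) * c := by
    have h1 : β⁻¹ • dl act X h c = -(b * c) := by
      rw [← neg_eq_iff_eq_neg]; exact sub_eq_zero.1 g0
    have h2 := congrArg (fun z => β • z) h1
    simp only [smul_smul, mul_inv_cancel₀ hβ0, one_smul] at h2
    rw [h2, neg_mul, smul_mul_assoc, smul_neg]
  have dc := D.N1 (neg_mem (Subalgebra.smul_mem _ hb β)) hc dcb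
  have b0 : b = 0 := by
    rw [dc] at g0
    simp only [smul_zero, neg_zero, zero_sub, neg_eq_zero] at g0
    exact (mul_eq_zero.1 g0).resolve_right hc0
  subst b0
  have du : dl act X h u = (β * (lam - 1)) • c := by
    have h1 : β • (β⁻¹ • dl act X h u + 0 * u - (β * lam * β⁻¹) • c + c) = 0 := by
      rw [g1, smul_zero]
    rw [zero_mul, add_zero, smul_add, smul_sub, smul_smul, smul_smul, mul_inv_cancel₀ hβ0,
      one_smul] at h1
    have h2 : β * (β * lam * β⁻¹) = β * lam := by field_simp
    rw [h2] at h1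
    rw [mul_sub, sub_smul, mul_one]
    rw [← sub_eq_zero, ← h1]; abel
  have yX : (u * X - c) * X = β⁻¹ • (X * (u * X - c)) := by
    rw [ef, zero_add, smul_mul_assoc, one_mul, smul_mul_assoc]
  have hlam1 : lam - 1 ≠ 0 := sub_ne_zero.2 (by simpa using D.lam 1 one_ne_zero)
  have hsc : β * (lam - 1) ≠ 0 := mul_ne_zero hβ0 hlam1
  have ec : c = (β * (lam - 1))⁻¹ • dl act X h u := by
    rw [du, smul_smul, inv_mul_cancel₀ hsc, one_smul]
  have du0 : dl act X h u ≠ 0 := by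
    rw [du]; exact smul_ne_zero hsc hc0
  -- the list is a singleton
  have hsing : ∃ p, l = [p] := by
    rcases l with _ | ⟨p, l'⟩
    · exact absurd (by rw [hu_def, List.prod_nil, dl_one]) du0
    rcases l' with _ | ⟨p2, l''⟩
    · exact ⟨p, rfl⟩
    exfalso
    have hpL := hl p (by simp)
    have hp2L := hl p2 (by simp)
    set b := (p2 :: l'').prod with hb_def
    have hbA : b ∈ A := (I.nrm (I.list (l := p2 :: l'') (fun q hq => hl q (by
      rcases List.mem_cons.1 hq with rfl | hq <;> simp [*])))).1
    have hl''A : l''.prod ∈ A := (I.nrm (I.list (l := l'') (fun q hq => hl q (by simp [hq])))).1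
    have hub : u = p * b := by rw [hu_def, List.prod_cons]
    have hpA := (I.prime p hpL).1
    have h1 : dl act X h p ≠ 0 := by
      intro h0
      obtain ⟨f, hf⟩ := I.hom p (I.LY hpL)
      refine hnd p (by simp) ?_
      rw [ec, hub, dl_mul, h0, zero_mul, add_zero, hf.eq, smul_mul_assoc, smul_smul]
      exact ⟨_, Subalgebra.smul_mem _ (D.del b hbA) _, (mul_smul_comm _ _ _).symm⟩
    have h2 : dl act X h b ≠ 0 := by
      intro h0
      refine hnd p2 (by simp) ?_
      obtain ⟨d, hd, ed⟩ := (I.prime p2 hp2L).2.2.2.1 _ (D.del p hpA)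
      rw [ec, hub, dl_mul, h0, mul_zero, zero_add, hb_def, List.prod_cons, ← mul_assoc, ed,
        mul_assoc, ← mul_smul_comm]
      exact ⟨_, Subalgebra.smul_mem _ (mul_mem hd hl''A) _, rfl⟩
    refine D.N2 hpA hbA h1 h2 ?_
    rw [← hub, du, dl_smul, dc, smul_zero]
  obtain ⟨p, rfl⟩ := hsing
  have hup : u = p := by rw [hu_def]; simp
  have hpL := hl p (by simp)
  have hpnd := hnd p (by simp)
  rw [← hup] at hpL hpnd
  exact ⟨u, c, θ, hpL, hc, hθ, hcθ, hc0, hpnd, dc, du, yX, comm,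
    P, hP, hy, hPB⟩

end SD

section YDsec

variable {K : Type u} [Field K] {R : Type v} [Ring R] [Algebra K R] {r : ℕ}
  {act : Torus K r →* (R ≃ₐ[K] R)} {A B : Subalgebra K R} {X : R} {h : Torus K r}
  {χX : Fin r → ℤ} {Ys L : Set R}

/-- Common data for both kinds of steps. -/
structure YD (act : Torus K r →* (R ≃ₐ[K] R)) (A B : Subalgebra K R) (X : R) (h : Torus K r)
    (χX : Fin r → ℤ) (L : Set R) (u c : R) (χu : Fin r → ℤ) : Prop where
  ucl : u ∈ Submonoid.closure L
  cA : c ∈ A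
  eu : IsEigenWith K act χu u
  ec : IsEigenWith K act (χu + χX) c
  yX : (u * X - c) * X = (ch χu h)⁻¹ • (X * (u * X - c))
  comm : ∀ a ∈ A, ∀ a' ∈ A, u * act h a = a' * u → (u * X - c) * a = a' * (u * X - c)
  exP : ∃ Y P, PI A B Y P ∧ (∀ n, u ^ n ∈ Y) ∧ P (u * X - c) ∧
    ∀ f, P f → ∃ b ∈ B, f = b * (u * X - c)

theorem SD.yd {p c : R} {χp : Fin r → ℤ} (S : SD act A B X h χX Ys L p c χp)
    (I : Invt act A Ys L) : YD act A B X h χX L p c χp := by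
  refine ⟨Submonoid.subset_closure S.pL, S.cA, S.ep, S.ec, S.yX, S.comm, ?_⟩
  obtain ⟨P, h1, h2, h3⟩ := S.exP
  exact ⟨_, P, h1, fun n => pow_mem (Submonoid.subset_closure (I.LY S.pL)) n, h2, h3⟩

theorem act_inv_mem (D : OreD act A B X h χX) {a : R} (ha : a ∈ A) :
    ∃ a' ∈ A, act h a' = a := by
  refine ⟨act h⁻¹ a, D.actA _ a ha, ?_⟩
  have : (act h * act h⁻¹) a = a := by rw [← map_mul, mul_inv_cancel, map_one]; rfl
  exact this

theorem X_normal_right (D : OreD act A B X h χX) (h0 : ∀ a ∈ A, dl act X h a = 0) :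
    ∀ b ∈ B, ∃ b' ∈ B, X * b = b' * X := by
  intro b hb
  have := D.adj hb
  induction this using Algebra.adjoin_induction with
  | mem x hx =>
    rcases hx with hx | rfl
    · exact ⟨act h x, D.le (D.actA h x hx), sub_eq_zero.1 (h0 x hx)⟩
    · exact ⟨x, D.XB, rfl⟩
  | algebraMap t => exact ⟨_, Subalgebra.algebraMap_mem _ t, (Algebra.commutes t X).symm⟩
  | add x y hx' hy' hx hy =>
    have hle : Algebra.adjoin K ((A : Set R) ∪ {X}) ≤ B := Algebra.adjoin_le (by
      rintro z (hz | rfl)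
      · exact D.le hz
      · exact D.XB)
    obtain ⟨x', h1, e1⟩ := hx (hle hx')
    obtain ⟨y', h2, e2⟩ := hy (hle hy')
    exact ⟨x' + y', add_mem h1 h2, by rw [mul_add, e1, e2, add_mul]⟩
  | mul x y hx' hy' hx hy =>
    have hle : Algebra.adjoin K ((A : Set R) ∪ {X}) ≤ B := Algebra.adjoin_le (by
      rintro z (hz | rfl)
      · exact D.le hz
      · exact D.XB)
    obtain ⟨x', h1, e1⟩ := hx (hle hx')
    obtain ⟨y', h2, e2⟩ := hy (hle hy')
    exact ⟨x' * y', mul_mem h1 h2, by rw [← mul_assoc, e1, mul_assoc, e2, mul_assoc]⟩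

theorem YD_zero [NoZeroDivisors R] [Nontrivial R] (D : OreD act A B X h χX)
    (h0 : ∀ a ∈ A, dl act X h a = 0) (L : Set R) : YD act A B X h χX L 1 0 0 := by
  refine ⟨one_mem _, zero_mem _, eig_one, eig_zero _, by simp [ch_zero], ?_, ?_⟩
  · intro a ha a' ha' e
    rw [one_mul, mul_one] at e
    subst e
    simpa using sub_eq_zero.1 (h0 a ha)
  · refine ⟨{1}, fun f => ∃ b ∈ B, f = b * X, ⟨?_, ?_, ?_, ?_, ?_, ?_⟩, by simp, ⟨1, one_mem _, by simp⟩,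
      by simp⟩
    · rintro f ⟨b, hb, rfl⟩; exact mul_mem hb D.XB
    · rintro f g ⟨b, hb, rfl⟩ ⟨b', hb', rfl⟩; exact ⟨b + b', add_mem hb hb', by rw [add_mul]⟩
    · rintro f b ⟨b', hb', rfl⟩ hb; exact ⟨b * b', mul_mem hb hb', by rw [mul_assoc]⟩
    · rintro f b ⟨b', hb', rfl⟩ hb
      obtain ⟨b2, hb2, e⟩ := X_normal_right D h0 b hb
      exact ⟨b' * b2, mul_mem hb' hb2, by rw [mul_assoc, e, mul_assoc]⟩
    · rintro a ha ⟨b, hb, rfl⟩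
      by_contra hne
      have hb0 : b ≠ 0 := by rintro rfl; exact hne (zero_mul _)
      obtain ⟨n, hn⟩ := D.fil b hb
      obtain ⟨m, e, -, he, he0⟩ := exists_lead_of_mem hn hb0
      have h1 : HasLead A X 1 1 X := ⟨one_mem _, by simp⟩
      have := (he.mul D.hs D.hd h1).degree_le D.uniq
        (mul_ne_zero he0 (act_iter_ne h _ one_ne_zero)) (mem_Fil_one.2 ha)
      omega
    · rintro v f rfl hf hv
      simpa using hv

variable {u c : R} {χu : Fin r → ℤ}

theorem YD.lead (T : YD act A B X h χX L u c χu) (I : Invt act A Ys L) :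
    HasLead A X 1 u (u * X - c) := by
  refine ⟨(I.nrm T.ucl).1, ?_⟩
  rw [pow_one, mem_Fil_one]
  simpa using T.cA

theorem YD.yB (T : YD act A B X h χX L u c χu) (D : OreD act A B X h χX) (I : Invt act A Ys L) :
    u * X - c ∈ B := D.FilB (T.lead I).mem

theorem YD.eig (T : YD act A B X h χX L u c χu) (D : OreD act A B X h χX) :
    IsEigenWith K act (χu + χX) (u * X - c) := eig_sub (eig_mul T.eu D.eX) T.ec

theorem lead_B [NoZeroDivisors R] (D : OreD act A B X h χX) {b : R} (hb : b ∈ B) (h0 : b ≠ 0) :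
    ∃ m a, HasLead A X m a b ∧ a ≠ 0 := by
  obtain ⟨n, hn⟩ := D.fil b hb
  obtain ⟨m, a, -, h1, h2⟩ := exists_lead_of_mem hn h0
  exact ⟨m, a, h1, h2⟩

theorem YD.ne [NoZeroDivisors R] [Nontrivial R] (T : YD act A B X h χX L u c χu)
    (D : OreD act A B X h χX) (I : Invt act A Ys L) : u * X - c ≠ 0 :=
  (T.lead I).ne_zero D.uniq (I.clne T.ucl)

theorem YD.deg [NoZeroDivisors R] [Nontrivial R] (T : YD act A B X h χX L u c χu)
    (D : OreD act A B X h χX) (I : Invt act A Ys L) {b : R} (hb : b ∈ B)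
    (hA : (u * X - c) * b ∈ A) : b = 0 := by
  by_contra h0
  obtain ⟨m, a, h1, h2⟩ := lead_B D hb h0
  have := ((T.lead I).mul D.hs D.hd h1).degree_le D.uniq
    (mul_ne_zero (I.clne T.ucl) (act_iter_ne h _ h2)) (mem_Fil_one.2 hA)
  omega

theorem YD.psi [NoZeroDivisors R] [Nontrivial R] (T : YD act A B X h χX L u c χu)
    (D : OreD act A B X h χX) (I : Invt act A Ys L) {a : R} (ha : a ∈ A) :
    ∃ a' ∈ A, u * act h a' = a * u ∧ (u * X - c) * a' = a * (u * X - c) := by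
  obtain ⟨b, hb, e⟩ := (I.nrm T.ucl).2.1 a ha
  obtain ⟨a', ha', e'⟩ := act_inv_mem D hb
  have : u * act h a' = a * u := by rw [e', e]
  exact ⟨a', ha', this, T.comm a' ha' a ha this⟩

theorem YD.normal [NoZeroDivisors R] [Nontrivial R] (T : YD act A B X h χX L u c χu)
    (D : OreD act A B X h χX) (I : Invt act A Ys L) :
    ∀ b ∈ B, ∃ b' ∈ B, b * (u * X - c) = (u * X - c) * b' := by
  intro b hb
  have := D.adj hb
  clear hb
  induction this using Algebra.adjoin_induction with
  | mem x hx =>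
    rcases hx with hx | rfl
    · obtain ⟨a', ha', -, e⟩ := T.psi D I hx
      exact ⟨a', D.le ha', e.symm⟩
    · refine ⟨ch χu h • x, Subalgebra.smul_mem _ D.XB _, ?_⟩
      rw [mul_smul_comm, T.yX, smul_smul, mul_inv_cancel₀ (ch_ne _ _), one_smul]
  | algebraMap t => exact ⟨_, Subalgebra.algebraMap_mem _ t, (Algebra.commutes t _)⟩
  | add x y _ _ hx hy =>
    obtain ⟨x', h1, e1⟩ := hx
    obtain ⟨y', h2, e2⟩ := hy
    exact ⟨x' + y', add_mem h1 h2, by rw [add_mul, e1, e2, mul_add]⟩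
  | mul x y _ _ hx hy =>
    obtain ⟨x', h1, e1⟩ := hx
    obtain ⟨y', h2, e2⟩ := hy
    exact ⟨x' * y', mul_mem h1 h2, by rw [mul_assoc, e2, ← mul_assoc, e1, mul_assoc]⟩

theorem YD.prime [NoZeroDivisors R] [Nontrivial R] (T : YD act A B X h χX L u c χu)
    (D : OreD act A B X h χX) (I : Invt act A Ys L) : IsPrimeIn K B (u * X - c) := by
  have hyB := T.yB D I
  have hnorm := T.normal D I
  obtain ⟨Y, P, hP, hY, hy, hPB⟩ := T.exP
  have hu := I.nrm T.ucl
  have hu0 := I.clne T.ucl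
  refine ⟨hyB, T.ne D I, ?_, hnorm, ?_, ?_⟩
  · rintro ⟨v, hv, e, -⟩
    have := T.deg D I hv (by rw [e]; exact one_mem _)
    rw [this, mul_zero] at e
    exact zero_ne_one e
  · intro b hb
    exact hPB _ (hP.right hy hb)
  · rintro f hf g hg ⟨d, hd, e⟩
    have hfg : P (f * g) := by rw [e]; exact hP.right hy hd
    have fin : ∀ f, P f → ∃ d ∈ B, f = (u * X - c) * d := by
      intro f hf
      obtain ⟨b, hb, rfl⟩ := hPB f hf
      exact hnorm b hb
    have red : ∀ f ∈ B, ∃ n, ∃ a ∈ A, P (u ^ n * f - a) := by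
      intro f hf
      obtain ⟨n, hn⟩ := D.fil f hf
      exact ⟨n, red_mod D hP hu T.cA hy n f (Fil_succ_le _ _ _ hn)⟩
    obtain ⟨m, a, ha, h1⟩ := red f hf
    obtain ⟨n, b, hb, h2⟩ := red g hg
    obtain ⟨a', ha', e'⟩ := (hu.pow n).2.2 a ha
    have h3 : P (a * g) := by
      have := hP.sub (hP.left hfg (D.le (hu.pow m).1)) (hP.right h1 hg)
      convert this using 1
      noncomm_ring
    have h4 : P (a' * b) := by
      have := hP.sub (hP.left h3 (D.le (hu.pow n).1)) (hP.left h2 (D.le ha'))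
      convert this using 1
      rw [mul_sub, ← mul_assoc, e', mul_assoc]
      abel
    have Pf0 : ∀ {n : ℕ} {f : R}, f ∈ B → P (u ^ n * f - 0) → P f := fun hf hh =>
      hP.cancel (hY _) hf (by simpa using hh)
    rcases mul_eq_zero.1 (hP.zero (mul_mem ha' hb) h4) with h5 | h5
    · left
      rw [h5, zero_mul] at e'
      have := (mul_eq_zero.1 e').resolve_left (pow_ne_zero n hu0)
      subst this
      exact fin _ (Pf0 hf h1)
    · right
      subst h5
      exact fin _ (Pf0 hg h2)

theorem YD.qcom [NoZeroDivisors R] [Nontrivial R] (T : YD act A B X h χX L u c χu)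
    (D : OreD act A B X h χX) (I : Invt act A Ys L) {z : R} (hz : z ∈ Ys) :
    QCom K (u * X - c) z := by
  obtain ⟨f, hf⟩ := I.hom z hz
  obtain ⟨q, hq, e⟩ := I.qc.closure (I.LYc T.ucl) (Submonoid.subset_closure hz)
  refine ⟨ch f h * q, mul_ne_zero (ch_ne _ _) hq, ?_⟩
  rw [← smul_mul_assoc]
  refine T.comm z (I.YA hz) _ (Subalgebra.smul_mem _ (I.YA hz) _) ?_
  rw [hf.eq, mul_smul_comm, e, smul_smul, smul_mul_assoc]

theorem YD.ore [NoZeroDivisors R] [Nontrivial R] (T : YD act A B X h χX L u c χu)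
    (D : OreD act A B X h χX) (I : Invt act A Ys L) :
    ∀ b ∈ B, ∃ w ∈ Submonoid.closure (insert (u * X - c) Ys),
      w * b ∈ Algebra.adjoin K (insert (u * X - c) Ys) := by
  intro b hb
  have qcZ : QC K (insert (u * X - c) Ys) := I.qc.insert (fun z hz => T.qcom D I hz)
  have hYZ : Submonoid.closure Ys ≤ Submonoid.closure (insert (u * X - c) Ys) :=
    Submonoid.closure_mono (Set.subset_insert _ _)
  have hYZ' : Algebra.adjoin K Ys ≤ Algebra.adjoin K (insert (u * X - c) Ys) :=
    Algebra.adjoin_mono (Set.subset_insert _ _)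
  refine ore_adjoin qcZ le_rfl (S := (A : Set R) ∪ {X}) ?_ (D.adj hb)
  rintro a (ha | rfl)
  · obtain ⟨w, h1, h2⟩ := I.ore a ha
    exact ⟨w, hYZ h1, hYZ' h2⟩
  · obtain ⟨w, h1, h2⟩ := I.ore c T.cA
    refine ⟨w * u, mul_mem (hYZ h1) (hYZ (I.LYc T.ucl)), ?_⟩
    have : w * u * a = w * (u * a - c) + w * c := by noncomm_ring
    rw [this]
    exact add_mem (mul_mem (hYZ' (closure_le_adjoin h1)) (Algebra.subset_adjoin (Or.inl rfl)))
      (hYZ' h2)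

/-! ### primes of `A` killed by `δ` -/

theorem Dv_lead [NoZeroDivisors R] (D : OreD act A B X h χX) {q : R} (hq : q ∈ A) (hq0 : q ≠ 0)
    {k : ℕ} {e d : R} (hd : d ∈ B) (hk : HasLead A X k e (q * d)) : Dv A q e := by
  by_cases hd0 : d = 0
  · subst hd0
    rw [mul_zero] at hk
    exact ⟨0, zero_mem _, by rw [hk.eq_zero D.uniq (zero_mem _), mul_zero]⟩
  obtain ⟨m, a, h1, h2⟩ := lead_B D hd hd0
  have h3 : HasLead A X m (q * a) (q * d) := by
    refine ⟨mul_mem hq h1.1, ?_⟩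
    have := Fil_left hq h1.2
    rwa [mul_sub, ← mul_assoc] at this
  have h4 := h3.degree_le D.uniq (mul_ne_zero hq0 h2) hk.mem
  rcases Nat.lt_succ_iff_lt_or_eq.1 h4 with h5 | h5
  · exact ⟨0, zero_mem _, by
      rw [hk.eq_zero D.uniq (Fil_mono A X (by omega) h3.mem), mul_zero]⟩
  · subst h5
    exact ⟨a, h1.1, hk.unique D.uniq h3⟩

theorem prime_ext [NoZeroDivisors R] [Nontrivial R] (D : OreD act A B X h χX) {q : R}
    (hq : IsPrimeIn K A q) {χq : Fin r → ℤ} (eq : IsEigenWith K act χq q)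
    (hd0 : dl act X h q = 0) : IsPrimeIn K B q := by
  have hXq : X * q = ch χq h • (q * X) := by
    have := X_mul_eq (act := act) X h q
    rw [hd0, add_zero, eq.eq, smul_mul_assoc] at this
    exact this
  have hb0 := ch_ne χq h
  have n1 : ∀ b ∈ B, ∃ b' ∈ B, b * q = q * b' := by
    intro b hb
    have := D.adj hb
    clear hb
    induction this using Algebra.adjoin_induction with
    | mem x hx =>
      rcases hx with hx | rfl
      · obtain ⟨a', ha', e⟩ := hq.2.2.2.1 x hx
        exact ⟨a', D.le ha', e⟩
      · refine ⟨ch χq h • x, Subalgebra.smul_mem _ D.XB _, ?_⟩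
        rw [mul_smul_comm, hXq]
    | algebraMap t => exact ⟨_, Subalgebra.algebraMap_mem _ t, (Algebra.commutes t _)⟩
    | add x y _ _ hx hy =>
      obtain ⟨x', h1, e1⟩ := hx
      obtain ⟨y', h2, e2⟩ := hy
      exact ⟨x' + y', add_mem h1 h2, by rw [add_mul, e1, e2, mul_add]⟩
    | mul x y _ _ hx hy =>
      obtain ⟨x', h1, e1⟩ := hx
      obtain ⟨y', h2, e2⟩ := hy
      exact ⟨x' * y', mul_mem h1 h2, by rw [mul_assoc, e2, ← mul_assoc, e1, mul_assoc]⟩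
  have n2 : ∀ b ∈ B, ∃ b' ∈ B, q * b = b' * q := by
    intro b hb
    have := D.adj hb
    clear hb
    induction this using Algebra.adjoin_induction with
    | mem x hx =>
      rcases hx with hx | rfl
      · obtain ⟨a', ha', e⟩ := hq.2.2.2.2.1 x hx
        exact ⟨a', D.le ha', e⟩
      · refine ⟨(ch χq h)⁻¹ • x, Subalgebra.smul_mem _ D.XB _, ?_⟩
        rw [smul_mul_assoc, hXq, smul_smul, inv_mul_cancel₀ hb0, one_smul]
    | algebraMap t => exact ⟨_, Subalgebra.algebraMap_mem _ t, (Algebra.commutes t _).symm⟩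
    | add x y _ _ hx hy =>
      obtain ⟨x', h1, e1⟩ := hx
      obtain ⟨y', h2, e2⟩ := hy
      exact ⟨x' + y', add_mem h1 h2, by rw [mul_add, e1, e2, add_mul]⟩
    | mul x y _ _ hx hy =>
      obtain ⟨x', h1, e1⟩ := hx
      obtain ⟨y', h2, e2⟩ := hy
      exact ⟨x' * y', mul_mem h1 h2, by rw [← mul_assoc, e1, mul_assoc, e2, mul_assoc]⟩
  refine ⟨D.le hq.1, hq.2.1, ?_, n1, n2, ?_⟩
  · rintro ⟨v, hv, e1, e2⟩
    have h1 : HasLead A X 0 1 (q * v) := ⟨one_mem _, by simp [e1]⟩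
    obtain ⟨d, hd, e⟩ := Dv_lead D hq.1 hq.2.1 hv h1
    refine hq.2.2.1 ⟨d, hd, e.symm, ?_⟩
    apply mul_left_cancel₀ hq.2.1
    rw [← mul_assoc, ← e, one_mul, mul_one]
  · have key : ∀ N n m : ℕ, n + m ≤ N → ∀ f ∈ Fil A X n, ∀ g ∈ Fil A X m,
        (∃ d ∈ B, f * g = q * d) → (∃ d ∈ B, f = q * d) ∨ (∃ d ∈ B, g = q * d) := by
      intro N
      induction N with
      | zero =>
        intro n m hnm f hf g hg _
        obtain rfl : n = 0 := by omega
        exact Or.inl ⟨0, zero_mem _, by rw [mem_Fil_zero.1 hf, mul_zero]⟩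
      | succ N ih =>
        intro n m hnm f hf g hg hd
        rcases n with _ | n
        · exact Or.inl ⟨0, zero_mem _, by rw [mem_Fil_zero.1 hf, mul_zero]⟩
        rcases m with _ | m
        · exact Or.inr ⟨0, zero_mem _, by rw [mem_Fil_zero.1 hg, mul_zero]⟩
        obtain ⟨d, hd, e⟩ := hd
        obtain ⟨a, ha⟩ := hasLead_of_mem_succ hf
        obtain ⟨b, hb⟩ := hasLead_of_mem_succ hg
        have h1 := ha.mul D.hs D.hd hb
        rw [e] at h1
        have XnB : ∀ n, X ^ n ∈ B := fun n => pow_mem D.XB n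
        have hgB := D.FilB hg
        have hfB := D.FilB hf
        rcases hq.2.2.2.2.2 a ha.1 _ (iter_mem D.hs n hb.1) (Dv_lead D hq.1 hq.2.1 hd h1) with
          ⟨a', ha', rfl⟩ | ⟨b', hb', e'⟩
        · rcases ih n (m + 1) (by omega) _ ha.2 g hg ⟨d - a' * X ^ n * g, sub_mem hd
            (mul_mem (mul_mem (D.le ha') (XnB n)) hgB), by
              rw [sub_mul, e]; noncomm_ring⟩ with ⟨d', hd', e2⟩ | h2
          · left
            refine ⟨d' + a' * X ^ n, add_mem hd' (mul_mem (D.le ha') (XnB n)), ?_⟩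
            rw [mul_add, ← e2]; noncomm_ring
          · exact Or.inr h2
        · have hb2 : ∃ b2 ∈ A, b = q * b2 := by
            clear ih hnm h1
            obtain ⟨b3, hb3, e3⟩ : ∃ b3 ∈ A, (act h)^[n] b3 = b' := by
              clear e' hf ha
              induction n generalizing b' with
              | zero => exact ⟨b', hb', rfl⟩
              | succ n ih2 =>
                obtain ⟨b4, hb4, rfl⟩ := act_inv_mem D hb'
                obtain ⟨b5, hb5, rfl⟩ := ih2 b4 hb4
                exact ⟨b5, hb5, Function.iterate_succ_apply' _ _ _⟩
            refine ⟨(ch χq h ^ n)⁻¹ • b3, Subalgebra.smul_mem _ hb3 _, ?_⟩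
            have hinj : Function.Injective ((act h)^[n]) := (act h).injective.iterate n
            apply hinj
            have hmulit : ∀ x y : R, (act h)^[n] (x * y) = (act h)^[n] x * (act h)^[n] y := by
              intro x y
              exact Function.Semiconj₂.iterate (f := act h) (op := (· * ·)) (fun x y => map_mul _ x y) n x y
            rw [e', hmulit, act_iter_smul, e3, act_iter_eig eq, smul_mul_smul_comm,
              mul_inv_cancel₀ (pow_ne_zero _ hb0), one_smul]
          obtain ⟨b2, hb2, rfl⟩ := hb2
          obtain ⟨f', hf', ef⟩ := n1 f hfB
          rcases ih (n + 1) m (by omega) f hf _ hb.2 ⟨d - f' * (b2 * X ^ m), sub_mem hd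
            (mul_mem hf' (mul_mem (D.le hb2) (XnB m))), by
              rw [mul_sub, e, mul_sub, ← mul_assoc q, ← ef]; noncomm_ring⟩ with h2 | ⟨d', hd', e2⟩
          · exact Or.inl h2
          · right
            refine ⟨d' + b2 * X ^ m, add_mem hd' (mul_mem (D.le hb2) (XnB m)), ?_⟩
            rw [mul_add, ← e2]; noncomm_ring
    intro f hf g hg hd
    obtain ⟨n, hn⟩ := D.fil f hf
    obtain ⟨m, hm⟩ := D.fil g hg
    exact key _ n m le_rfl f hn g hm hd

theorem unit_ext [NoZeroDivisors R] [Nontrivial R] (D : OreD act A B X h χX)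
    (I : Invt act A Ys L) {a b : R} (ha : a ∈ B) (hb : b ∈ B) (e : a * b = 1) :
    ∃ t : K, a = algebraMap K R t := by
  have ha0 : a ≠ 0 := by rintro rfl; simp at e
  have hb0 : b ≠ 0 := by rintro rfl; simp at e
  obtain ⟨m, a1, h1, h2⟩ := lead_B D ha ha0
  obtain ⟨n, b1, h3, h4⟩ := lead_B D hb hb0
  have := (h1.mul D.hs D.hd h3).degree_le D.uniq (mul_ne_zero h2 (act_iter_ne h _ h4)) (m := 1)
    (by rw [e, mem_Fil_one]; exact one_mem _)
  obtain ⟨rfl, rfl⟩ : m = 0 ∧ n = 0 := by omega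
  exact I.unit a (mem_Fil_one.1 h1.mem) b (mem_Fil_one.1 h3.mem) e

theorem step_gen [NoZeroDivisors R] [Nontrivial R] (D : OreD act A B X h χX)
    (I : Invt act A Ys L) (T : YD act A B X h χX L u c χu) {L' : Set R} (hL' : L' ⊆ L)
    (hd : ∀ q ∈ L', dl act X h q = 0) (hnu : ∀ q ∈ L', ¬ Dv A q u)
    (hid : ∀ J, GIdeal act B J → ∀ χ a, J χ a → a ≠ 0 →
      ∃ v ∈ Submonoid.closure (insert (u * X - c) L'), ∃ θ, J θ v) :
    Invt act B (insert (u * X - c) Ys) (insert (u * X - c) L') where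
  fin := I.fin.insert _
  LY := Set.insert_subset_insert (hL'.trans I.LY)
  YA := Set.insert_subset (T.yB D I) (fun z hz => D.le (I.YA hz))
  ne := by
    rintro z (rfl | hz)
    · exact T.ne D I
    · exact I.ne z hz
  hom := by
    rintro z (rfl | hz)
    · exact ⟨_, T.eig D⟩
    · exact I.hom z hz
  qc := I.qc.insert (fun z hz => T.qcom D I hz)
  ore := T.ore D I
  prime := by
    rintro z (rfl | hz)
    · exact T.prime D I
    · obtain ⟨f, hf⟩ := I.hom z (I.LY (hL' hz))
      exact prime_ext D (I.prime z (hL' hz)) hf (hd z hz)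
  nonassoc := by
    rintro q hq q' hq' ⟨d, hdB, e⟩
    rcases hq' with rfl | hq'
    · rcases hq with rfl | hq
      · rfl
      · exfalso
        have := T.deg D I hdB (by rw [← e]; exact I.YA (I.LY (hL' hq)))
        rw [this, mul_zero] at e
        exact I.ne q (I.LY (hL' hq)) e
    · have hp' := I.prime q' (hL' hq')
      rcases hq with rfl | hq
      · have h1 := T.lead I
        rw [e] at h1
        exact absurd (Dv_lead D hp'.1 hp'.2.1 hdB h1) (hnu q' hq')
      · refine I.nonassoc q (hL' hq) q' (hL' hq') ?_
        have h1 : HasLead A X 0 q q := ⟨I.YA (I.LY (hL' hq)), by simp⟩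
        nth_rewrite 2 [e] at h1
        exact Dv_lead D hp'.1 hp'.2.1 hdB h1
  ideal := hid
  unit := fun a ha b hb e => unit_ext D I ha hb e

end YDsec

section IdealProp

variable {K : Type u} [Field K] {R : Type v} [Ring R] [Algebra K R] {r : ℕ}
  {act : Torus K r →* (R ≃ₐ[K] R)} {A B : Subalgebra K R} {X : R} {h : Torus K r}
  {χX : Fin r → ℤ} {Ys L : Set R} {u c : R} {χu : Fin r → ℤ}

theorem pow_scal {y a : R} {s : K} (e : y * a = s • (a * y)) (n : ℕ) :
    y ^ n * a = s ^ n • (a * y ^ n) := by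
  induction n with
  | zero => simp
  | succ n ih =>
    rw [pow_succ, mul_assoc, e, mul_smul_comm, ← mul_assoc, ih, smul_mul_assoc, smul_smul,
      ← pow_succ', mul_assoc, ← pow_succ]

theorem YD.exS [NoZeroDivisors R] [Nontrivial R] (T : YD act A B X h χX L u c χu)
    (I : Invt act A Ys L) (hsA : ∀ a ∈ A, act h a ∈ A) :
    ∃ s : R → R, (∀ a ∈ A, s a ∈ A) ∧ ∀ a ∈ A, (u * X - c) * a = s a * (u * X - c) := by
  have : ∀ a : R, ∃ b : R, a ∈ A → (b ∈ A ∧ (u * X - c) * a = b * (u * X - c)) := by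
    intro a
    by_cases ha : a ∈ A
    · obtain ⟨b, hb, e⟩ := (I.nrm T.ucl).2.2 _ (hsA a ha)
      exact ⟨b, fun _ => ⟨hb, T.comm a ha b hb e⟩⟩
    · exact ⟨0, fun h => absurd h ha⟩
  choose s hs using this
  exact ⟨s, fun a ha => (hs a ha).1, fun a ha => (hs a ha).2⟩

theorem YD.powlead [NoZeroDivisors R] [Nontrivial R] (T : YD act A B X h χX L u c χu)
    (D : OreD act A B X h χX) (I : Invt act A Ys L) (n : ℕ) :
    ∃ w, w ≠ 0 ∧ HasLead A X n w ((u * X - c) ^ n) := by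
  induction n with
  | zero => exact ⟨1, one_ne_zero, one_mem _, by simp⟩
  | succ n ih =>
    obtain ⟨w, hw, hl⟩ := ih
    refine ⟨_, mul_ne_zero hw (act_iter_ne (act := act) h n (I.clne T.ucl)), ?_⟩
    rw [pow_succ]
    exact hl.mul D.hs D.hd (T.lead I)

theorem YD.FilyX [NoZeroDivisors R] [Nontrivial R] (T : YD act A B X h χX L u c χu)
    (D : OreD act A B X h χX) (I : Invt act A Ys L) {n : ℕ} {f : R}
    (hf : f ∈ Fil A (u * X - c) n) : f ∈ Fil A X n := by
  induction n generalizing f with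
  | zero => simpa [mem_Fil_zero] using hf
  | succ n ih =>
    obtain ⟨g, hg, a, ha, rfl⟩ := mem_Fil_succ.1 hf
    obtain ⟨w, hw, hl⟩ := T.powlead D I n
    exact add_mem (Fil_succ_le _ _ _ (ih hg)) (Fil_left ha hl.mem)

theorem YD.FilU [NoZeroDivisors R] [Nontrivial R] (T : YD act A B X h χX L u c χu)
    (D : OreD act A B X h χX) (I : Invt act A Ys L) : FilU A (u * X - c) := by
  intro n a ha hf
  obtain ⟨w, hw, hl⟩ := T.powlead D I n
  have h1 := T.FilyX D I hf
  have h2 : HasLead A X n (a * w) (a * (u * X - c) ^ n) := by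
    refine ⟨mul_mem ha hl.1, ?_⟩
    have := Fil_left ha hl.2
    rwa [mul_sub, ← mul_assoc] at this
  exact (mul_eq_zero.1 (h2.eq_zero D.uniq h1)).resolve_right hw

theorem YD.uFX [NoZeroDivisors R] [Nontrivial R] (T : YD act A B X h χX L u c χu)
    (I : Invt act A Ys L) {n : ℕ} {f : R}
    (hf : f ∈ Fil A (u * X - c) n) : u * f * X ∈ Fil A (u * X - c) (n + 1) := by
  induction n generalizing f with
  | zero => rw [mem_Fil_zero] at hf; simp [hf]
  | succ n ih =>
    obtain ⟨g, hg, a, ha, rfl⟩ := mem_Fil_succ.1 hf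
    obtain ⟨a', ha', e⟩ := (I.nrm T.ucl).2.2 a ha
    set y := u * X - c with hy
    have e1 := pow_scal (y := y) (a := X) T.yX n
    have e2 : u * (g + a * y ^ n) * X
        = u * g * X + ((ch χu h)⁻¹ ^ n) • (a' * y ^ (n + 1) + a' * c * y ^ n) := by
      have e3 : u * (a * y ^ n) * X = ((ch χu h)⁻¹ ^ n) • (a' * (u * X) * y ^ n) := by
        rw [← mul_assoc u, e, mul_assoc, e1, mul_smul_comm]
        noncomm_ring
      have e4 : u * X = y + c := by rw [hy]; abel
      rw [mul_add, add_mul, e3, e4, pow_succ']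
      noncomm_ring
    rw [e2]
    refine add_mem (Fil_succ_le _ _ _ (ih hg)) (Submodule.smul_mem _ _ (add_mem
      (mul_pow_mem_Fil _ ha' _) (Fil_succ_le _ _ _ (mul_pow_mem_Fil _ (mul_mem ha' T.cA) _))))

theorem YD.uX [NoZeroDivisors R] [Nontrivial R] (T : YD act A B X h χX L u c χu)
    (I : Invt act A Ys L) (n : ℕ) : u ^ n * X ^ n ∈ Fil A (u * X - c) (n + 1) := by
  induction n with
  | zero => simpa using mem_Fil_one.2 (one_mem A)
  | succ n ih =>
    have := T.uFX I ih
    rwa [← mul_assoc, ← pow_succ', mul_assoc, ← pow_succ] at this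

theorem YD.uFil [NoZeroDivisors R] [Nontrivial R] (T : YD act A B X h χX L u c χu)
    (I : Invt act A Ys L) {n : ℕ} {f : R}
    (hf : f ∈ Fil A X n) : u ^ n * f ∈ Fil A (u * X - c) n := by
  induction n generalizing f with
  | zero => rw [mem_Fil_zero] at hf; simp [hf]
  | succ n ih =>
    obtain ⟨g, hg, a, ha, rfl⟩ := mem_Fil_succ.1 hf
    obtain ⟨a', ha', e⟩ := ((I.nrm T.ucl).pow n).2.2 a ha
    have hu := (I.nrm T.ucl).1
    have e2 : u ^ (n + 1) * (g + a * X ^ n) = u * (u ^ n * g) + u * a' * (u ^ n * X ^ n) := by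
      rw [pow_succ', mul_add, mul_assoc, mul_assoc, ← mul_assoc (u ^ n) a, e]
      noncomm_ring
    rw [e2]
    exact add_mem (Fil_left hu (Fil_succ_le _ _ _ (ih hg))) (Fil_left (mul_mem hu ha') (T.uX I n))

theorem YD.FilAct (T : YD act A B X h χX L u c χu)
    (D : OreD act A B X h χX) (ξ : Torus K r) {n : ℕ} {f : R}
    (hf : f ∈ Fil A (u * X - c) n) : act ξ f ∈ Fil A (u * X - c) n := by
  induction n generalizing f with
  | zero => rw [mem_Fil_zero] at hf; simp [hf]
  | succ n ih =>
    obtain ⟨g, hg, a, ha, rfl⟩ := mem_Fil_succ.1 hf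
    rw [map_add, map_mul, (eig_pow (T.eig D) n).eq, mul_smul_comm]
    exact add_mem (Fil_succ_le _ _ _ (ih hg)) (Submodule.smul_mem _ _ (mul_pow_mem_Fil _
      (D.actA ξ a ha) _))

/-- leading coefficients of homogeneous elements are homogeneous -/
theorem YD.leadEig [NoZeroDivisors R] [Nontrivial R] (T : YD act A B X h χX L u c χu)
    (D : OreD act A B X h χX) (I : Invt act A Ys L) {n : ℕ} {a f : R} {χ : Fin r → ℤ}
    (hl : HasLead A (u * X - c) n a f) (hf : IsEigenWith K act χ f) :
    IsEigenWith K act (χ - n • (χu + χX)) a := by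
  refine IsEigenWith.mk' fun ξ => ?_
  have h1 := T.FilAct D ξ hl.2
  have hy := (eig_pow (T.eig D) n).eq ξ
  rw [map_sub, map_mul, hy, hf.eq, mul_smul_comm, ← smul_mul_assoc] at h1
  have h2 : HasLead A (u * X - c) n (ch (n • (χu + χX)) ξ • act ξ a) (ch χ ξ • f) :=
    ⟨Subalgebra.smul_mem _ (D.actA ξ a hl.1) _, h1⟩
  have h3 : HasLead A (u * X - c) n (ch χ ξ • a) (ch χ ξ • f) :=
    ⟨Subalgebra.smul_mem _ hl.1 _, by
      rw [smul_mul_assoc, ← smul_sub]; exact Submodule.smul_mem _ _ hl.2⟩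
  have h4 := h2.unique (T.FilU D I) h3
  rw [ch_sub, mul_comm, mul_smul, ← h4, smul_smul, inv_mul_cancel₀ (ch_ne _ _), one_smul]

theorem YD.psin [NoZeroDivisors R] [Nontrivial R] (T : YD act A B X h χX L u c χu)
    (D : OreD act A B X h χX) (I : Invt act A Ys L) (n : ℕ) {b : R} (hb : b ∈ A) :
    ∃ b' ∈ A, (u * X - c) ^ n * b' = b * (u * X - c) ^ n := by
  induction n generalizing b with
  | zero => exact ⟨b, hb, by simp⟩
  | succ n ih =>
    obtain ⟨b1, hb1, e1⟩ := ih hb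
    obtain ⟨b2, hb2, -, e2⟩ := T.psi D I hb1
    exact ⟨b2, hb2, by rw [pow_succ, mul_assoc, e2, ← mul_assoc, e1, mul_assoc]⟩

theorem YD.ideal1 [NoZeroDivisors R] [Nontrivial R] (T : YD act A B X h χX L u c χu)
    (D : OreD act A B X h χX) (I : Invt act A Ys L) {J : (Fin r → ℤ) → R → Prop}
    (hJ : GIdeal act B J) {χ0 : Fin r → ℤ} {f0 : R} (hf0 : J χ0 f0) (h0 : f0 ≠ 0) :
    ∃ v ∈ Submonoid.closure L, ∃ n θ, J θ (v * (u * X - c) ^ n) := by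
  classical
  have hU := T.FilU D I
  have huN := I.nrm T.ucl
  have hu0 := I.clne T.ucl
  obtain ⟨s, hs, hsy⟩ := T.exS I (D.actA h)
  have hsd : ∀ a ∈ A, (u * X - c) * a - s a * (u * X - c) ∈ A := fun a ha => by
    rw [hsy a ha, sub_self]; exact zero_mem _
  have hye := T.eig D
  have hcomm := T.comm
  have hy0 := T.ne D I
  have hyB := T.yB D I
  have hex : ∃ n, ∃ χ f, J χ f ∧ f ≠ 0 ∧ f ∈ Fil A (u * X - c) (n + 1) := by
    obtain ⟨n, hn⟩ := D.fil f0 (hJ.mem hf0)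
    exact ⟨n, _, _, hJ.left hf0 (D.le (huN.pow n).1) (eig_pow T.eu n),
      mul_ne_zero (pow_ne_zero n hu0) h0, Fil_succ_le _ _ _ (T.uFil I hn)⟩
  obtain ⟨n, ⟨χ1, f1, hJ1, hf1, hF1⟩, hmin⟩ : ∃ n, (∃ χ f, J χ f ∧ f ≠ 0 ∧ f ∈ Fil A (u * X - c) (n + 1)) ∧
      ∀ χ g, J χ g → g ∈ Fil A (u * X - c) n → g = 0 := by
    refine ⟨Nat.find hex, Nat.find_spec hex, ?_⟩
    intro χ g hg hgF
    by_contra hg0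
    rcases hn : Nat.find hex with _ | m
    · rw [hn, mem_Fil_zero] at hgF; exact hg0 hgF
    · have := Nat.find_min hex (m := m) (by omega)
      rw [hn] at hgF
      exact this ⟨χ, g, hg, hg0, hgF⟩
  have heu := T.eu
  have hFilU := hU
  have hleadEig : ∀ {n : ℕ} {a f : R} {χ : Fin r → ℤ}, HasLead A (u * X - c) n a f →
    IsEigenWith K act χ f → IsEigenWith K act (χ - n • (χu + χX)) a := fun h1 h2 => T.leadEig D I h1 h2
  have hpsin : ∀ (n : ℕ) {b : R}, b ∈ A →
    ∃ b' ∈ A, (u * X - c) ^ n * b' = b * (u * X - c) ^ n := fun n _ hb => T.psin D I n hb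
  have hucl := T.ucl
  clear T
  generalize u * X - c = y at *
  -- the ideal of leading coefficients
  let J' : (Fin r → ℤ) → R → Prop := fun θ a =>
    IsEigenWith K act θ a ∧ ∃ f, J (θ + n • (χu + χX)) f ∧ HasLead A y n a f
  have hJ' : GIdeal act A J' := by
    refine ⟨?_, fun h => h.1, ?_, ?_, ?_⟩
    · rintro χ a ⟨h1, f, -, h2⟩; exact h2.1
    · rintro χ a b ⟨h1, f, h2, h3⟩ ⟨h4, g, h5, h6⟩
      refine ⟨eig_add h1 h4, f + g, hJ.add h2 h5, add_mem h3.1 h6.1, ?_⟩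
      have := add_mem h3.2 h6.2
      convert this using 1
      noncomm_ring
    · rintro χ ψ a b ⟨h1, f, h2, h3⟩ hb hbe
      refine ⟨eig_mul hbe h1, b * f, ?_, mul_mem hb h3.1, ?_⟩
      · have := hJ.left h2 (D.le hb) hbe
        rwa [← add_assoc] at this
      · have := Fil_left hb h3.2
        rwa [mul_sub, ← mul_assoc] at this
    · rintro χ ψ a b ⟨h1, f, h2, h3⟩ hb hbe
      obtain ⟨b', hb', e⟩ := hpsin n hb
      have hb'e : IsEigenWith K act ψ b' := by
        have h4 : IsEigenWith K act (ψ + n • (χu + χX)) (y ^ n * b') := by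
          rw [e]; exact eig_mul hbe (eig_pow hye n)
        exact eig_cast (eig_cancel_left h4 (eig_pow hye n) (pow_ne_zero n hy0)) (by abel)
      refine ⟨eig_mul h1 hbe, f * b', ?_, mul_mem h3.1 hb, ?_⟩
      · have := hJ.right h2 (D.le hb') hb'e
        convert this using 1
        abel
      · have := Fil_right hs hsd h3.2 hb'
        rwa [sub_mul, mul_assoc a, e, ← mul_assoc] at this
  obtain ⟨a1, ha1⟩ := hasLead_of_mem_succ hF1
  have ha1e := hleadEig ha1 (hJ.eig hJ1)
  have ha10 : a1 ≠ 0 := by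
    rintro rfl
    have := ha1.2
    rw [zero_mul, sub_zero] at this
    exact hf1 (hmin _ _ hJ1 this)
  obtain ⟨v, hv, θ, hvθ, f, hf, hfv⟩ := I.ideal J' hJ' _ a1 ⟨ha1e, f1, by
    rw [sub_add_cancel]; exact hJ1, ha1⟩ ha10
  refine ⟨v, hv, n, _, (?_ : J (θ + n • (χu + χX)) _)⟩
  by_cases hff : f - v * y ^ n = 0
  · rwa [← sub_eq_zero.1 hff]
  exfalso
  have hvN := I.nrm hv
  have hv0 := I.clne hv
  have hfe : IsEigenWith K act (θ + n • (χu + χX)) (f - v * y ^ n) :=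
    eig_sub (hJ.eig hf) (eig_mul hvθ (eig_pow hye n))
  obtain ⟨i, a, hi, hal, ha0⟩ := exists_lead_of_mem hfv.2 hff
  have hae := hleadEig hal hfe
  obtain ⟨m, rfl⟩ : ∃ m, n = i + m := ⟨n - i, by omega⟩
  have hm : m ≠ 0 := by omega
  have haA := hal.1
  -- the main commutation argument
  have core : ∀ a' ∈ A, a' ≠ 0 → ∀ ω, IsEigenWith K act ω a' → ∀ s' t' : K, s' ≠ 0 →
      y * a' = s' • (a' * y) → v * a' = t' • (a' * v) → a * a' = (s' ^ m * t') • (a' * a) := by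
    intro a' ha' ha'0 ω hω s' t' hs' e1 e2
    have g1 : J (ω + (θ + (i + m) • (χu + χX))) (f * a' - (s' ^ (i + m) * t') • (a' * f)) := by
      refine hJ.sub ?_ (hJ.smul (hJ.left hf (D.le ha') hω) _)
      rw [add_comm]
      exact hJ.right hf (D.le ha') hω
    have g2 : f * a' - (s' ^ (i + m) * t') • (a' * f) =
        (f - v * y ^ (i + m)) * a' - (s' ^ (i + m) * t') • (a' * (f - v * y ^ (i + m))) := by
      have : v * y ^ (i + m) * a' = (s' ^ (i + m) * t') • (a' * (v * y ^ (i + m))) := by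
        rw [mul_assoc, pow_scal e1, mul_smul_comm, ← mul_assoc, e2, smul_mul_assoc, smul_smul,
          mul_assoc]
      rw [sub_mul, mul_sub, smul_sub, ← this]
      abel
    have g3 := hmin _ _ g1 (by
      rw [g2]
      exact sub_mem (Fil_right hs hsd hfv.2 ha') (Submodule.smul_mem _ _ (Fil_left ha' hfv.2)))
    rw [g2, sub_eq_zero] at g3
    have l1 : HasLead A y i (s' ^ i • (a * a')) ((f - v * y ^ (i + m)) * a') := by
      refine ⟨Subalgebra.smul_mem _ (mul_mem haA ha') _, ?_⟩
      have := Fil_right hs hsd hal.2 ha'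
      rwa [sub_mul, mul_assoc a, pow_scal e1, mul_smul_comm, ← mul_assoc a, ← smul_mul_assoc] at this
    have l2 : HasLead A y i ((s' ^ (i + m) * t') • (a' * a)) ((f - v * y ^ (i + m)) * a') := by
      rw [g3]
      refine ⟨Subalgebra.smul_mem _ (mul_mem ha' haA) _, ?_⟩
      have := Submodule.smul_mem _ (s' ^ (i + m) * t') (Fil_left ha' hal.2)
      rw [mul_sub, smul_sub, ← mul_assoc a'] at this
      rwa [smul_mul_assoc]
    have l3 := l1.unique hFilU l2
    have l4 := congrArg (fun z => (s' ^ i)⁻¹ • z) l3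
    simp only [smul_smul, inv_mul_cancel₀ (pow_ne_zero i hs'), one_smul] at l4
    rw [l4]
    congr 1
    rw [pow_add]
    field_simp
  set β := ch χu h with hβ
  set γ := ch θ h with hγ
  set lam := ch χX h with hlam
  have hβ0 : β ≠ 0 := ch_ne _ _
  have hγ0 : γ ≠ 0 := ch_ne _ _
  have hl0 : lam ≠ 0 := ch_ne _ _
  obtain ⟨t, ht, evu⟩ := I.qc.closure (I.LYc hv) (I.LYc hucl)
  have huv : u * v = t⁻¹ • (v * u) := by rw [evu, smul_smul, inv_mul_cancel₀ ht, one_smul]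
  -- `u`
  have yu : y * u = β • (u * y) := by
    have := hcomm u huN.1 (β • u) (Subalgebra.smul_mem _ huN.1 _) (by
      rw [heu.eq, mul_smul_comm, smul_mul_assoc])
    rwa [smul_mul_assoc] at this
  have au := core u huN.1 hu0 χu heu β t hβ0 yu evu
  -- `v`
  have yv : y * v = (γ * t⁻¹) • (v * y) := by
    have := hcomm v hvN.1 ((γ * t⁻¹) • v) (Subalgebra.smul_mem _ hvN.1 _) (by
      rw [hvθ.eq, mul_smul_comm, huv, smul_smul, smul_mul_assoc])
    rwa [smul_mul_assoc] at this
  have hst : γ * t⁻¹ ≠ 0 := mul_ne_zero hγ0 (inv_ne_zero ht)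
  have av := core v hvN.1 hv0 θ hvθ (γ * t⁻¹) 1 hst yv (by rw [one_smul])
  rw [mul_one] at av
  -- `a`
  have hα : ch (θ + (i + m) • (χu + χX) - i • (χu + χX)) h = γ * (β * lam) ^ m := by
    have : θ + (i + m) • (χu + χX) - i • (χu + χX) = θ + m • (χu + χX) := by
      rw [add_smul]; abel
    rw [this, ch_add, ch_nsmul, ch_add]
  have hua : u * a = (β ^ m * t)⁻¹ • (a * u) := by
    rw [au, smul_smul, inv_mul_cancel₀ (mul_ne_zero (pow_ne_zero _ hβ0) ht), one_smul]
  have ya : y * a = (γ * t⁻¹ * lam ^ m) • (a * y) := by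
    have := hcomm a haA ((γ * t⁻¹ * lam ^ m) • a) (Subalgebra.smul_mem _ haA _) (by
      rw [hae.eq, hα, mul_smul_comm, hua, smul_smul, smul_mul_assoc]
      congr 1
      rw [mul_pow]
      field_simp)
    rwa [smul_mul_assoc] at this
  have va : v * a = ((γ * t⁻¹) ^ m)⁻¹ • (a * v) := by
    rw [av, smul_smul, inv_mul_cancel₀ (pow_ne_zero _ hst), one_smul]
  have aa := core a haA ha0 _ hae _ _ (mul_ne_zero hst (pow_ne_zero _ hl0)) ya va
  have h1 : (1 - (γ * t⁻¹ * lam ^ m) ^ m * ((γ * t⁻¹) ^ m)⁻¹) • (a * a) = 0 := by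
    rw [sub_smul, one_smul, ← aa, sub_self]
  rcases smul_eq_zero.1 h1 with h2 | h2
  · rw [mul_pow, mul_comm, ← mul_assoc, inv_mul_cancel₀ (pow_ne_zero _ hst), one_mul, ← pow_mul,
      sub_eq_zero] at h2
    exact D.lam (m * m) (mul_ne_zero hm hm) h2.symm
  · exact mul_ne_zero ha0 ha0 h2

end IdealProp

section Steps

variable {K : Type u} [Field K] {R : Type v} [Ring R] [Algebra K R] {r : ℕ}
  {act : Torus K r →* (R ≃ₐ[K] R)} {A B : Subalgebra K R} {X : R} {h : Torus K r}
  {χX : Fin r → ℤ} {Ys L : Set R}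

theorem scal_pow {y a : R} {s : K} (e : y * a = s • (a * y)) (n : ℕ) :
    y * a ^ n = s ^ n • (a ^ n * y) := by
  induction n with
  | zero => simp
  | succ n ih =>
    rw [pow_succ, ← mul_assoc, ih, smul_mul_assoc, mul_assoc, e, mul_smul_comm, smul_smul,
      ← pow_succ, ← mul_assoc]

theorem step_zero [NoZeroDivisors R] [Nontrivial R] (D : OreD act A B X h χX)
    (I : Invt act A Ys L) (h0 : ∀ a ∈ A, dl act X h a = 0) :
    Invt act B (insert X Ys) (insert X L) := by
  have T := YD_zero D h0 L
  have := step_gen D I T (L' := L) subset_rfl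
    (fun q hq => h0 q (I.prime q hq).1) (by
      rintro q hq ⟨d, hd, e⟩
      have hp := I.prime q hq
      refine hp.2.2.1 ⟨d, hd, e.symm, ?_⟩
      apply mul_left_cancel₀ hp.2.1
      rw [← mul_assoc, ← e, one_mul, mul_one]) (by
      intro J hJ χ a ha ha0
      obtain ⟨v, hv, n, θ, hθ⟩ := T.ideal1 D I hJ ha ha0
      exact ⟨_, mul_mem (Submonoid.closure_mono (Set.subset_insert _ _) hv)
        (pow_mem (Submonoid.subset_closure (Set.mem_insert _ _)) n), θ, hθ⟩)
  simpa using this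

theorem closure_split (I : Invt act A Ys L) {p : R} (hp : p ∈ L) {v : R}
    (hv : v ∈ Submonoid.closure L) :
    ∃ j : ℕ, ∃ s ∈ Submonoid.closure (L \ {p}), ∃ t : K, t ≠ 0 ∧ v = t • (p ^ j * s) := by
  classical
  induction hv using Submonoid.closure_induction with
  | mem x hx =>
    by_cases hxp : x = p
    · exact ⟨1, 1, one_mem _, 1, one_ne_zero, by simp [hxp]⟩
    · exact ⟨0, x, Submonoid.subset_closure ⟨hx, hxp⟩, 1, one_ne_zero, by simp⟩
  | one => exact ⟨0, 1, one_mem _, 1, one_ne_zero, by simp⟩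
  | mul x y _ _ hx hy =>
    obtain ⟨j, s, hs, t, ht, rfl⟩ := hx
    obtain ⟨j', s', hs', t', ht', rfl⟩ := hy
    have hmono : Submonoid.closure (L \ {p}) ≤ Submonoid.closure L :=
      Submonoid.closure_mono Set.sdiff_subset
    obtain ⟨q, hq, e⟩ := I.qc.closure (I.LYc (hmono hs))
      (I.LYc (pow_mem (Submonoid.subset_closure hp) j'))
    refine ⟨j + j', s * s', mul_mem hs hs', t * t' * q, mul_ne_zero (mul_ne_zero ht ht') hq, ?_⟩
    rw [smul_mul_smul_comm, mul_assoc, ← mul_assoc s, e, pow_add, smul_mul_assoc, mul_smul_comm,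
      smul_smul]
    noncomm_ring

theorem step_ne [NoZeroDivisors R] [Nontrivial R] (D : OreD act A B X h χX)
    (I : Invt act A Ys L) {p c : R} {χp : Fin r → ℤ} (S : SD act A B X h χX Ys L p c χp) :
    Invt act B (insert (p * X - c) Ys) (insert (p * X - c) (L \ {p})) := by
  have T := S.yd I
  have hpP := I.prime p S.pL
  have hp0 := hpP.2.1
  have hdl : ∀ q ∈ L \ {p}, dl act X h q = 0 := by
    rintro q ⟨hq, hqp⟩
    have hqP := I.prime q hq
    obtain ⟨f, hf⟩ := I.hom q (I.LY hq)
    obtain ⟨t, ht, e⟩ := I.qc p (I.LY S.pL) q (I.LY hq)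
    have h1 := S.comm q hqP.1 ((ch f h * t) • q) (Subalgebra.smul_mem _ hqP.1 _) (by
      rw [hf.eq, mul_smul_comm, e, smul_smul, smul_mul_assoc])
    have h2 : p * dl act X h q = c * q - ((ch f h * t) • q) * c := by
      rw [sub_mul, mul_assoc, X_mul_eq (act := act) X h q, hf.eq, mul_add, ← mul_assoc,
        mul_smul_comm, e, smul_smul, mul_sub] at h1
      have h3 : ((ch f h * t) • q) * (p * X) = (ch f h * t) • (q * p) * X := by
        rw [smul_mul_assoc, smul_mul_assoc, mul_assoc]
      rw [h3] at h1
      rw [sub_eq_sub_iff_add_eq_add] at h1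
      have : (ch f h * t) • (q * p) * X + (p * dl act X h q + (ch f h * t) • q * c)
        = (ch f h * t) • (q * p) * X + (c * q) := by
        rw [← add_assoc, h1]
      exact eq_sub_of_add_eq (add_left_cancel this)
    obtain ⟨d, hd, ed⟩ := hqP.2.2.2.1 c S.cA
    have h4 : ∃ d ∈ A, p * dl act X h q = q * d := by
      refine ⟨d - (ch f h * t) • c, sub_mem hd (Subalgebra.smul_mem _ S.cA _), ?_⟩
      rw [h2, ed, mul_sub, mul_smul_comm, smul_mul_assoc]
    rcases hqP.2.2.2.2.2 p hpP.1 _ (D.del q hqP.1) h4 with h5 | ⟨d', hd', e'⟩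
    · exact absurd (I.nonassoc p S.pL q hq h5).symm hqp
    · obtain ⟨d2, hd2, e2⟩ := hqP.2.2.2.2.1 d' hd'
      exact D.N1 hd2 hqP.1 (by rw [e', e2])
  have hnu : ∀ q ∈ L \ {p}, ¬ Dv A q p := by
    rintro q ⟨hq, hqp⟩ hd
    exact hqp (I.nonassoc p S.pL q hq hd).symm
  refine step_gen D I T Set.sdiff_subset hdl hnu ?_
  intro J hJ χ0 a0 ha hane
  obtain ⟨v, hv, n, θ, hθ⟩ := T.ideal1 D I hJ ha hane
  obtain ⟨j, s, hs, t, ht, rfl⟩ := closure_split I S.pL hv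
  set y := p * X - c with hy
  set β := ch χp h with hβ
  set lam := ch χX h with hlam
  have hβ0 : β ≠ 0 := ch_ne _ _
  have yp : y * p = β • (p * y) := by
    have := S.comm p hpP.1 (β • p) (Subalgebra.smul_mem _ hpP.1 _) (by
      rw [S.ep.eq, mul_smul_comm, smul_mul_assoc])
    rwa [smul_mul_assoc] at this
  have cp : c * p = (β * lam) • (p * c) := by
    have h1 : c * p = p * (X * p) - y * p := by rw [hy]; noncomm_ring
    have h2 : p * (X * p) = β • (p * (p * X)) + (β * (lam - 1)) • (p * c) := by
      rw [X_mul_eq (act := act) X h p, S.dp, S.ep.eq, mul_add, smul_mul_assoc, mul_smul_comm,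
        mul_smul_comm]
    have h3 : β • (p * y) = β • (p * (p * X)) - β • (p * c) := by
      rw [hy, mul_sub, smul_sub]
    rw [h1, yp, h2, h3, mul_sub, mul_one, sub_smul]
    abel
  have dpn : ∀ n : ℕ, dl act X h (p ^ (n + 1)) = (β ^ (n + 1) * (lam ^ (n + 1) - 1)) • (p ^ n * c) := by
    intro n
    induction n with
    | zero => simp only [zero_add, pow_one, pow_zero, one_mul]; exact S.dp
    | succ n ih =>
      rw [pow_succ' p (n + 1), dl_mul, ih, S.dp, S.ep.eq, smul_mul_smul_comm, ← mul_assoc p, ← pow_succ' p n,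
        smul_mul_assoc, show c * p ^ (n + 1) = (β * lam) ^ (n + 1) • (p ^ (n + 1) * c) from scal_pow cp _, smul_smul, ← add_smul]
      congr 1
      ring
  have hXq : ∀ b ∈ insert y (L \ {p}), QCom K X b := by
    rintro b (rfl | hb)
    · exact QCom.symm ⟨_, inv_ne_zero hβ0, S.yX⟩
    · obtain ⟨f, hf⟩ := I.hom b (I.LY hb.1)
      refine ⟨ch f h, ch_ne _ _, ?_⟩
      rw [X_mul_eq (act := act) X h b, hdl b hb, hf.eq, add_zero, smul_mul_assoc]
  have main : ∀ j : ℕ, ∀ g ∈ Submonoid.closure (insert y (L \ {p})), ∀ θ, J θ (p ^ j * g) →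
      ∃ v ∈ Submonoid.closure (insert y (L \ {p})), ∃ θ, J θ v := by
    intro j
    induction j with
    | zero => intro g hg θ hJg; exact ⟨g, hg, θ, by simpa using hJg⟩
    | succ j ih =>
      intro g hg θ hJg
      obtain ⟨ρ, hρ, eρ⟩ := QCom.closure hXq hg
      have k1 := hJ.left hJg D.XB D.eX
      have k2 := hJ.smul (hJ.right hJg D.XB D.eX) ρ
      have k3 : ρ • (p ^ (j + 1) * g * X) = p ^ (j + 1) * (X * g) := by
        rw [eρ, mul_smul_comm, mul_assoc]
      rw [k3, add_comm] at k2
      have k4 := hJ.sub k1 (hJ.smul k2 (β ^ (j + 1)))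
      have k5 : X * (p ^ (j + 1) * g) - β ^ (j + 1) • (p ^ (j + 1) * (X * g)) =
          (β ^ (j + 1) * (lam ^ (j + 1) - 1)) • (p ^ j * c * g) := by
        rw [← smul_mul_assoc _ (p ^ j * c), ← dpn j, ← mul_assoc, X_mul_eq (act := act) X h (p ^ (j + 1)),
          (eig_pow S.ep (j + 1)).eq, ch_nsmul, add_mul, smul_mul_assoc, smul_mul_assoc, mul_assoc]
        abel
      have k6 : β ^ (j + 1) * (lam ^ (j + 1) - 1) ≠ 0 :=
        mul_ne_zero (pow_ne_zero _ hβ0) (sub_ne_zero.2 (D.lam _ (by omega)))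
      rw [k5] at k4
      have k7 := hJ.smul k4 (β ^ (j + 1) * (lam ^ (j + 1) - 1))⁻¹
      rw [smul_smul, inv_mul_cancel₀ k6, one_smul] at k7
      refine ih (y * g) (mul_mem (Submonoid.subset_closure (Set.mem_insert _ _)) hg) _
        (?_ : J (χX + θ) _)
      have := hJ.sub k2 k7
      convert this using 1
      rw [hy, pow_succ]
      noncomm_ring
  refine main j (s * y ^ n) (mul_mem (Submonoid.closure_mono (Set.subset_insert _ _) hs)
    (pow_mem (Submonoid.subset_closure (Set.mem_insert _ _)) n)) θ ?_
  have := hJ.smul hθ t⁻¹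
  rwa [smul_mul_assoc, smul_smul, inv_mul_cancel₀ ht, one_smul, mul_assoc] at this

theorem Invt_bot [Nontrivial R] : Invt act (⊥ : Subalgebra K R) ∅ ∅ where
  fin := Set.finite_empty
  LY := subset_rfl
  YA := Set.empty_subset _
  ne := by simp
  hom := by simp
  qc := by intro a ha; exact absurd ha (Set.notMem_empty a)
  ore := by
    intro a ha
    exact ⟨1, one_mem _, by rw [one_mul]; simpa using ha⟩
  prime := by simp
  nonassoc := by simp
  ideal := by
    intro J hJ χ a ha h0
    obtain ⟨t, rfl⟩ := Algebra.mem_bot.1 (hJ.mem ha)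
    refine ⟨1, one_mem _, χ, ?_⟩
    have := hJ.smul ha t⁻¹
    have ht : t ≠ 0 := by rintro rfl; simp at h0
    rwa [Algebra.algebraMap_eq_smul_one, smul_smul, inv_mul_cancel₀ ht, one_smul] at this
  unit := by
    intro a ha b hb e
    obtain ⟨t, rfl⟩ := Algebra.mem_bot.1 ha
    exact ⟨t, rfl⟩

/-- homogeneous primes of `A` -/
theorem Invt.prime_iff [NoZeroDivisors R] [Nontrivial R] (I : Invt act A Ys L) (q : R) :
    (IsPrimeIn K A q ∧ ∃ f, IsEigenWith K act f q) ↔ ∃ p ∈ L, ∃ t : Kˣ, q = (t : K) • p := by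
  constructor
  · rintro ⟨hq, f, hf⟩
    let J : (Fin r → ℤ) → R → Prop := fun χ a => IsEigenWith K act χ a ∧ ∃ d ∈ A, a = q * d
    have hJ : GIdeal act A J := by
      refine ⟨?_, fun h => h.1, ?_, ?_, ?_⟩
      · rintro χ a ⟨-, d, hd, rfl⟩; exact mul_mem hq.1 hd
      · rintro χ a b ⟨h1, d, hd, rfl⟩ ⟨h2, d', hd', rfl⟩
        exact ⟨eig_add h1 h2, d + d', add_mem hd hd', by rw [mul_add]⟩
      · rintro χ ψ a b ⟨h1, d, hd, rfl⟩ hb hbe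
        obtain ⟨b', hb', e⟩ := hq.2.2.2.1 b hb
        exact ⟨eig_mul hbe h1, b' * d, mul_mem hb' hd, by rw [← mul_assoc, e, mul_assoc]⟩
      · rintro χ ψ a b ⟨h1, d, hd, rfl⟩ hb hbe
        exact ⟨eig_mul h1 hbe, d * b, mul_mem hd hb, by rw [mul_assoc]⟩
    obtain ⟨v, hv, θ, -, hd⟩ := I.ideal J hJ f q ⟨hf, 1, one_mem _, by simp⟩ hq.2.1
    have unit' : ∀ w ∈ A, q * w = 1 → False := by
      intro w hw e
      refine hq.2.2.1 ⟨w, hw, e, ?_⟩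
      apply mul_left_cancel₀ hq.2.1
      rw [← mul_assoc, e, one_mul, mul_one]
    have : ∃ p ∈ L, ∃ d ∈ A, p = q * d := by
      induction hv using Submonoid.closure_induction with
      | mem x hx => exact ⟨x, hx, hd⟩
      | one => obtain ⟨d, hd, e⟩ := hd; exact (unit' d hd e.symm).elim
      | mul x y hx' hy' hx hy =>
        rcases hq.2.2.2.2.2 x (I.nrm hx').1 y (I.nrm hy').1 hd with h1 | h1
        · exact hx h1
        · exact hy h1
    obtain ⟨p, hp, d, hd, e⟩ := this
    have hpP := I.prime p hp
    rcases hpP.2.2.2.2.2 q hq.1 d hd ⟨1, one_mem _, by rw [mul_one, e]⟩ with ⟨w, hw, e'⟩ | ⟨w, hw, e'⟩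
    · have h1 : w * d = 1 := by
        apply mul_left_cancel₀ hpP.2.1
        rw [← mul_assoc, ← e', ← e, mul_one]
      obtain ⟨t, rfl⟩ := I.unit w hw d hd h1
      have ht : t ≠ 0 := by rintro rfl; simp at h1
      exact ⟨p, hp, Units.mk0 t ht, by
        rw [e', Units.val_mk0, Algebra.smul_def, Algebra.commutes]⟩
    · exfalso
      obtain ⟨w', hw', e2⟩ := hq.2.2.2.1 p hpP.1
      obtain ⟨q', hq', e3⟩ := hpP.2.2.2.1 q hq.1
      -- `p = q p w`
      have h1 : p * (q' * w) = p * 1 := by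
        rw [← mul_assoc, ← e3, mul_one, mul_assoc, ← e', ← e]
      have h2 : q' * w = 1 := mul_left_cancel₀ hpP.2.1 h1
      obtain ⟨t, rfl⟩ := I.unit _ hq' _ hw h2
      have ht : t ≠ 0 := by rintro rfl; simp at h2
      have h3 : q = algebraMap K R t := by
        apply mul_right_cancel₀ hpP.2.1
        rw [e3, Algebra.commutes]
      exact unit' (algebraMap K R t⁻¹) (A.algebraMap_mem _) (by
        rw [h3, ← map_mul, mul_inv_cancel₀ ht, map_one])
  · rintro ⟨p, hp, t, rfl⟩
    have hP := I.prime p hp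
    obtain ⟨f, hf⟩ := I.hom p (I.LY hp)
    have ht : (t : K) ≠ 0 := t.ne_zero
    refine ⟨⟨Subalgebra.smul_mem _ hP.1 _, smul_ne_zero ht hP.2.1, ?_, ?_, ?_, ?_⟩, f, eig_smul hf _⟩
    · rintro ⟨w, hw, e1, e2⟩
      refine hP.2.2.1 ⟨(t : K) • w, Subalgebra.smul_mem _ hw _, ?_, ?_⟩
      · rw [mul_smul_comm, ← smul_mul_assoc, e1]
      · rw [smul_mul_assoc, ← mul_smul_comm, e2]
    · intro a ha
      obtain ⟨b, hb, e⟩ := hP.2.2.2.1 a ha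
      exact ⟨b, hb, by rw [mul_smul_comm, e, smul_mul_assoc]⟩
    · intro a ha
      obtain ⟨b, hb, e⟩ := hP.2.2.2.2.1 a ha
      exact ⟨b, hb, by rw [mul_smul_comm, ← e, smul_mul_assoc]⟩
    · have key : ∀ {a : R}, (∃ d ∈ A, a = p * d) → ∃ d ∈ A, a = ((t : K) • p) * d := by
        rintro a ⟨d, hd, rfl⟩
        exact ⟨(t : K)⁻¹ • d, Subalgebra.smul_mem _ hd _, by
          rw [smul_mul_smul_comm, mul_inv_cancel₀ ht, one_smul]⟩
      rintro a ha b hb ⟨d, hd, e⟩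
      rcases hP.2.2.2.2.2 a ha b hb ⟨(t : K) • d, Subalgebra.smul_mem _ hd _, by
        rw [e, mul_smul_comm, smul_mul_assoc]⟩ with h1 | h1
      · exact Or.inl (key h1)
      · exact Or.inr (key h1)

end Steps

section QNAfacts

variable {K : Type u} [Field K] {R : Type v} [Ring R] [Algebra K R] {r N : ℕ}

theorem list_mono_mul (x : Fin N → R) (m : Fin N → ℕ) (k : Fin N) (n : ℕ)
    (hm : ∀ l, k ≤ l → m l = 0) : ∀ (l : List (Fin N)), l.Pairwise (· < ·) → k ∈ l →
    (l.map fun j => x j ^ m j).prod * x k ^ n =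
      (l.map fun j => x j ^ (Function.update m k n) j).prod
  | [], _, hk => by simp at hk
  | a :: l, hl, hk => by
    rw [List.pairwise_cons] at hl
    by_cases hak : a = k
    · subst hak
      have h1 : (l.map fun j => x j ^ m j) = l.map fun _ => (1 : R) :=
        List.map_congr_left fun j hj => by rw [hm j (hl.1 j hj).le, pow_zero]
      have h2 : (l.map fun j => x j ^ (Function.update m a n) j) = l.map fun _ => (1 : R) :=
        List.map_congr_left fun j hj => by
          rw [Function.update_of_ne (hl.1 j hj).ne', hm j (hl.1 j hj).le, pow_zero]
      rw [List.map_cons, List.map_cons, h1, h2, hm a le_rfl]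
      simp
    · have hkl : k ∈ l := by
        rcases List.mem_cons.1 hk with h1 | h1
        · exact absurd h1.symm hak
        · exact h1
      rw [List.map_cons, List.map_cons, List.prod_cons, List.prod_cons, mul_assoc,
        list_mono_mul x m k n hm l hl.2 hkl, Function.update_of_ne hak]

theorem ordMonomial_mul (x : Fin N → R) (m : Fin N → ℕ) (k : Fin N) (n : ℕ)
    (hm : ∀ l, k ≤ l → m l = 0) :
    ordMonomial x m * x k ^ n = ordMonomial x (Function.update m k n) :=
  list_mono_mul x m k n hm _ (List.pairwise_lt_finRange N) (List.mem_finRange k)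

theorem QNA.nontriv (Q : QNA K R N r) : Nontrivial R :=
  ⟨_, _, Q.pbw.ne_zero (0 : Fin N → ℕ)⟩

theorem QNA.x_ne (Q : QNA K R N r) (k : Fin N) : Q.x k ≠ 0 := by
  intro h0
  refine Q.pbw.ne_zero (Pi.single k 1 : Fin N → ℕ) ?_
  refine List.prod_eq_zero ?_
  rw [List.mem_map]
  exact ⟨k, List.mem_finRange k, by simp [h0]⟩

theorem QNA.actR (Q : QNA K R N r) (m : ℕ) (ξ : Torus K r) :
    ∀ a ∈ Rsub K Q.x m, Q.act ξ a ∈ Rsub K Q.x m := by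
  intro a ha
  induction ha using Algebra.adjoin_induction with
  | mem z hz =>
    obtain ⟨l, hl, rfl⟩ := hz
    obtain ⟨f, hf⟩ := Q.eigenvec l
    rw [hf.eq]
    have hxl : Q.x l ∈ Rsub K Q.x m := Algebra.subset_adjoin ⟨l, hl, rfl⟩
    exact Subalgebra.smul_mem _ hxl _
  | algebraMap t => rw [AlgEquiv.commutes]; exact Subalgebra.algebraMap_mem _ t
  | add a b _ _ ha hb => rw [map_add]; exact add_mem ha hb
  | mul a b _ _ ha hb => rw [map_mul]; exact mul_mem ha hb

theorem Rsub_mono (x : Fin N → R) {m n : ℕ} (h : m ≤ n) : Rsub K x m ≤ Rsub K x n :=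
  Algebra.adjoin_mono (Set.image_mono fun _ hl => lt_of_lt_of_le hl h)

theorem x_mem_Rsub (x : Fin N → R) (k : Fin N) : x k ∈ Rsub K x (k + 1) :=
  Algebra.subset_adjoin ⟨k, Nat.lt_succ_self _, rfl⟩

theorem Rsub_zero (x : Fin N → R) : Rsub K x 0 = ⊥ := by
  simp [Rsub]

theorem QNA.fil (Q : QNA K R N r) (k : Fin N) :
    ∀ b ∈ Rsub K Q.x (k + 1), ∃ n, b ∈ Fil (Rsub K Q.x k) (Q.x k) n := by
  intro b hb
  have hs := Q.actR k (Q.h k)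
  have hd : ∀ a ∈ Rsub K Q.x k, Q.x k * a - Q.act (Q.h k) a * Q.x k ∈ Rsub K Q.x k := Q.stable k
  induction hb using Algebra.adjoin_induction with
  | mem z hz =>
    obtain ⟨l, hl, rfl⟩ := hz
    rcases Nat.lt_succ_iff_lt_or_eq.1 hl with h1 | h1
    · exact ⟨1, mem_Fil_one.2 (Algebra.subset_adjoin ⟨l, h1, rfl⟩)⟩
    · obtain rfl : l = k := Fin.ext h1
      exact ⟨2, by simpa using pow_mem_Fil (Rsub K Q.x l) (Q.x l) 1⟩
  | algebraMap t => exact ⟨1, mem_Fil_one.2 (Subalgebra.algebraMap_mem _ t)⟩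
  | add a b _ _ ha hb =>
    obtain ⟨n, hn⟩ := ha
    obtain ⟨m, hm⟩ := hb
    exact ⟨max n m, add_mem (Fil_mono _ _ (le_max_left _ _) hn) (Fil_mono _ _ (le_max_right _ _) hm)⟩
  | mul a b _ _ ha hb =>
    obtain ⟨n, hn⟩ := ha
    obtain ⟨m, hm⟩ := hb
    exact ⟨n + m, Fil_mul_Fil hs hd (Fil_succ_le _ _ _ hm) hn⟩

/-- exponents supported on the first `k` indices -/
def Mset (N k : ℕ) : Set (Fin N → ℕ) := {m | ∀ l : Fin N, k ≤ l → m l = 0}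

theorem Mset_update {k : Fin N} {m : Fin N → ℕ} (hm : m ∈ Mset N k) (n : ℕ) :
    Function.update m k n ∈ Mset N (k + 1) := by
  intro l hl
  rw [Function.update_of_ne (by rintro rfl; omega)]
  exact hm l (by omega)

theorem span_mul_pow (x : Fin N → R) (k : Fin N) (n : ℕ) {a : R}
    (ha : a ∈ Submodule.span K (ordMonomial x '' Mset N k)) :
    a * x k ^ n ∈ Submodule.span K (ordMonomial x '' {m | m ∈ Mset N (k + 1) ∧ m k = n}) := by
  induction ha using Submodule.span_induction with
  | mem z hz =>
    obtain ⟨m, hm, rfl⟩ := hz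
    rw [ordMonomial_mul x m k n hm]
    exact Submodule.subset_span ⟨_, ⟨Mset_update hm n, by simp⟩, rfl⟩
  | zero => simp
  | add a b _ _ ha hb => rw [add_mul]; exact add_mem ha hb
  | smul t a _ ha => rw [smul_mul_assoc]; exact Submodule.smul_mem _ _ ha

theorem Fil_span (x : Fin N → R) (k : Fin N)
    (h : ∀ a ∈ Rsub K x k, a ∈ Submodule.span K (ordMonomial x '' Mset N k)) (n : ℕ) {b : R}
    (hb : b ∈ Fil (Rsub K x k) (x k) n) :
    b ∈ Submodule.span K (ordMonomial x '' {m | m ∈ Mset N (k + 1) ∧ m k < n}) := by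
  induction n generalizing b with
  | zero => rw [mem_Fil_zero] at hb; simp [hb]
  | succ n ih =>
    obtain ⟨f, hf, a, ha, rfl⟩ := mem_Fil_succ.1 hb
    refine add_mem (Submodule.span_mono (Set.image_mono ?_) (ih hf))
      (Submodule.span_mono (Set.image_mono ?_) (span_mul_pow x k n (h a ha)))
    · rintro m ⟨h1, h2⟩; exact ⟨h1, by omega⟩
    · rintro m ⟨h1, h2⟩; exact ⟨h1, by omega⟩

theorem QNA.span (Q : QNA K R N r) : ∀ k : ℕ, k ≤ N → ∀ a ∈ Rsub K Q.x k,
    a ∈ Submodule.span K (ordMonomial Q.x '' Mset N k)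
  | 0, _, a, ha => by
    rw [Rsub_zero] at ha
    obtain ⟨t, rfl⟩ := Algebra.mem_bot.1 ha
    rw [Algebra.algebraMap_eq_smul_one]
    refine Submodule.smul_mem _ _ (Submodule.subset_span ⟨0, fun _ _ => rfl, ?_⟩)
    simp [ordMonomial]
  | k + 1, hk, a, ha => by
    obtain ⟨n, hn⟩ := Q.fil ⟨k, hk⟩ a ha
    have := Fil_span Q.x ⟨k, hk⟩ (Q.span k (by omega)) n hn
    exact Submodule.span_mono (Set.image_mono fun m hm => hm.1) this

theorem QNA.filU (Q : QNA K R N r) (k : Fin N) : FilU (Rsub K Q.x k) (Q.x k) := by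
  intro n a ha hf
  have hsp := Q.span k k.2.le
  have h1 := span_mul_pow Q.x k n (hsp a ha)
  have h2 := Fil_span Q.x k hsp n hf
  have hdis := Q.pbw.disjoint_span_image (s := {m | m ∈ Mset N (k + 1) ∧ m k = n})
    (t := {m | m ∈ Mset N (k + 1) ∧ m k < n}) (by
      rw [Set.disjoint_left]
      rintro m ⟨-, h3⟩ ⟨-, h4⟩
      omega)
  have h3 : a * Q.x k ^ n = 0 := Submodule.disjoint_def.1 hdis _ h1 h2
  have h4 := hsp a ha
  rw [Set.image_eq_range] at h4
  obtain ⟨c, rfl⟩ := Finsupp.mem_span_range_iff_exists_finsupp.1 h4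
  have hli : LinearIndependent K (fun i : Mset N k => ordMonomial Q.x i * Q.x k ^ n) := by
    have : (fun i : Mset N k => ordMonomial Q.x i * Q.x k ^ n) =
        ordMonomial Q.x ∘ fun i : Mset N k => Function.update (i : Fin N → ℕ) k n := by
      funext i
      exact ordMonomial_mul Q.x i k n i.2
    rw [this]
    refine Q.pbw.comp _ ?_
    rintro ⟨i, hi⟩ ⟨j, hj⟩ hij
    refine Subtype.ext (funext fun l => ?_)
    by_cases hl : l = k
    · subst hl
      exact (hi l le_rfl).trans (hj l le_rfl).symm
    · have := congrFun hij l
      simpa [Function.update_of_ne hl] using this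
  have h5 : Finsupp.linearCombination K (fun i : Mset N k => ordMonomial Q.x i * Q.x k ^ n) c = 0 := by
    rw [Finsupp.linearCombination_apply, ← h3, Finsupp.sum, Finsupp.sum, Finset.sum_mul]
    simp only [smul_mul_assoc]
  have h6 := linearIndependent_iff.1 hli c h5
  rw [h6]; simp

theorem QNA.oreD (Q : QNA K R N r) (k : Fin N) :
    ∃ χ, OreD Q.act (Rsub K Q.x k) (Rsub K Q.x (k + 1)) (Q.x k) (Q.h k) χ := by
  obtain ⟨χ, hχ⟩ := Q.eigenvec k
  refine ⟨χ, Q.actR k, Rsub_mono _ (Nat.le_succ _), x_mem_Rsub _ k, Q.stable k, Q.locnil k, hχ, ?_,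
    Q.fil k, Q.filU k⟩
  have : ch χ (Q.h k) = Q.lam k := by
    have h1 := hχ.eq (Q.h k)
    rw [Q.hx k] at h1
    have h2 : (Q.lam k - ch χ (Q.h k)) • Q.x k = 0 := by rw [sub_smul, h1, sub_self]
    rcases smul_eq_zero.1 h2 with h3 | h3
    · exact (sub_eq_zero.1 h3).symm
    · exact absurd h3 (Q.x_ne k)
  rw [this]
  exact Q.lam_not_root k

theorem QNA.dom (Q : QNA K R N r) : ∀ k : ℕ, k ≤ N → ∀ a ∈ Rsub K Q.x k, ∀ b ∈ Rsub K Q.x k,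
    a ≠ 0 → b ≠ 0 → a * b ≠ 0
  | 0, _, a, ha, b, hb, ha0, hb0 => by
    have := Q.nontriv
    rw [Rsub_zero] at ha hb
    obtain ⟨s, rfl⟩ := Algebra.mem_bot.1 ha
    obtain ⟨t, rfl⟩ := Algebra.mem_bot.1 hb
    rw [← map_mul]
    have hs : s ≠ 0 := by rintro rfl; simp at ha0
    have ht : t ≠ 0 := by rintro rfl; simp at hb0
    exact fun h => mul_ne_zero hs ht ((algebraMap K R).injective (by rw [h, map_zero]))
  | k + 1, hk, a, ha, b, hb, ha0, hb0 => by
    obtain ⟨χ, D⟩ := Q.oreD ⟨k, hk⟩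
    obtain ⟨n, hn⟩ := D.fil a ha
    obtain ⟨m, hm⟩ := D.fil b hb
    obtain ⟨n', a', -, h1, h2⟩ := exists_lead_of_mem hn ha0
    obtain ⟨m', b', -, h3, h4⟩ := exists_lead_of_mem hm hb0
    refine (h1.mul D.hs D.hd h3).ne_zero D.uniq ?_
    exact Q.dom k (by omega) _ h1.1 _ (iter_mem D.hs n' h3.1) h2 (act_iter_ne _ _ h4)

theorem QNA.noZeroDiv (Q : QNA K R N r) : NoZeroDivisors R where
  eq_zero_or_eq_zero_of_mul_eq_zero {a b} hab := by
    have htop : ∀ a, a ∈ Rsub K Q.x N := by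
      intro a
      have h1 : a ∈ Algebra.adjoin K (Set.range Q.x) := by rw [Q.gen]; trivial
      refine Algebra.adjoin_mono ?_ h1
      rintro _ ⟨l, rfl⟩
      exact ⟨l, l.2, rfl⟩
    by_contra! h
    exact Q.dom N le_rfl a (htop a) b (htop b) h.1 h.2 hab

end QNAfacts

section Bookkeeping

variable {K : Type u} [Field K] {R : Type v} [Ring R] [Algebra K R] {r N : ℕ}

/-- `l` is the last index below `m` in its level set. -/
def alive (η : Fin N → ℤ) (m : ℕ) (l : Fin N) : Prop :=
  (l : ℕ) < m ∧ ∀ l' : Fin N, l < l' → (l' : ℕ) < m → η l' ≠ η l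

theorem alive_succ_iff (η : Fin N → ℤ) (k l : Fin N) :
    alive η (k + 1) l ↔ l ≤ k ∧ ∀ l' : Fin N, l < l' → l' ≤ k → η l' ≠ η l := by
  simp only [alive, Nat.lt_succ_iff, Fin.le_def]

theorem alive_inj {η : Fin N → ℤ} {m : ℕ} {l j : Fin N} (hl : alive η m l) (hj : alive η m j)
    (e : η l = η j) : l = j := by
  rcases lt_trichotomy l j with h | h | h
  · exact absurd e.symm (hl.2 j h hj.1)
  · exact h
  · exact absurd e (hj.2 l h hl.1)

theorem alive_congr {η η' : Fin N → ℤ} {m : ℕ} (h : ∀ i : Fin N, (i : ℕ) < m → η' i = η i)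
    (l : Fin N) : alive η' m l ↔ alive η m l := by
  constructor
  · rintro ⟨h1, h2⟩
    refine ⟨h1, fun l' hl hm => ?_⟩
    rw [← h l' hm, ← h l h1]; exact h2 l' hl hm
  · rintro ⟨h1, h2⟩
    refine ⟨h1, fun l' hl hm => ?_⟩
    rw [h l' hm, h l h1]; exact h2 l' hl hm

theorem alive_step (η : Fin N → ℤ) (k l : Fin N) :
    alive η (k + 1) l ↔ l = k ∨ (alive η k l ∧ η k ≠ η l) := by
  rw [alive_succ_iff]
  constructor
  · rintro ⟨h1, h2⟩
    rcases h1.eq_or_lt with h | h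
    · exact Or.inl h
    · exact Or.inr ⟨⟨h, fun l' a b => h2 l' a (le_of_lt b)⟩, h2 k h le_rfl⟩
  · rintro (rfl | ⟨h1, h2⟩)
    · exact ⟨le_rfl, fun l' a b => absurd a (not_lt.2 b)⟩
    · refine ⟨le_of_lt h1.1, fun l' a b => ?_⟩
      rcases b.eq_or_lt with h | h
      · rw [h]; exact h2
      · exact h1.2 l' a h

theorem predIdx_eq {η : Fin N → ℤ} {k p : Fin N} (hp : alive η k p) (e : η k = η p) :
    predIdx η k = (p : WithBot (Fin N)) := by
  unfold predIdx
  refine le_antisymm ?_ (Finset.le_max (by simp only [Finset.mem_filter, Finset.mem_univ, true_and]; exact ⟨hp.1, e.symm⟩))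
  refine Finset.max_le fun l hl => ?_
  simp only [Finset.mem_filter, Finset.mem_univ, true_and] at hl
  rw [WithBot.coe_le_coe]
  by_contra! h
  exact hp.2 l h hl.1 (hl.2.trans e)

/-- The state of the recursive construction after `k` steps. -/
structure St (Q : QNA K R N r) (k : ℕ) (η : Fin N → ℤ) (c y : Fin N → R) : Prop where
  inv : ∀ m, m ≤ k → Invt Q.act (Rsub K Q.x m) (y '' {i | (i : ℕ) < m}) (y '' {i | alive η m i})
  z : ∀ i : Fin N, (i : ℕ) < k → deltaZero K Q i → y i = Q.x i
  nz : ∀ i : Fin N, (i : ℕ) < k → ¬ deltaZero K Q i → c i ∈ Rsub K Q.x i ∧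
    ∃ p, alive η i p ∧ η i = η p ∧ y i = y p * Q.x i - c i

variable {Q : QNA K R N r} {k : ℕ} {η : Fin N → ℤ} {c y : Fin N → R}

theorem lead_one {A : Subalgebra K R} {X u c : R} (hu : u ∈ A) (hc : c ∈ A) :
    HasLead A X 1 u (u * X - c) := by
  refine ⟨hu, ?_⟩
  rw [pow_one, sub_sub_cancel_left]
  exact mem_Fil_one.2 (neg_mem hc)

theorem HasLead.notmem {A : Subalgebra K R} {X u b : R} (hU : FilU A X) (h : HasLead A X 1 u b)
    (hu : u ≠ 0) : b ∉ A := fun hb => hu (h.eq_zero hU (mem_Fil_one.2 hb))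

theorem St.memA (S : St Q k η c y) {m : ℕ} (hm : m ≤ k) {i : Fin N} (hi : (i : ℕ) < m) :
    y i ∈ Rsub K Q.x m := (S.inv m hm).YA ⟨i, hi, rfl⟩

theorem St.ne (S : St Q k η c y) {i : Fin N} (hi : (i : ℕ) < k) : y i ≠ 0 :=
  (S.inv k le_rfl).ne _ ⟨i, hi, rfl⟩

theorem St.notmem (S : St Q k η c y) {i : Fin N} (hi : (i : ℕ) < k) : y i ∉ Rsub K Q.x i := by
  have := Q.nontriv
  by_cases h : deltaZero K Q i
  · have h1 : HasLead (Rsub K Q.x i) (Q.x i) 1 1 (1 * Q.x i - 0) := lead_one (one_mem _) (zero_mem _)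
    rw [one_mul, sub_zero] at h1
    rw [S.z i hi h]
    exact h1.notmem (Q.filU i) one_ne_zero
  · obtain ⟨hc, p, hp, _, e⟩ := S.nz i hi h
    rw [e]
    exact (lead_one (S.memA hi.le hp.1) hc).notmem (Q.filU i) (S.ne (hp.1.trans hi))

theorem St.inj (S : St Q k η c y) {i j : Fin N} (hi : (i : ℕ) < k) (hj : (j : ℕ) < k) {t : Kˣ}
    (e : y i = (t : K) • y j) : i = j := by
  rcases lt_trichotomy i j with h | h | h
  · refine absurd ?_ (S.notmem hj)
    have : y j = ((t⁻¹ : Kˣ) : K) • y i := by rw [e, smul_smul]; simp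
    rw [this]
    exact Subalgebra.smul_mem _ (S.memA hj.le h) _
  · exact h
  · refine absurd ?_ (S.notmem hi)
    rw [e]
    exact Subalgebra.smul_mem _ (S.memA hi.le h) _

theorem St.zero (Q : QNA K R N r) : St Q 0 (fun _ => 0) (fun _ => 0) (fun _ => 0) := by
  have := Q.nontriv
  refine ⟨fun m hm => ?_, fun i hi => absurd hi (Nat.not_lt_zero _),
    fun i hi => absurd hi (Nat.not_lt_zero _)⟩
  obtain rfl := Nat.le_zero.1 hm
  have h1 : {i : Fin N | (i : ℕ) < 0} = ∅ := by ext; simp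
  have h2 : {i : Fin N | alive (fun _ => 0) 0 i} = ∅ := by ext; simp [alive]
  rw [h1, h2, Set.image_empty, Rsub_zero]
  exact Invt_bot

theorem St.extend (S : St Q k η c y) (hk : k < N) (e : ℤ) (ck yk : R)
    (hI : Invt Q.act (Rsub K Q.x (k + 1)) (insert yk (y '' {i | (i : ℕ) < k}))
      (insert yk (y '' {i | alive η k i ∧ e ≠ η i})))
    (hz : deltaZero K Q ⟨k, hk⟩ → yk = Q.x ⟨k, hk⟩)
    (hnz : ¬ deltaZero K Q ⟨k, hk⟩ → ck ∈ Rsub K Q.x k ∧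
      ∃ p, alive η k p ∧ e = η p ∧ yk = y p * Q.x ⟨k, hk⟩ - ck) :
    St Q (k + 1) (Function.update η ⟨k, hk⟩ e) (Function.update c ⟨k, hk⟩ ck)
      (Function.update y ⟨k, hk⟩ yk) := by
  have hne : ∀ i : Fin N, (i : ℕ) < k → i ≠ ⟨k, hk⟩ := by
    rintro i hi rfl; exact lt_irrefl _ hi
  have hη : ∀ i : Fin N, (i : ℕ) < k → Function.update η ⟨k, hk⟩ e i = η i := fun i hi =>
    Function.update_of_ne (hne i hi) _ _
  have hc : ∀ i : Fin N, (i : ℕ) < k → Function.update c ⟨k, hk⟩ ck i = c i := fun i hi =>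
    Function.update_of_ne (hne i hi) _ _
  have hy : ∀ i : Fin N, (i : ℕ) < k → Function.update y ⟨k, hk⟩ yk i = y i := fun i hi =>
    Function.update_of_ne (hne i hi) _ _
  have hal : ∀ m, m ≤ k → ∀ l, alive (Function.update η ⟨k, hk⟩ e) m l ↔ alive η m l := fun m hm l =>
    alive_congr (fun i hi => hη i (hi.trans_le hm)) l
  refine ⟨fun m hm => ?_, fun i hi => ?_, fun i hi => ?_⟩
  · rcases hm.eq_or_lt with rfl | hm
    · have h1 : Function.update y ⟨k, hk⟩ yk '' {i | (i : ℕ) < k + 1} =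
          insert yk (y '' {i | (i : ℕ) < k}) := by
        have : {i : Fin N | (i : ℕ) < k + 1} = insert ⟨k, hk⟩ {i : Fin N | (i : ℕ) < k} := by
          ext i
          simp only [Set.mem_ofPred_eq, Set.mem_insert_iff, Fin.ext_iff]
          omega
        rw [this, Set.image_insert_eq, Function.update_self]
        congr 1
        exact Set.image_congr fun i hi => hy i hi
      have h2 : Function.update y ⟨k, hk⟩ yk '' {i | alive (Function.update η ⟨k, hk⟩ e) (k + 1) i} =
          insert yk (y '' {i | alive η k i ∧ e ≠ η i}) := by
        have : {i | alive (Function.update η ⟨k, hk⟩ e) (k + 1) i} =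
            insert ⟨k, hk⟩ {i | alive η k i ∧ e ≠ η i} := by
          ext i
          have h3 := alive_step (Function.update η ⟨k, hk⟩ e) ⟨k, hk⟩ i
          simp only [Set.mem_ofPred_eq, Set.mem_insert_iff]
          refine h3.trans (or_congr_right ?_)
          rw [Function.update_self]
          refine (and_congr_left fun _ => hal k le_rfl i).trans ?_
          exact and_congr_right fun h => by rw [hη i h.1]
        rw [this, Set.image_insert_eq, Function.update_self]
        congr 1
        exact Set.image_congr fun i hi => hy i hi.1.1
      rw [h1, h2]
      exact hI
    · have hm := Nat.lt_succ_iff.1 hm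
      have h1 : Function.update y ⟨k, hk⟩ yk '' {i | (i : ℕ) < m} = y '' {i | (i : ℕ) < m} :=
        Set.image_congr fun i hi => hy i (lt_of_lt_of_le hi hm)
      have h2 : Function.update y ⟨k, hk⟩ yk '' {i | alive (Function.update η ⟨k, hk⟩ e) m i} =
          y '' {i | alive η m i} := by
        simp only [hal m hm]
        exact Set.image_congr fun i hi => hy i (lt_of_lt_of_le hi.1 hm)
      rw [h1, h2]
      exact S.inv m hm
  · rcases (Nat.lt_succ_iff.1 hi).eq_or_lt with h | h
    · have : i = ⟨k, hk⟩ := Fin.ext h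
      subst this
      rw [Function.update_self]; exact hz
    · rw [hy i h]; exact S.z i h
  · rcases (Nat.lt_succ_iff.1 hi).eq_or_lt with h | h
    · have : i = ⟨k, hk⟩ := Fin.ext h
      subst this
      intro h0
      obtain ⟨h1, p, h2, h3, h4⟩ := hnz h0
      refine ⟨by rw [Function.update_self]; exact h1, p, (hal k le_rfl p).2 h2, ?_, ?_⟩
      · rw [Function.update_self, hη p h2.1]; exact h3
      · rw [Function.update_self, Function.update_self, hy p h2.1]; exact h4
    · intro h0
      obtain ⟨h1, p, h2, h3, h4⟩ := S.nz i h h0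
      have hp : (p : ℕ) < k := h2.1.trans h
      refine ⟨by rw [hc i h]; exact h1, p, (hal i h.le p).2 h2, ?_, ?_⟩
      · rw [hη i h, hη p hp]; exact h3
      · rw [hy i h, hy p hp, hc i h]; exact h4

theorem St.step (S : St Q k η c y) (hk : k < N) : ∃ η' c' y', St Q (k + 1) η' c' y' := by
  have := Q.nontriv
  have := Q.noZeroDiv
  obtain ⟨χ, D⟩ := Q.oreD ⟨k, hk⟩
  have I := S.inv k le_rfl
  by_cases h : deltaZero K Q ⟨k, hk⟩
  · obtain ⟨M, hM⟩ := (Set.finite_range η).bddAbove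
    refine ⟨_, _, _, S.extend hk (M + 1) 0 (Q.x ⟨k, hk⟩) ?_ (fun _ => rfl) (fun h' => absurd h h')⟩
    have h1 : {i | alive η k i ∧ M + 1 ≠ η i} = {i | alive η k i} := by
      ext i
      simp only [Set.mem_ofPred_eq, and_iff_left_iff_imp]
      intro _ h2
      have := hM ⟨i, rfl⟩
      omega
    rw [h1]
    exact step_zero D I h
  · have h' : ∃ a ∈ Rsub K Q.x k, dl Q.act (Q.x ⟨k, hk⟩) (Q.h ⟨k, hk⟩) a ≠ 0 := by
      by_contra! h2
      exact h h2
    obtain ⟨p, c', χp, SS⟩ := SD_exists D I h'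
    obtain ⟨i, hi, rfl⟩ := SS.pL
    refine ⟨_, _, _, S.extend hk (η i) c' (y i * Q.x ⟨k, hk⟩ - c') ?_ (fun h2 => absurd h2 h)
      (fun _ => ⟨SS.cA, i, hi, rfl, rfl⟩)⟩
    have h1 : y '' {j | alive η k j ∧ η i ≠ η j} = y '' {j | alive η k j} \ {y i} := by
      ext q
      constructor
      · rintro ⟨j, ⟨hj, hij⟩, rfl⟩
        refine ⟨⟨j, hj, rfl⟩, fun e => hij ?_⟩
        have : j = i := S.inj (t := 1) hj.1 hi.1 (by simpa using e)
        rw [this]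
      · rintro ⟨⟨j, hj, rfl⟩, h2⟩
        refine ⟨j, ⟨hj, fun e => h2 ?_⟩, rfl⟩
        rw [alive_inj hj hi e.symm]; rfl
    rw [h1]
    exact step_ne D I SS

theorem St.all (Q : QNA K R N r) : ∀ k, k ≤ N → ∃ η c y, St Q k η c y
  | 0, _ => ⟨_, _, _, St.zero Q⟩
  | k + 1, hk => by
    obtain ⟨η, c, y, S⟩ := St.all Q k (by omega)
    exact S.step hk

theorem St.prime_iff (S : St Q N η c y) (k : Fin N) (u : R) :
    (IsPrimeIn K (Rsub K Q.x ((k : ℕ) + 1)) u ∧ ∃ f : Fin r → ℤ, IsEigenWith K Q.act f u) ↔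
    (∃ l : Fin N, alive η (k + 1) l ∧ ∃ t : Kˣ, u = (t : K) • y l) := by
  have := Q.nontriv
  have := Q.noZeroDiv
  rw [(S.inv (k + 1) k.2).prime_iff u]
  simp only [Set.exists_mem_image, Set.mem_ofPred_eq]

theorem St.primeSeq (S : St Q N η c y) : IsPrimeSeq K Q η c y where
  c_mem k hk := (S.nz k k.2 hk).1
  rec_delta_zero k hk := S.z k k.2 hk
  rec_delta_ne k hk := by
    obtain ⟨_, p, hp, e, h⟩ := S.nz k k.2 hk
    rw [predIdx_eq hp e]
    exact h
  homog k := (S.inv N le_rfl).hom _ ⟨k, k.2, rfl⟩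
  prime_iff k u := by
    rw [S.prime_iff k u]
    simp only [alive_succ_iff, and_assoc]

theorem alive_self (η : Fin N → ℤ) (k : Fin N) : alive η (k + 1) k :=
  (alive_step η k k).2 (Or.inl rfl)

theorem St.prime (S : St Q N η c y) (k : Fin N) : IsPrimeIn K (Rsub K Q.x ((k : ℕ) + 1)) (y k) :=
  ((S.prime_iff k (y k)).2 ⟨k, alive_self η k, 1, by simp⟩).1

theorem St.y_unique (S : St Q N η c y) {η' : Fin N → ℤ} {c' y' : Fin N → R}
    (P : IsPrimeSeq K Q η' c' y') : ∀ n : ℕ, ∀ k : Fin N, (k : ℕ) = n → y' k = y k := by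
  have := Q.nontriv
  intro n
  induction n using Nat.strong_induction_on with
  | _ n ih =>
  intro k hkn
  by_cases h : deltaZero K Q k
  · rw [P.rec_delta_zero k h, S.z k k.2 h]
  · obtain ⟨hc, p, hp, e, hy⟩ := S.nz k k.2 h
    have hc' := P.c_mem k h
    have hy' := P.rec_delta_ne k h
    have hpA : y p ∈ Rsub K Q.x k := S.memA k.2.le hp.1
    have hpr : IsPrimeIn K (Rsub K Q.x k) (y p) := (S.inv k k.2.le).prime _ ⟨p, hp, rfl⟩
    have h1 := (P.prime_iff k (y' k)).2 ⟨k, le_rfl, fun l' a b => absurd a (not_lt.2 b), 1, by simp⟩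
    obtain ⟨l, hl, t, ht⟩ := (S.prime_iff k _).1 h1
    have key : ∀ v ∈ Rsub K Q.x k, v ≠ 0 → y' k = v * Q.x k - c' k →
        v = (t : K) • y p ∧ l = k := by
      intro v hv hv0 hvy
      have hL := lead_one (X := Q.x k) hv hc'
      rw [← hvy] at hL
      have hlk : l = k := by
        rcases ((alive_succ_iff η k l).1 hl).1.eq_or_lt with h2 | h2
        · exact h2
        · refine absurd ?_ (hL.notmem (Q.filU k) hv0)
          rw [ht]
          exact Subalgebra.smul_mem _ (S.memA k.2.le h2) _
      refine ⟨?_, hlk⟩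
      have hL2 : HasLead (Rsub K Q.x k) (Q.x k) 1 ((t : K) • y p) (y' k) := by
        rw [ht, hlk, hy, smul_sub, ← smul_mul_assoc]
        exact lead_one (Subalgebra.smul_mem _ hpA _) (Subalgebra.smul_mem _ hc _)
      exact hL.unique (Q.filU k) hL2
    cases hq : predIdx η' k using WithBot.recBotCoe with
    | bot =>
      rw [hq] at hy'
      obtain ⟨h2, _⟩ := key 1 (one_mem _) one_ne_zero hy'
      refine absurd ?_ hpr.2.2.1
      refine ⟨algebraMap K R t, Subalgebra.algebraMap_mem _ _, ?_, ?_⟩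
      · rw [← Algebra.commutes, ← Algebra.smul_def, ← h2]
      · rw [← Algebra.smul_def, ← h2]
    | coe q =>
      rw [hq] at hy'
      have hq1 := Finset.mem_of_max hq
      simp only [Finset.mem_filter, Finset.mem_univ, true_and] at hq1
      have hyq : y' q = y q := ih q (by rw [← hkn]; exact hq1.1) q rfl
      have hy2 : y' k = y q * Q.x k - c' k := by rw [← hyq]; exact hy'
      obtain ⟨h2, h3⟩ := key (y q) (S.memA k.2.le hq1.1) (S.ne q.2) hy2
      have hqp := S.inj q.2 p.2 h2
      rw [hqp] at h2
      have ht1 : (t : K) = 1 := by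
        have h4 : ((t : K) - 1) • y p = 0 := by rw [sub_smul, one_smul, ← h2, sub_self]
        rcases smul_eq_zero.1 h4 with h5 | h5
        · exact sub_eq_zero.1 h5
        · exact absurd h5 (S.ne p.2)
      rw [ht, ht1, one_smul, h3]

theorem level_unique {η η' : Fin N → ℤ} (h : ∀ k l : Fin N, alive η' (k + 1) l ↔ alive η (k + 1) l) :
    ∀ m : ℕ, ∀ k l : Fin N, (k : ℕ) < m → (l : ℕ) < m → (η' k = η' l ↔ η k = η l) := by
  intro m
  induction m with
  | zero => intro k l hk; exact absurd hk (Nat.not_lt_zero _)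
  | succ m ih =>
    have main : ∀ k l : Fin N, (k : ℕ) = m → (l : ℕ) < m → (η' k = η' l ↔ η k = η l) := by
      intro k l hk hl
      have hne : (Finset.univ.filter fun j : Fin N => (j : ℕ) < m ∧ η j = η l).Nonempty :=
        ⟨l, by simp [hl]⟩
      obtain ⟨j, hj, hmax⟩ := Finset.exists_max_image _ id hne
      simp only [Finset.mem_filter, Finset.mem_univ, true_and, id] at hj hmax
      have hj' : η' j = η' l := (ih j l hj.1 hl).2 hj.2
      have a1 : alive η k j := by
        rw [hk]
        refine ⟨hj.1, fun l' a b e => ?_⟩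
        exact absurd a (not_lt.2 (hmax l' ⟨b, e.trans hj.2⟩))
      have a2 : alive η' k j := by
        refine ⟨a1.1, fun l' a b e => a1.2 l' a b ?_⟩
        exact (ih l' j (hk ▸ b) hj.1).1 e
      have hjk : j ≠ k := by rintro rfl; omega
      have h1 := h k j
      rw [alive_step, alive_step] at h1
      simp only [hjk, a1, a2, false_or, true_and] at h1
      rw [← hj', ← hj.2]
      exact not_iff_not.1 h1
    intro k l hk hl
    rcases (Nat.lt_succ_iff.1 hk).eq_or_lt with hk1 | hk1
    · rcases (Nat.lt_succ_iff.1 hl).eq_or_lt with hl1 | hl1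
      · have : k = l := Fin.ext (hk1.trans hl1.symm)
        subst this; simp
      · exact main k l hk1 hl1
    · rcases (Nat.lt_succ_iff.1 hl).eq_or_lt with hl1 | hl1
      · rw [eq_comm, main l k hl1 hk1, eq_comm]
      · exact ih k l hk1 hl1

theorem St.alive_unique (S : St Q N η c y) {η' : Fin N → ℤ} {c' : Fin N → R}
    (P : IsPrimeSeq K Q η' c' y) (k l : Fin N) : alive η' (k + 1) l ↔ alive η (k + 1) l := by
  have P1 : ∀ u, (∃ l : Fin N, alive η (k + 1) l ∧ ∃ t : Kˣ, u = (t : K) • y l) ↔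
      (∃ l : Fin N, alive η' (k + 1) l ∧ ∃ t : Kˣ, u = (t : K) • y l) := by
    intro u
    rw [← S.prime_iff k u, P.prime_iff k u]
    simp only [alive_succ_iff, and_assoc]
  constructor
  · intro hl
    obtain ⟨l', h1, t, e⟩ := (P1 (y l)).2 ⟨l, hl, 1, by simp⟩
    rw [S.inj l.2 l'.2 e]; exact h1
  · intro hl
    obtain ⟨l', h1, t, e⟩ := (P1 (y l)).1 ⟨l, hl, 1, by simp⟩
    rw [S.inj l.2 l'.2 e]; exact h1

end Bookkeeping

/-- **Prime elements of quantum nilpotent algebras.**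
Let `R` be a quantum nilpotent algebra of dimension `N` over `K` with torus `H = (Kˣ)^r`.
Then there exist a function `η : [1,N] → ℤ` and elements `c_k ∈ R_{k-1}` (for the `k` with
`δ_k ≠ 0`) such that the recursively defined elements `y_k := y_{p(k)} x_k − c_k`
(resp. `y_k := x_k` when `δ_k = 0`) are `H`-eigenvectors, and for every `k ∈ [1,N]` the
homogeneous prime elements of `R_k` are precisely the nonzero scalar multiples of the
elements `y_l`, `l ∈ [1,k]`, `s(l) > k`.  In particular each `y_k` is a homogeneous prime
element of `R_k`.  Moreover the sequence `y_1, …, y_N` and the level sets of such an `η`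
are unique. -/
theorem prime_elements_of_quantum_nilpotent_algebra
    {K : Type u} [Field K] {R : Type v} [Ring R] [Algebra K R] {N r : ℕ}
    (Q : QNA K R N r) :
    ∃ (η : Fin N → ℤ) (c : Fin N → R) (y : Fin N → R),
      IsPrimeSeq K Q η c y ∧
      (∀ k : Fin N, IsPrimeIn K (Rsub K Q.x ((k : ℕ) + 1)) (y k)) ∧
      (∀ (η' : Fin N → ℤ) (c' y' : Fin N → R), IsPrimeSeq K Q η' c' y' →
        y' = y ∧ ∀ k l : Fin N, η' k = η' l ↔ η k = η l) := by
  obtain ⟨η, c, y, S⟩ := St.all Q N le_rfl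
  refine ⟨η, c, y, S.primeSeq, S.prime, fun η' c' y' P => ?_⟩
  have hy : y' = y := funext fun k => S.y_unique P k k rfl
  subst hy
  exact ⟨rfl, fun k l => level_unique (S.alive_unique P) N k l k.2 l.2⟩
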